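/- arXiv:2509.22588 — 2 statements merged into one kernel-verified Lean document; each statement's English description precedes it below -/
import Mathlib

section
/- Let Γ be a piecewise Dini-smooth Jordan curve. For every sufficiently small δ > 0, lim_{n→∞} sup_{θ∈[0,2π)} |∫_{θ+δ}^{θ−δ+2π} e^{int} dv_θ(t)| = 0, where v_θ is the secant-argument function of Γ at θ. -/
open Filter Topology MeasureTheory Set

noncomputable section

/-- The supremum norm of `f` over the set `Γ`. -/
def supNorm (Γ : Set ℂ) (f : ℂ → ℂ) : ℝ := sSup ((fun z => ‖f z‖) '' Γ)

/-- `Γ` is a Jordan curve: the image of a continuous `2π`-periodic map `ℝ → ℂ` that is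
injective modulo the period. -/
def IsJordanCurve (Γ : Set ℂ) : Prop :=
  ∃ f : ℝ → ℂ, Continuous f ∧ Function.Periodic f (2 * Real.pi) ∧
    (∀ s t : ℝ, f s = f t → ∃ n : ℤ, t - s = n * (2 * Real.pi)) ∧
    Γ = Set.range f

/-- The modulus of continuity of `g` on the interval `[a, b]`, evaluated at `t`. -/
def modCont (g : ℝ → ℂ) (a b t : ℝ) : ℝ :=
  sSup {d : ℝ | ∃ s₁ ∈ Set.Icc a b, ∃ s₂ ∈ Set.Icc a b, |s₁ - s₂| ≤ t ∧ d = ‖g s₁ - g s₂‖}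

/-- `γ`, with derivative `γ'`, parametrizes a Dini-smooth Jordan arc on `[a, b]`:
`γ'` is continuous and nonvanishing on `[a, b]` and its modulus of continuity `ω`
satisfies `∫₀¹ ω(t)/t dt < ∞`. -/
structure IsDiniSmoothArc (γ γ' : ℝ → ℂ) (a b : ℝ) : Prop where
  lt : a < b
  inj : Set.InjOn γ (Set.Icc a b)
  deriv : ∀ s ∈ Set.Icc a b, HasDerivWithinAt γ (γ' s) (Set.Icc a b) s
  cont : ContinuousOn γ' (Set.Icc a b)
  nonzero : ∀ s ∈ Set.Icc a b, γ' s ≠ 0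
  dini : MeasureTheory.IntegrableOn (fun t => modCont γ' a b t / t) (Set.Ioc (0 : ℝ) 1)

/-- A piecewise Dini-smooth Jordan curve: a Jordan curve which is the union of finitely many
Dini-smooth arcs. -/
def IsPiecewiseDiniSmoothJordanCurve (Γ : Set ℂ) : Prop :=
  IsJordanCurve Γ ∧
    ∃ (N : ℕ) (γ γ' : Fin N → ℝ → ℂ) (a b : Fin N → ℝ),
      (∀ i, IsDiniSmoothArc (γ i) (γ' i) (a i) (b i)) ∧
      Γ = ⋃ i, γ i '' Set.Icc (a i) (b i)

/-- The unbounded connected component `Ω` of the complement of `Γ` (in the finite plane). -/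
def exteriorDomain (Γ : Set ℂ) : Set ℂ :=
  {z | z ∈ Γᶜ ∧ ¬ Bornology.IsBounded (connectedComponentIn Γᶜ z)}

/-- `φ` is the canonical exterior conformal map of `Γ` onto `{|w| > 1}` with `φ(∞) = ∞` and
`φ(z)/z → c⁻¹` as `z → ∞`; the constant `c` is then the logarithmic capacity of `Γ`. -/
structure IsExteriorMap (Γ : Set ℂ) (φ : ℂ → ℂ) (c : ℝ) : Prop where
  cpos : 0 < c
  diff : DifferentiableOn ℂ φ (exteriorDomain Γ)
  bij : Set.BijOn φ (exteriorDomain Γ) {w : ℂ | 1 < ‖w‖}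
  tendsto : Filter.Tendsto (fun z => φ z / z)
    (Bornology.cobounded ℂ ⊓ Filter.principal (exteriorDomain Γ)) (nhds ((c : ℂ)⁻¹))

/-- `F` is the `n`-th Faber polynomial of `Γ`: the unique polynomial with
`φ(z)^n − F(z) → 0` as `z → ∞` in the exterior domain. -/
def IsFaberPoly (Γ : Set ℂ) (φ : ℂ → ℂ) (n : ℕ) (F : Polynomial ℂ) : Prop :=
  Filter.Tendsto (fun z => φ z ^ n - F.eval z)
    (Bornology.cobounded ℂ ⊓ Filter.principal (exteriorDomain Γ)) (nhds 0)

/-- `ψ` is the inverse of `φ`, extended to a homeomorphism of `{|w| ≥ 1}` onto the closure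
of the exterior domain; on the unit circle it parametrizes `Γ`. -/
structure IsExteriorParam (Γ : Set ℂ) (φ ψ : ℂ → ℂ) : Prop where
  cont : ContinuousOn ψ {w : ℂ | 1 ≤ ‖w‖}
  inj : Set.InjOn ψ {w : ℂ | 1 ≤ ‖w‖}
  inv : ∀ w : ℂ, 1 < ‖w‖ → ψ w ∈ exteriorDomain Γ ∧ φ (ψ w) = w
  boundary : ∀ w : ℂ, ‖w‖ = 1 → ψ w ∈ Γ
  boundary_surj : ∀ z ∈ Γ, ∃ w : ℂ, ‖w‖ = 1 ∧ ψ w = z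

/-- `T` is the `n`-th Chebyshev polynomial of `Γ`: the monic polynomial of degree `n`
minimizing the supremum norm over `Γ`. -/
def IsChebyshevPoly (Γ : Set ℂ) (n : ℕ) (T : Polynomial ℂ) : Prop :=
  T.Monic ∧ T.natDegree = n ∧
    ∀ P : Polynomial ℂ, P.Monic → P.natDegree = n →
      supNorm Γ (fun z => T.eval z) ≤ supNorm Γ (fun z => P.eval z)

/-- `v` is a secant-argument function of `Γ = ψ(unit circle)` at `θ` (relative to `α` with
`α < θ < α + 2π`): a bounded-variation branch of `t ↦ arg (ψ(e^{it}) − ψ(e^{iθ}))` on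
`[α, α + 2π]`, continuous on `[α, θ)` and on `(θ, α + 2π]`, normalized by `v θ = v(θ+)`
and by requiring the jump `v(θ+) − v(θ−)` to lie in `[0, 2π]`. -/
structure IsSecantArg (ψ : ℂ → ℂ) (θ α : ℝ) (v : ℝ → ℝ) : Prop where
  hα : α < θ
  hθ : θ < α + 2 * Real.pi
  bv : BoundedVariationOn v (Set.Icc α (α + 2 * Real.pi))
  contBefore : ContinuousOn v (Set.Ico α θ)
  contAfter : ContinuousOn v (Set.Ioc θ (α + 2 * Real.pi))
  rightCont : ContinuousWithinAt v (Set.Ici θ) θ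
  jump_mem : ∃ L : ℝ, Filter.Tendsto v (nhdsWithin θ (Set.Iio θ)) (nhds L) ∧
    v θ - L ∈ Set.Icc 0 (2 * Real.pi)
  branch : ∀ t ∈ Set.Icc α (α + 2 * Real.pi), t ≠ θ →
    Complex.exp (Complex.I * (v t : ℂ))
      = (ψ (Complex.exp (Complex.I * (t : ℂ))) - ψ (Complex.exp (Complex.I * (θ : ℂ))))
        / ((‖ψ (Complex.exp (Complex.I * (t : ℂ))) - ψ (Complex.exp (Complex.I * (θ : ℂ)))‖ : ℂ))

/-- The exterior angle of `Γ = ψ(unit circle)` at the boundary point `ψ(e^{iθ})` equals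
`lam * π`, expressed through the jump `v(θ+) − v(θ−) = lam * π` of a secant-argument
function at `θ`. -/
def HasExteriorAngleAt (ψ : ℂ → ℂ) (θ lam : ℝ) : Prop :=
  ∃ (α : ℝ) (v : ℝ → ℝ), IsSecantArg ψ θ α v ∧
    Filter.Tendsto v (nhdsWithin θ (Set.Iio θ)) (nhds (v θ - lam * Real.pi))

/-- The set `Θ_Γ = {θ_k + 2πj}` of corner parameters modulo `2π`. -/
def cornerSet {l : ℕ} (θk : Fin l → ℝ) : Set ℝ :=
  {x | ∃ (k : Fin l) (j : ℤ), x = θk k + j * (2 * Real.pi)}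

/-- `(μp, μn)` realizes the Lebesgue–Stieltjes (signed) measure `dv` of `v` on `(α, β]`:
both are finite measures and `μp − μn` has the increments of `v`. -/
structure IsLSPair (v : ℝ → ℝ) (α β : ℝ) (μp μn : MeasureTheory.Measure ℝ) : Prop where
  finp : MeasureTheory.IsFiniteMeasure μp
  finn : MeasureTheory.IsFiniteMeasure μn
  incr : ∀ s t : ℝ, α ≤ s → s ≤ t → t ≤ β →
    (μp (Set.Ioc s t)).toReal - (μn (Set.Ioc s t)).toReal = v t - v s

/-!
Put `g(t) = ψ(e^{it})`. Since `Γ` has finite length, `g` has bounded variation on compact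
intervals, so `dg = h dm` for a finite nonatomic measure `m` and a density with `|h| = 1`. Moving
the circle of integration to infinity gives `∫ e^{-int} h dm = 0` over a period for `n ≥ 2`, as in
the theorem of F. and M. Riesz. Hence `∫ e^{-int} p h dm` vanishes for large `n` whenever `p` is a
trigonometric polynomial. Because `|h| = 1`, the products `p h` are dense in `L¹(m)`, so
`∫ e^{-int} F dm → 0` for every `F ∈ L¹(m)`, and by conjugation `∫ e^{int} F dm → 0`.
Away from `t = θ` one has `dv_θ = F_θ dm` with `F_θ = Im (h / (g - g(θ)))`. These densities, cut
off near `θ`, depend continuously on `θ` in `L¹(m)`, and compactness of `[0, 2π]` makes the decay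
uniform in `θ`.
-/

open scoped ENNReal

/-! ### Exterior conformal map -/

theorem circleIntegral_eq_zero_of_tendsto_cobounded {r : ℝ} (hr : 0 < r) {f : ℂ → ℂ} {S : Set ℂ}
    (hS : S.Countable) (hc : ContinuousOn f {z | r ≤ ‖z‖})
    (hd : ∀ z, r < ‖z‖ → z ∉ S → DifferentiableAt ℂ f z)
    (hf : Tendsto (fun z => z * f z) (Bornology.cobounded ℂ) (𝓝 0)) :
    ∮ z in C(0, r), f z = 0 := by
  have hconst : ∀ R, r ≤ R → ∮ z in C(0, R), f z = ∮ z in C(0, r), f z := fun R hR => by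
    refine Complex.circleIntegral_eq_of_differentiable_on_annulus_off_countable hr hR hS
      (hc.mono fun z hz => ?_) fun z hz => hd z ?_ hz.2
    · simpa using hz.2
    · simpa using hz.1.2
  refine norm_le_zero_iff.1 (le_of_forall_pos_le_add fun ε hε => ?_)
  have hε' : 0 < ε / (2 * Real.pi) := div_pos hε Real.two_pi_pos
  have hsmall := hf.norm.eventually_le_const (norm_zero.trans_lt hε')
  rw [← comap_norm_atTop, eventually_comap] at hsmall
  obtain ⟨R, hsmall, hrR⟩ := (hsmall.and (eventually_ge_atTop r)).exists
  have hR : 0 < R := hr.trans_le hrR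
  calc ‖∮ z in C(0, r), f z‖ = ‖∮ z in C(0, R), f z‖ := by rw [hconst R hrR]
    _ ≤ 2 * Real.pi * R * (ε / (2 * Real.pi) / R) := by
      refine circleIntegral.norm_integral_le_of_norm_le_const hR.le fun z hz => ?_
      have hz : ‖z‖ = R := by simpa using hz
      have := hsmall z hz
      rw [norm_mul, hz] at this
      rwa [le_div_iff₀' hR]
    _ = 0 + ε := by field_simp; ring

theorem isOpen_exteriorDomain {Γ : Set ℂ} (hΓ : IsClosed Γ) : IsOpen (exteriorDomain Γ) := by
  refine isOpen_iff_mem_nhds.2 fun z ⟨hz, hunb⟩ => ?_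
  filter_upwards [hΓ.isOpen_compl.connectedComponentIn.mem_nhds (mem_connectedComponentIn hz)]
    with y hy
  exact ⟨connectedComponentIn_subset _ _ hy, connectedComponentIn_eq hy ▸ hunb⟩

theorem countable_setOf_deriv_eq_zero_of_injOn {U : Set ℂ} (hU : IsOpen U) {f : ℂ → ℂ}
    (hf : DifferentiableOn ℂ f U) (hinj : InjOn f U) :
    {z | z ∈ U ∧ deriv f z = 0}.Countable := by
  suffices DiscreteTopology {z | z ∈ U ∧ deriv f z = 0} from
    Set.countable_coe_iff.1 countable_of_Lindelof_of_discrete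
  refine discreteTopology_subtype_iff.2 fun z ⟨hzU, _⟩ => ?_
  rcases (((hf.deriv hU).analyticOnNhd hU) z hzU).eventually_eq_zero_or_eventually_ne_zero
    with hzero | hne
  · obtain ⟨r, hr, hball⟩ := Metric.eventually_nhds_iff_ball.1 (hzero.and (hU.mem_nhds hzU))
    have hsub : Metric.ball z r ⊆ U := fun y hy => (hball y hy).2
    have hw : z + (r / 2 : ℝ) ∈ Metric.ball z r := by simp [abs_of_pos hr, hr]
    have heq : f (z + (r / 2 : ℝ)) = f z :=
      Metric.isOpen_ball.is_const_of_deriv_eq_zero (convex_ball z r).isPreconnected (hf.mono hsub)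
        (fun y hy => (hball y hy).1) hw (Metric.mem_ball_self hr)
    simpa [hr.ne'] using hinj (hsub hw) hzU heq
  · rw [← disjoint_iff, Filter.disjoint_principal_right]
    exact hne.mono fun y hy hy' => hy hy'.2

namespace IsExteriorParam

variable {Γ : Set ℂ} {φ ψ : ℂ → ℂ} {c : ℝ}

theorem isCompact (hψ : IsExteriorParam Γ φ ψ) : IsCompact Γ := by
  have himage : ψ '' Metric.sphere 0 1 = Γ := by
    refine Subset.antisymm ?_ fun z hz => ?_
    · rintro _ ⟨w, hw, rfl⟩
      exact hψ.boundary w (by simpa using hw)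
    · obtain ⟨w, hw, rfl⟩ := hψ.boundary_surj z hz
      exact ⟨w, by simpa using hw, rfl⟩
  exact himage ▸ (isCompact_sphere 0 1).image_of_continuousOn
    (hψ.cont.mono fun w hw => (mem_sphere_zero_iff_norm.1 hw).ge)

theorem differentiableAt (hψ : IsExteriorParam Γ φ ψ) (hφ : IsExteriorMap Γ φ c) {w : ℂ}
    (hw : 1 < ‖w‖) (hd : deriv φ (ψ w) ≠ 0) : DifferentiableAt ℂ ψ w := by
  have hnhds : {w : ℂ | 1 < ‖w‖} ∈ 𝓝 w := (isOpen_lt continuous_const continuous_norm).mem_nhds hw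
  have hcont : ContinuousAt ψ w :=
    (hψ.cont w hw.le).continuousAt (mem_of_superset hnhds fun x (hx : 1 < ‖x‖) => hx.le)
  have hderiv : HasDerivAt φ (deriv φ (ψ w)) (ψ w) :=
    (hφ.diff.differentiableAt ((isOpen_exteriorDomain hψ.isCompact.isClosed).mem_nhds
      (hψ.inv w hw).1)).hasDerivAt
  exact (HasDerivAt.of_local_left_inverse hcont hderiv hd
    (mem_of_superset hnhds fun y hy => (hψ.inv y hy).2)).differentiableAt

theorem countable_setOf_not_differentiableAt (hψ : IsExteriorParam Γ φ ψ)
    (hφ : IsExteriorMap Γ φ c) : {w | 1 < ‖w‖ ∧ ¬DifferentiableAt ℂ ψ w}.Countable := by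
  refine ((countable_setOf_deriv_eq_zero_of_injOn (isOpen_exteriorDomain hψ.isCompact.isClosed)
    hφ.diff hφ.bij.injOn).image φ).mono fun w ⟨hw, hd⟩ => ?_
  have ⟨hmem, hinv⟩ := hψ.inv w hw
  exact ⟨ψ w, ⟨hmem, by_contra fun h => hd (hψ.differentiableAt hφ hw h)⟩, hinv⟩

theorem isBigO_cobounded (hψ : IsExteriorParam Γ φ ψ) (hφ : IsExteriorMap Γ φ c) :
    ψ =O[Bornology.cobounded ℂ] id := by
  have hc := hφ.cpos
  have hev : ∀ᶠ z in Bornology.cobounded ℂ ⊓ 𝓟 (exteriorDomain Γ), (2 * c)⁻¹ < ‖φ z / z‖ := by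
    refine hφ.tendsto.norm.eventually_const_lt ?_
    rw [norm_inv, Complex.norm_real, Real.norm_of_nonneg hc.le]
    exact inv_strictAnti₀ hc (by linarith)
  rw [eventually_inf_principal, ← comap_norm_atTop, eventually_comap] at hev
  obtain ⟨R, hR⟩ := eventually_atTop.1 hev
  refine .of_bound (max (max R 1) (2 * c)) ?_
  filter_upwards [tendsto_norm_cobounded_atTop.eventually_gt_atTop 1] with w hw
  rcases le_total ‖ψ w‖ (max R 1) with hle | hge
  · calc ‖ψ w‖ ≤ max R 1 * 1 := by rwa [mul_one]
      _ ≤ max (max R 1) (2 * c) * ‖w‖ := by gcongr ?_ * ?_; exact le_max_left _ _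
  · have hpos : 0 < ‖ψ w‖ := (zero_lt_one.trans_le (le_max_right R 1)).trans_le hge
    have hlt := hR ‖ψ w‖ ((le_max_left _ _).trans hge) (ψ w) rfl (hψ.inv w hw).1
    rw [(hψ.inv w hw).2, norm_div, lt_div_iff₀ hpos] at hlt
    calc ‖ψ w‖ = 2 * c * ((2 * c)⁻¹ * ‖ψ w‖) := by field_simp
      _ ≤ max (max R 1) (2 * c) * ‖w‖ := by gcongr; exact le_max_right _ _

theorem circleIntegral_inv_pow_mul_eq_zero (hψ : IsExteriorParam Γ φ ψ)
    (hφ : IsExteriorMap Γ φ c) {n : ℕ} (hn : 3 ≤ n) : ∮ z in C(0, 1), (z ^ n)⁻¹ * ψ z = 0 := by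
  obtain ⟨k, rfl⟩ := Nat.exists_eq_add_of_le' hn
  have hne : ∀ {z : ℂ}, 1 ≤ ‖z‖ → z ^ (k + 3) ≠ 0 := fun hz =>
    pow_ne_zero _ (norm_pos_iff.1 (zero_lt_one.trans_le hz))
  refine circleIntegral_eq_zero_of_tendsto_cobounded one_pos
    (hψ.countable_setOf_not_differentiableAt hφ)
    (((continuous_pow _).continuousOn.inv₀ fun z hz => hne hz).mul hψ.cont) (fun z hz hzS => ?_) ?_
  · exact (differentiableAt_fun_id.pow _).inv (hne hz.le) |>.mul (by_contra fun h => hzS ⟨hz, h⟩)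
  · have hbig : (fun z => z * ((z ^ (k + 3))⁻¹ * ψ z)) =O[Bornology.cobounded ℂ]
        fun z => z⁻¹ ^ (k + 1) := by
      refine ((Asymptotics.isBigO_refl id _).mul ((Asymptotics.isBigO_refl _ _).mul
        (hψ.isBigO_cobounded hφ))).congr' .rfl ?_
      filter_upwards [Bornology.eventually_ne_cobounded (0 : ℂ)] with z hz
      simp only [id_eq, inv_pow]
      field_simp
      ring
    refine hbig.trans_tendsto ?_
    simpa using (tendsto_inv₀_cobounded (α := ℂ)).pow (k + 1)

end IsExteriorParam

/-! ### Bounded variation of the boundary parametrization -/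

theorem edist_le_hausdorffMeasure_of_isPreconnected {X : Type*} [MetricSpace X]
    [MeasurableSpace X] [BorelSpace X] {S : Set X} (hS : IsPreconnected S) {x y : X}
    (hx : x ∈ S) (hy : y ∈ S) : edist x y ≤ μH[1] S := by
  have hlip : LipschitzWith 1 (dist x) := LipschitzWith.dist_right x
  have hsub : Icc 0 (dist x y) ⊆ dist x '' S :=
    (hS.image _ hlip.continuous.continuousOn).ordConnected.out ⟨x, hx, dist_self x⟩ ⟨y, hy, rfl⟩
  calc edist x y = μH[1] (Icc 0 (dist x y)) := by
        rw [hausdorffMeasure_real, Real.volume_Icc, sub_zero, edist_dist]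
    _ ≤ μH[1] (dist x '' S) := measure_mono hsub
    _ ≤ μH[1] S := by simpa using hlip.hausdorffMeasure_image_le zero_le_one S

theorem boundedVariationOn_Icc_of_hausdorffMeasure_ne_top {X : Type*} [MetricSpace X]
    [MeasurableSpace X] [BorelSpace X] {g : ℝ → X} {a b : ℝ} (hg : ContinuousOn g (Icc a b))
    (hinj : InjOn g (Ioc a b)) (hfin : μH[1] (g '' Icc a b) ≠ ∞) :
    BoundedVariationOn g (Icc a b) := by
  refine ne_top_of_le_ne_top hfin (iSup_le ?_)
  rintro ⟨n, u, hu, hus⟩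
  have hIcc : ∀ i, Icc (u i) (u (i + 1)) ⊆ Icc a b := fun i => Icc_subset_Icc (hus i).1 (hus _).2
  have hIoc : ∀ i, Ioc (u i) (u (i + 1)) ⊆ Ioc a b := fun i => Ioc_subset_Ioc (hus i).1 (hus _).2
  have : NullSingletonClass (μH[1] : Measure X) := Measure.nullSingletonClass_hausdorff X one_pos
  have hstep : ∀ i, edist (g (u (i + 1))) (g (u i)) ≤ μH[1] (g '' Ioc (u i) (u (i + 1))) := by
    intro i
    have hle := hu i.le_succ
    calc edist (g (u (i + 1))) (g (u i)) ≤ μH[1] (g '' Icc (u i) (u (i + 1))) :=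
          edist_le_hausdorffMeasure_of_isPreconnected
            (isPreconnected_Icc.image g (hg.mono (hIcc i)))
            (mem_image_of_mem g (right_mem_Icc.2 hle)) (mem_image_of_mem g (left_mem_Icc.2 hle))
      _ = μH[1] (g '' Ioc (u i) (u (i + 1))) := by
          rw [← Ioc_insert_left hle, image_insert_eq, measure_congr (insert_ae_eq_self _ _)]
  calc ∑ i ∈ Finset.range n, edist (g (u (i + 1))) (g (u i))
      ≤ ∑ i ∈ Finset.range n, μH[1] (g '' Ioc (u i) (u (i + 1))) :=
        Finset.sum_le_sum fun i _ => hstep i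
    _ = μH[1] (⋃ i ∈ Finset.range n, g '' Ioc (u i) (u (i + 1))) := by
        refine (measure_biUnion_finset (fun i _ j _ hij => ?_) fun i _ => ?_).symm
        · exact Disjoint.image (hu.pairwise_disjoint_on_Ioc_succ hij) hinj (hIoc i) (hIoc j)
        · exact measurableSet_Ioc.image_of_continuousOn_injOn
            (hg.mono ((hIoc i).trans Ioc_subset_Icc_self)) (hinj.mono (hIoc i))
    _ ≤ μH[1] (g '' Icc a b) :=
        measure_mono (iUnion₂_subset fun i _ =>
          image_mono ((hIoc i).trans Ioc_subset_Icc_self))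

theorem IsDiniSmoothArc.hausdorffMeasure_image_ne_top {γ γ' : ℝ → ℂ} {a b : ℝ}
    (h : IsDiniSmoothArc γ γ' a b) : μH[1] (γ '' Icc a b) ≠ ∞ := by
  obtain ⟨C, hC⟩ := isCompact_Icc.exists_bound_of_continuousOn h.cont
  have hlip : LipschitzOnWith C.toNNReal γ (Icc a b) :=
    (convex_Icc a b).lipschitzOnWith_of_nnnorm_hasDerivWithin_le h.deriv fun x hx =>
      NNReal.coe_le_coe.1 ((hC x hx).trans (Real.le_coe_toNNReal C))
  refine ne_top_of_le_ne_top ?_ (hlip.hausdorffMeasure_image_le zero_le_one)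
  simp [hausdorffMeasure_real, ENNReal.mul_eq_top]

theorem IsPiecewiseDiniSmoothJordanCurve.hausdorffMeasure_ne_top {Γ : Set ℂ}
    (h : IsPiecewiseDiniSmoothJordanCurve Γ) : μH[1] Γ ≠ ∞ := by
  obtain ⟨_, N, γ, γ', a, b, harc, rfl⟩ := h
  exact ne_top_of_le_ne_top
    (ENNReal.sum_ne_top.2 fun i _ => (harc i).hausdorffMeasure_image_ne_top)
    (measure_iUnion_fintype_le _ _)

/-- The boundary parametrization `t ↦ ψ(e^{it})` of `Γ`. -/
def boundaryParam (ψ : ℂ → ℂ) (t : ℝ) : ℂ := ψ (Complex.exp (Complex.I * t))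

theorem circleMap_zero_one (t : ℝ) : circleMap 0 1 t = Complex.exp (Complex.I * t) := by
  simp [circleMap, mul_comm]

theorem periodic_boundaryParam (ψ : ℂ → ℂ) :
    Function.Periodic (boundaryParam ψ) (2 * Real.pi) := fun t => by
  simp only [boundaryParam, ← circleMap_zero_one, periodic_circleMap 0 1 t]

namespace IsExteriorParam

variable {Γ : Set ℂ} {φ ψ : ℂ → ℂ}

theorem continuous_boundaryParam (hψ : IsExteriorParam Γ φ ψ) : Continuous (boundaryParam ψ) :=
  hψ.cont.comp_continuous (by fun_prop) fun t => (Complex.norm_exp_I_mul_ofReal t).ge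

theorem injOn_boundaryParam (hψ : IsExteriorParam Γ φ ψ) (a : ℝ) :
    InjOn (boundaryParam ψ) (Ioc a (a + 2 * Real.pi)) := by
  have hinj : InjOn (fun t : ℝ => Complex.exp (Complex.I * t)) (Ioc a (a + 2 * Real.pi)) := by
    rw [← uIoc_of_le (by linarith [Real.pi_pos])]
    exact (injOn_circleMap_of_abs_sub_le one_ne_zero (by simp [abs_of_pos Real.pi_pos])).congr
      fun t _ => circleMap_zero_one t
  exact hψ.inj.comp hinj fun t _ => (Complex.norm_exp_I_mul_ofReal t).ge

theorem boundedVariationOn_boundaryParam (hψ : IsExteriorParam Γ φ ψ) (hΓ : μH[1] Γ ≠ ∞) :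
    BoundedVariationOn (boundaryParam ψ) (Icc 0 (4 * Real.pi)) := by
  have hperiod : ∀ a, eVariationOn (boundaryParam ψ) (Icc a (a + 2 * Real.pi)) ≠ ∞ := fun a => by
    refine boundedVariationOn_Icc_of_hausdorffMeasure_ne_top
      hψ.continuous_boundaryParam.continuousOn (hψ.injOn_boundaryParam a)
      (ne_top_of_le_ne_top hΓ (measure_mono ?_))
    rintro _ ⟨t, -, rfl⟩
    exact hψ.boundary _ (Complex.norm_exp_I_mul_ofReal t)
  have hsplit := eVariationOn.Icc_add_Icc (boundaryParam ψ) (a := 0) (b := 0 + 2 * Real.pi)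
    (c := 0 + 2 * Real.pi + 2 * Real.pi) (by linarith [Real.pi_pos]) (by linarith [Real.pi_pos])
    (mem_univ _)
  simp only [univ_inter] at hsplit
  rw [BoundedVariationOn, show 4 * Real.pi = 0 + 2 * Real.pi + 2 * Real.pi by ring, ← hsplit]
  exact ENNReal.add_ne_top.2 ⟨hperiod _, hperiod _⟩

end IsExteriorParam

/-! ### Stieltjes densities -/

theorem exists_isFiniteMeasure_setIntegral_eq {α : Type*} [MeasurableSpace α]
    (κ : ComplexMeasure α) :
    ∃ (m : Measure α) (f : α → ℂ), IsFiniteMeasure m ∧ Measurable f ∧ Integrable f m ∧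
      ∀ S, MeasurableSet S → ∫ x in S, f x ∂m = κ S := by
  set m : Measure α := κ.re.totalVariation + κ.im.totalVariation with hm
  have hfin : ∀ s : SignedMeasure α, IsFiniteMeasure s.totalVariation := fun s => by
    rw [SignedMeasure.totalVariation]; infer_instance
  have hfinm : IsFiniteMeasure m := by rw [hm]; infer_instance
  have hdensity : ∀ s : SignedMeasure α, s.totalVariation ≤ m → ∀ S, MeasurableSet S →
      ∫ x in S, s.rnDeriv m x ∂m = s S := fun s hs S hS => by
    rw [← withDensityᵥ_apply (s.integrable_rnDeriv m) hS,
      (s.absolutelyContinuous_iff_withDensityᵥ_rnDeriv_eq m).1 <|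
        VectorMeasure.AbsolutelyContinuous.mk fun T hT hmT => ?_]
    rw [Measure.toENNRealVectorMeasure_apply_measurable hT] at hmT
    exact s.null_of_totalVariation_zero (le_antisymm ((hs T).trans hmT.le) bot_le)
  have hint : ∀ S, IntegrableOn (κ.rnDeriv m) S m := fun _ =>
    (κ.integrable_rnDeriv m).integrableOn
  refine ⟨m, κ.rnDeriv m, hfinm, ?_, κ.integrable_rnDeriv m, fun S hS => Complex.ext ?_ ?_⟩
  · exact Complex.measurableEquivRealProd.symm.measurable.comp
      ((κ.re.measurable_rnDeriv m).prodMk (κ.im.measurable_rnDeriv m))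
  · exact (integral_re (hint S)).symm.trans (hdensity _ (Measure.le_add_right le_rfl) S hS)
  · exact (integral_im (hint S)).symm.trans (hdensity _ (Measure.le_add_left le_rfl) S hS)

theorem exists_polarDecomposition {α : Type*} [MeasurableSpace α] (κ : ComplexMeasure α) :
    ∃ (m : Measure α) (h : α → ℂ), IsFiniteMeasure m ∧ Measurable h ∧ (∀ x, ‖h x‖ = 1) ∧
      ∀ S, MeasurableSet S → ∫ x in S, h x ∂m = κ S := by
  obtain ⟨m, f, _, hf, hint, hκ⟩ := exists_isFiniteMeasure_setIntegral_eq κ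
  refine ⟨m.withDensity fun x => ‖f x‖₊, fun x => if f x = 0 then 1 else f x / ‖f x‖,
    isFiniteMeasure_withDensity hint.hasFiniteIntegral.ne, ?_, fun x => ?_, fun S hS => ?_⟩
  · exact Measurable.ite (hf (measurableSet_singleton 0)) measurable_const (by fun_prop)
  · beta_reduce
    split_ifs with hx
    · exact norm_one
    · simp [hx]
  · rw [setIntegral_withDensity_eq_setIntegral_smul hf.nnnorm _ hS, ← hκ S hS]
    refine integral_congr_ae (.of_forall fun x => ?_)
    by_cases hx : f x = 0
    · simp [hx]
    · simp [hx, NNReal.smul_def, mul_div_cancel₀]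

/-- `h` is a density of the Stieltjes measure `dg` with respect to `m` on the interval `[a, b]`. -/
structure HasStieltjesDensity (g h : ℝ → ℂ) (m : Measure ℝ) (a b : ℝ) : Prop where
  integrableOn : IntegrableOn h (Ioc a b) m
  integral_eq_sub : ∀ ⦃s⦄, s ∈ Icc a b → ∀ ⦃t⦄, t ∈ Icc a b → ∫ x in s..t, h x ∂m = g t - g s

theorem exists_hasStieltjesDensity_norm_eq_one {g : ℝ → ℂ} {a b : ℝ} (hab : a ≤ b)
    (hg : ContinuousOn g (Icc a b)) (hbv : BoundedVariationOn g (Icc a b)) :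
    ∃ (m : Measure ℝ) (h : ℝ → ℂ), IsFiniteMeasure m ∧ NullSingletonClass m ∧ Measurable h ∧
      (∀ x, ‖h x‖ = 1) ∧ HasStieltjesDensity g h m a b := by
  set G : ℝ → ℂ := fun x => g (projIcc a b hab x)
  have hG : Continuous G := hg.comp_continuous
    (continuous_subtype_val.comp continuous_projIcc) fun x => (projIcc a b hab x).2
  have hGbv : BoundedVariationOn G univ :=
    ne_top_of_le_ne_top hbv <| eVariationOn.comp_le_of_monotoneOn g
      (fun x => (projIcc a b hab x : ℝ)) (fun _ _ _ _ hxy => monotone_projIcc hab hxy)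
      fun x _ => (projIcc a b hab x).2
  obtain ⟨m, h, _, hmeas, hnorm, hm⟩ := exists_polarDecomposition hGbv.vectorMeasure
  have hint : Integrable h m :=
    .of_bound hmeas.aestronglyMeasurable 1 (.of_forall fun x => (hnorm x).le)
  have hIoc : ∀ {s t}, s ∈ Icc a b → t ∈ Icc a b → s ≤ t → ∫ x in s..t, h x ∂m = g t - g s := by
    intro s t hs ht hst
    rw [intervalIntegral.integral_of_le hst, hm _ measurableSet_Ioc, hGbv.vectorMeasure_Ioc hst,
      hG.continuousWithinAt.rightLim_eq, hG.continuousWithinAt.rightLim_eq]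
    simp only [G, projIcc_of_mem hab ht, projIcc_of_mem hab hs]
  refine ⟨m, h, inferInstance, ⟨fun x => ?_⟩, hmeas, hnorm, hint.integrableOn, fun s hs t ht => ?_⟩
  · have hzero : ∫ x in {x}, h x ∂m = 0 := by
      rw [hm _ (measurableSet_singleton x), hGbv.vectorMeasure_singleton,
        hG.continuousWithinAt.rightLim_eq, hG.continuousWithinAt.leftLim_eq, sub_self]
    rw [integral_singleton, smul_eq_zero] at hzero
    exact (measureReal_eq_zero_iff).1 (hzero.resolve_right (norm_ne_zero_iff.1 (by simp [hnorm])))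
  · rcases le_total s t with hst | hst
    · exact hIoc hs ht hst
    · rw [intervalIntegral.integral_symm, hIoc ht hs hst, neg_sub]

section MeanValue

variable {E : Type*} [NormedAddCommGroup E] {f : ℝ → E} {Φ : ℝ → ℝ} {a b : ℝ}

theorem norm_sub_le_sub_of_forall_eventually (hab : a ≤ b) (hf : ContinuousOn f (Icc a b))
    (hΦ : ContinuousOn Φ (Icc a b))
    (h : ∀ x ∈ Ico a b, ∀ᶠ t in 𝓝[>] x, ‖f t - f x‖ ≤ Φ t - Φ x) :
    ‖f b - f a‖ ≤ Φ b - Φ a := by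
  have hclosed : IsClosed ({t | ‖f t - f a‖ ≤ Φ t - Φ a} ∩ Icc a b) := by
    rw [inter_comm]
    exact isClosed_Icc.isClosed_le (hf.sub continuousOn_const).norm (hΦ.sub continuousOn_const)
  refine hclosed.Icc_subset_of_forall_exists_gt (by simp) (fun x hx y hy => ?_) ⟨hab, le_rfl⟩
  obtain ⟨t, ht, hty⟩ := ((h x hx.2).and (Ioc_mem_nhdsGT hy)).exists
  refine ⟨t, ?_, hty⟩
  calc ‖f t - f a‖ ≤ ‖f t - f x‖ + ‖f x - f a‖ := norm_sub_le_norm_sub_add_norm_sub _ _ _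
    _ ≤ (Φ t - Φ x) + (Φ x - Φ a) := add_le_add ht hx.1
    _ = Φ t - Φ a := sub_add_sub_cancel _ _ _

theorem eq_of_forall_sub_isLittleO_sub (hab : a ≤ b) (hf : ContinuousOn f (Icc a b))
    (hΦ : ContinuousOn Φ (Icc a b)) (hmono : MonotoneOn Φ (Icc a b))
    (h : ∀ x ∈ Ico a b, (fun t => f t - f x) =o[𝓝[>] x] fun t => Φ t - Φ x) : f b = f a := by
  have hle : ∀ ε > 0, ‖f b - f a‖ ≤ ε * Φ b - ε * Φ a := fun ε hε => by
    refine norm_sub_le_sub_of_forall_eventually hab hf (hΦ.const_smul ε) fun x hx => ?_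
    filter_upwards [(h x hx).bound hε, Ioc_mem_nhdsGT hx.2] with t ht hxt
    have hx' : Φ x ≤ Φ t := hmono ⟨hx.1, hx.2.le⟩ ⟨hx.1.trans hxt.1.le, hxt.2⟩ hxt.1.le
    rwa [Real.norm_of_nonneg (sub_nonneg.2 hx'), mul_sub] at ht
  have hlim : Tendsto (fun ε : ℝ => ε * Φ b - ε * Φ a) (𝓝[>] 0) (𝓝 0) :=
    tendsto_nhdsWithin_of_tendsto_nhds <| by
      simpa using (by fun_prop : Continuous fun ε : ℝ => ε * Φ b - ε * Φ a).tendsto 0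
  exact sub_eq_zero.1 <| norm_le_zero_iff.1 <|
    ge_of_tendsto hlim (eventually_mem_nhdsWithin.mono hle)

theorem sub_isBigO_add_sub_of_monotoneOn {Ψ : ℝ → ℝ} (hΦ : MonotoneOn Φ (Icc a b))
    (hΨ : MonotoneOn Ψ (Icc a b)) {x : ℝ} (hx : x ∈ Ico a b) :
    (fun t => Φ t - Φ x) =O[𝓝[>] x] fun t => (Φ + Ψ) t - (Φ + Ψ) x := by
  refine .of_bound 1 ?_
  filter_upwards [Ioc_mem_nhdsGT hx.2] with t ht
  have hxm := Ico_subset_Icc_self hx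
  have htm : t ∈ Icc a b := ⟨hx.1.trans ht.1.le, ht.2⟩
  have h₁ := sub_nonneg.2 (hΦ hxm htm ht.1.le)
  have h₂ := sub_nonneg.2 (hΨ hxm htm ht.1.le)
  rw [Real.norm_of_nonneg h₁, one_mul, Pi.add_apply, Pi.add_apply, add_sub_add_comm,
    Real.norm_of_nonneg (add_nonneg h₁ h₂)]
  exact le_add_of_nonneg_right h₂

end MeanValue

section Primitive

variable {E : Type*} [NormedAddCommGroup E] {m : Measure ℝ} {h : ℝ → E} {a b : ℝ}

/-- The total variation of `h m` on `(a, t]`, as a function of `t`. -/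
def variationPrimitive (h : ℝ → E) (m : Measure ℝ) (a t : ℝ) : ℝ := ∫ x in a..t, ‖h x‖ ∂m

theorem intervalIntegrable_of_integrableOn_Ioc {s t : ℝ} (hh : IntegrableOn h (Ioc a b) m)
    (hs : s ∈ Icc a b) (ht : t ∈ Icc a b) : IntervalIntegrable h m s t :=
  ⟨hh.mono_set (Ioc_subset_Ioc hs.1 ht.2), hh.mono_set (Ioc_subset_Ioc ht.1 hs.2)⟩

theorem variationPrimitive_sub {s t : ℝ} (hh : IntegrableOn h (Ioc a b) m) (hs : s ∈ Icc a b)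
    (ht : t ∈ Icc a b) :
    variationPrimitive h m a t - variationPrimitive h m a s = ∫ x in s..t, ‖h x‖ ∂m :=
  have ha : a ∈ Icc a b := ⟨le_rfl, hs.1.trans hs.2⟩
  intervalIntegral.integral_interval_sub_left
    (intervalIntegrable_of_integrableOn_Ioc hh.norm ha ht)
    (intervalIntegrable_of_integrableOn_Ioc hh.norm ha hs)

theorem monotoneOn_variationPrimitive (hh : IntegrableOn h (Ioc a b) m) :
    MonotoneOn (variationPrimitive h m a) (Icc a b) := fun s hs t ht hst => by
  rw [← sub_nonneg, variationPrimitive_sub hh hs ht]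
  exact intervalIntegral.integral_nonneg hst fun _ _ => norm_nonneg _

theorem continuousOn_primitive_Icc [NullSingletonClass m] [NormedSpace ℝ E]
    (hh : IntegrableOn h (Ioc a b) m) : ContinuousOn (fun t => ∫ x in a..t, h x ∂m) (Icc a b) := by
  rcases le_total a b with hab | hab
  · have hh' : IntegrableOn h (uIcc a b) m := by
      rwa [uIcc_of_le hab, integrableOn_Icc_iff_integrableOn_Ioc]
    simpa only [uIcc_of_le hab] using intervalIntegral.continuousOn_primitive_interval hh'
  · exact (subsingleton_Icc_of_ge hab).continuousOn _

theorem tendsto_nhdsGT_of_continuousOn_Icc {X : Type*} [TopologicalSpace X] {f : ℝ → X}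
    (hf : ContinuousOn f (Icc a b)) {x : ℝ} (hx : x ∈ Ico a b) : Tendsto f (𝓝[>] x) (𝓝 (f x)) :=
  (hf x (Ico_subset_Icc_self hx)).mono_left <| nhdsWithin_le_of_mem <|
    Filter.mem_of_superset (Ioc_mem_nhdsGT hx.2) fun _ ht => ⟨hx.1.trans ht.1.le, ht.2⟩

theorem integral_mul_sub_isLittleO {f h : ℝ → ℂ} (hf : ContinuousOn f (Icc a b))
    (hh : IntegrableOn h (Ioc a b) m) {x : ℝ} (hx : x ∈ Ico a b) :
    (fun t => (∫ y in x..t, f y * h y ∂m) - f x * ∫ y in x..t, h y ∂m) =o[𝓝[>] x]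
      fun t => variationPrimitive h m a t - variationPrimitive h m a x := by
  rw [Asymptotics.isLittleO_iff]
  intro ε hε
  have hxm := Ico_subset_Icc_self hx
  have hfx : ∀ᶠ y in 𝓝[>] x, ‖f y - f x‖ < ε := by
    simpa only [dist_eq_norm] using Metric.tendsto_nhds.1
      (tendsto_nhdsGT_of_continuousOn_Icc hf hx) ε hε
  obtain ⟨u, hxu, hu⟩ := (mem_nhdsGT_iff_exists_Ioc_subset).1 hfx
  filter_upwards [Ioc_mem_nhdsGT hx.2, Ioc_mem_nhdsGT hxu] with t htb htu
  have htm : t ∈ Icc a b := ⟨hx.1.trans htb.1.le, htb.2⟩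
  have hfh := intervalIntegrable_of_integrableOn_Ioc (hh.continuousOn_mul_of_subset hf
    isCompact_Icc measurableSet_Ioc Ioc_subset_Icc_self) hxm htm
  have hint := intervalIntegrable_of_integrableOn_Ioc hh hxm htm
  rw [variationPrimitive_sub hh hxm htm, ← intervalIntegral.integral_const_mul,
    ← intervalIntegral.integral_sub hfh (hint.const_mul _)]
  refine (intervalIntegral.norm_integral_le_of_norm_le htb.1.le
    (.of_forall fun y hy => ?_) (hint.norm.const_mul ε)).trans_eq ?_
  · rw [← sub_mul, norm_mul]
    exact mul_le_mul_of_nonneg_right (hu ⟨hy.1, hy.2.trans htu.2⟩).le (norm_nonneg _)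
  · rw [intervalIntegral.integral_const_mul, Real.norm_of_nonneg
      (intervalIntegral.integral_nonneg htb.1.le fun _ _ => norm_nonneg _)]

theorem integral_eq_sub_of_isLittleO [NullSingletonClass m] [NormedSpace ℝ E] {F : ℝ → E}
    {Φ : ℝ → ℝ} (hab : a ≤ b) (hh : IntegrableOn h (Ioc a b) m) (hF : ContinuousOn F (Icc a b))
    (hΦ : ContinuousOn Φ (Icc a b)) (hmono : MonotoneOn Φ (Icc a b))
    (hlittle : ∀ x ∈ Ico a b,
      (fun t => (∫ y in x..t, h y ∂m) - (F t - F x)) =o[𝓝[>] x] fun t => Φ t - Φ x) :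
    ∫ x in a..b, h x ∂m = F b - F a := by
  have key := eq_of_forall_sub_isLittleO_sub hab ((continuousOn_primitive_Icc hh).sub hF) hΦ hmono
    fun x hx => (hlittle x hx).congr' ?_ .rfl
  · simpa only [Pi.sub_apply, intervalIntegral.integral_same, zero_sub, sub_eq_iff_eq_add,
      neg_add_eq_sub] using key
  · filter_upwards [Ioc_mem_nhdsGT hx.2] with t ht
    have ha : a ∈ Icc a b := ⟨le_rfl, hab⟩
    have hxm := Ico_subset_Icc_self hx
    have htm : t ∈ Icc a b := ⟨hx.1.trans ht.1.le, ht.2⟩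
    rw [← intervalIntegral.integral_interval_sub_left
      (intervalIntegrable_of_integrableOn_Ioc hh ha htm)
      (intervalIntegrable_of_integrableOn_Ioc hh ha hxm)]
    exact sub_sub_sub_comm _ _ _ _

end Primitive

namespace HasStieltjesDensity

variable {g h k p : ℝ → ℂ} {m μ : Measure ℝ} {a b : ℝ}

theorem mono (hg : HasStieltjesDensity g h m a b) {a' b' : ℝ} (ha : a ≤ a') (hb : b' ≤ b) :
    HasStieltjesDensity g h m a' b' where
  integrableOn := hg.integrableOn.mono_set (Ioc_subset_Ioc ha hb)
  integral_eq_sub _ hs _ ht :=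
    hg.integral_eq_sub (Icc_subset_Icc ha hb hs) (Icc_subset_Icc ha hb ht)

theorem sub_const (hg : HasStieltjesDensity g h m a b) (z : ℂ) :
    HasStieltjesDensity (fun t => g t - z) h m a b where
  integrableOn := hg.integrableOn
  integral_eq_sub _ hs _ ht := by rw [hg.integral_eq_sub hs ht, sub_sub_sub_cancel_right]

theorem continuousOn [NullSingletonClass m] (hg : HasStieltjesDensity g h m a b) :
    ContinuousOn g (Icc a b) := by
  refine ((continuousOn_primitive_Icc hg.integrableOn).add_const (g a)).congr fun t ht => ?_
  simp only [hg.integral_eq_sub ⟨le_rfl, ht.1.trans ht.2⟩ ht, sub_add_cancel]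

theorem of_hasDerivAt (hg : ∀ t, HasDerivAt g (h t) t) (hh : Continuous h) (a b : ℝ) :
    HasStieltjesDensity g h volume a b where
  integrableOn := hh.continuousOn.integrableOn_Icc.mono_set Ioc_subset_Icc_self
  integral_eq_sub s _ t _ := intervalIntegral.integral_eq_sub_of_hasDerivAt (fun x _ => hg x)
    (hh.intervalIntegrable s t)

theorem sub_isBigO (hg : HasStieltjesDensity g h m a b) {x : ℝ} (hx : x ∈ Ico a b) :
    (fun t => g t - g x) =O[𝓝[>] x]
      fun t => variationPrimitive h m a t - variationPrimitive h m a x := by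
  refine .of_bound 1 ?_
  filter_upwards [Ioc_mem_nhdsGT hx.2] with t ht
  have hxm := Ico_subset_Icc_self hx
  have htm : t ∈ Icc a b := ⟨hx.1.trans ht.1.le, ht.2⟩
  rw [← hg.integral_eq_sub hxm htm, variationPrimitive_sub hg.integrableOn hxm htm, one_mul]
  exact intervalIntegral.norm_integral_le_integral_norm ht.1.le |>.trans (le_abs_self _)

theorem integral_mul_sub_isLittleO (hg : HasStieltjesDensity g h m a b)
    (hk : ContinuousOn k (Icc a b)) {x : ℝ} (hx : x ∈ Ico a b) :
    (fun t => (∫ y in x..t, k y * h y ∂m) - k x * (g t - g x)) =o[𝓝[>] x]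
      fun t => variationPrimitive h m a t - variationPrimitive h m a x := by
  refine (_root_.integral_mul_sub_isLittleO hk hg.integrableOn hx).congr' ?_ .rfl
  filter_upwards [Ioc_mem_nhdsGT hx.2] with t ht
  rw [hg.integral_eq_sub (Ico_subset_Icc_self hx) ⟨hx.1.trans ht.1.le, ht.2⟩]

theorem integral_mul_add_integral_mul [NullSingletonClass m] [NullSingletonClass μ] (hab : a ≤ b)
    (hg : HasStieltjesDensity g h m a b) (hk : HasStieltjesDensity k p μ a b) :
    (∫ x in a..b, k x * h x ∂m) + ∫ x in a..b, g x * p x ∂μ = k b * g b - k a * g a := by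
  have hkh := hg.integrableOn.continuousOn_mul_of_subset hk.continuousOn isCompact_Icc
    measurableSet_Ioc Ioc_subset_Icc_self
  have hgp := hk.integrableOn.continuousOn_mul_of_subset hg.continuousOn isCompact_Icc
    measurableSet_Ioc Ioc_subset_Icc_self
  have hV := monotoneOn_variationPrimitive hg.integrableOn
  have hW := monotoneOn_variationPrimitive hk.integrableOn
  have key := integral_eq_sub_of_isLittleO hab hkh
    ((hk.continuousOn.mul hg.continuousOn).sub (continuousOn_primitive_Icc hgp))
    ((continuousOn_primitive_Icc hg.integrableOn.norm).add
      (continuousOn_primitive_Icc hk.integrableOn.norm)) (hV.add hW) fun x hx => ?_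
  · simp only [Pi.sub_apply, Pi.mul_apply, intervalIntegral.integral_same] at key
    rw [key]
    ring
  have hV' := sub_isBigO_add_sub_of_monotoneOn hV hW hx
  have hW' := sub_isBigO_add_sub_of_monotoneOn hW hV hx
  rw [add_comm] at hW'
  have hkx : (fun t => k t - k x) =o[𝓝[>] x] fun _ => (1 : ℝ) := by
    rw [Asymptotics.isLittleO_one_iff, ← sub_self (k x)]
    exact (tendsto_nhdsGT_of_continuousOn_Icc hk.continuousOn hx).sub_const _
  have hprod := hkx.mul_isBigO (hg.sub_isBigO hx)
  simp only [one_mul] at hprod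
  refine (((hg.integral_mul_sub_isLittleO hk.continuousOn hx).trans_isBigO hV').add
    ((hk.integral_mul_sub_isLittleO hg.continuousOn hx).trans_isBigO hW') |>.sub
    (hprod.trans_isBigO hV')).congr' ?_ .rfl
  filter_upwards [Ioc_mem_nhdsGT hx.2] with t ht
  have ha : a ∈ Icc a b := ⟨le_rfl, hab⟩
  rw [← intervalIntegral.integral_interval_sub_left
    (intervalIntegrable_of_integrableOn_Ioc hgp ha ⟨hx.1.trans ht.1.le, ht.2⟩)
    (intervalIntegrable_of_integrableOn_Ioc hgp ha (Ico_subset_Icc_self hx))]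
  simp only [Pi.sub_apply, Pi.mul_apply]
  ring

theorem integral_inv_mul_eq_sub [NullSingletonClass m] (hab : a ≤ b)
    (hg : HasStieltjesDensity g h m a b) {L : ℝ → ℂ} (hL : ContinuousOn L (Icc a b))
    (hexp : ∀ t ∈ Icc a b, Complex.exp (L t) = g t) :
    ∫ x in a..b, (g x)⁻¹ * h x ∂m = L b - L a := by
  have hg₀ : ∀ t ∈ Icc a b, g t ≠ 0 := fun t ht => hexp t ht ▸ Complex.exp_ne_zero _
  have hinv : ContinuousOn (fun t => (g t)⁻¹) (Icc a b) := hg.continuousOn.inv₀ hg₀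
  refine integral_eq_sub_of_isLittleO hab (hg.integrableOn.continuousOn_mul_of_subset hinv
    isCompact_Icc measurableSet_Ioc Ioc_subset_Icc_self) hL
    (continuousOn_primitive_Icc hg.integrableOn.norm)
    (monotoneOn_variationPrimitive hg.integrableOn) fun x hx => ?_
  have hxm := Ico_subset_Icc_self hx
  have hexpg : ∀ᶠ t in 𝓝[>] x, Complex.exp (L t) - Complex.exp (L x) = g t - g x := by
    filter_upwards [Ioc_mem_nhdsGT hx.2] with t ht
    rw [hexp x hxm, hexp t ⟨hx.1.trans ht.1.le, ht.2⟩]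
  have hder := Complex.hasDerivAt_exp (L x)
  have hLx : Tendsto (fun t => (L t, L x)) (𝓝[>] x) (𝓝 (L x) ×ˢ pure (L x)) :=
    (tendsto_nhdsGT_of_continuousOn_Icc hL hx).prodMk tendsto_const_pure
  have hLg : (fun t => L t - L x) =O[𝓝[>] x] fun t => g t - g x :=
    ((hder.isTheta_sub (Complex.exp_ne_zero _)).isBigO_symm.comp_tendsto hLx).congr' .rfl hexpg
  have hlin : (fun t => g t - g x - (L t - L x) * g x) =o[𝓝[>] x] fun t => g t - g x := by
    refine ((hder.isLittleO.comp_tendsto hLx.fst).congr' ?_ .rfl).trans_isBigO hLg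
    filter_upwards [hexpg] with t ht
    simp [← ht, hexp x hxm]
  refine ((hg.integral_mul_sub_isLittleO hinv hx).add
    ((hlin.const_mul_left (g x)⁻¹).trans_isBigO (hg.sub_isBigO hx))).congr_left fun t => ?_
  field_simp [hg₀ x hxm]
  ring

end HasStieltjesDensity

theorem withDensity_ofReal_ofReal_neg_ext {m μ ν : Measure ℝ} [IsFiniteMeasure μ]
    [IsFiniteMeasure ν] {U : ℝ → ℝ} (hU : Integrable U m)
    (h : ∀ s t, s < t → μ.real (Ioc s t) - ν.real (Ioc s t) = ∫ x in Ioc s t, U x ∂m) :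
    μ + m.withDensity (fun x => ENNReal.ofReal (-U x)) =
      ν + m.withDensity fun x => ENNReal.ofReal (U x) := by
  have := isFiniteMeasure_withDensity_ofReal hU.2
  have := isFiniteMeasure_withDensity_ofReal hU.neg.2
  refine Measure.ext_of_Ioc _ _ fun s t hst => ?_
  rw [← measureReal_eq_measureReal_iff, measureReal_add_apply, measureReal_add_apply]
  have hst' := h s t hst
  rw [integral_eq_lintegral_pos_part_sub_lintegral_neg_part hU.integrableOn,
    ← withDensity_apply _ measurableSet_Ioc, ← withDensity_apply _ measurableSet_Ioc] at hst'
  simp only [measureReal_def] at hst' ⊢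
  linarith

theorem integral_sub_integral_eq_integral_smul {E : Type*} [NormedAddCommGroup E]
    [NormedSpace ℝ E] {m μ ν : Measure ℝ} [IsFiniteMeasure μ] [IsFiniteMeasure ν] {U : ℝ → ℝ}
    (hU : Integrable U m)
    (h : ∀ s t, s < t → μ.real (Ioc s t) - ν.real (Ioc s t) = ∫ x in Ioc s t, U x ∂m)
    {f : ℝ → E} {C : ℝ} (hf : StronglyMeasurable f) (hC : ∀ x, ‖f x‖ ≤ C) :
    ∫ x, f x ∂μ - ∫ x, f x ∂ν = ∫ x, U x • f x ∂m := by
  have := isFiniteMeasure_withDensity_ofReal hU.2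
  have := isFiniteMeasure_withDensity_ofReal hU.neg.2
  have hint : ∀ ρ : Measure ℝ, IsFiniteMeasure ρ → Integrable f ρ := fun _ _ =>
    .of_bound hf.aestronglyMeasurable C (.of_forall hC)
  have hsmul : ∀ {V : ℝ → ℝ}, Integrable V m →
      Integrable (fun x => (ENNReal.ofReal (V x)).toReal • f x) m ∧
      ∫ x, f x ∂m.withDensity (fun x => ENNReal.ofReal (V x)) =
        ∫ x, (ENNReal.ofReal (V x)).toReal • f x ∂m := fun hV => by
    refine ⟨?_, integral_withDensity_eq_integral_toReal_smul₀ hV.aemeasurable.ennreal_ofReal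
      (.of_forall fun _ => ENNReal.ofReal_lt_top) f⟩
    simp only [ENNReal.toReal_ofReal']
    exact hV.pos_part.smul_bdd C hf.aestronglyMeasurable (.of_forall hC)
  have key := congrArg (fun ρ => ∫ x, f x ∂ρ) (withDensity_ofReal_ofReal_neg_ext hU h)
  simp only [integral_add_measure (hint _ inferInstance) (hint _ inferInstance)] at key
  rw [(hsmul hU).2, (hsmul (V := fun x => -U x) hU.neg).2] at key
  rw [sub_eq_sub_iff_add_eq_add.2 (key.trans (add_comm _ _)),
    ← integral_sub (hsmul hU).1 (hsmul (V := fun x => -U x) hU.neg).1]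
  simp only [← sub_smul, ENNReal.toReal_ofReal', max_zero_sub_max_neg_zero_eq_self]

theorem setIntegral_Ioc_sub_setIntegral_Ioc_eq {E : Type*} [NormedAddCommGroup E]
    [NormedSpace ℝ E] {m μ ν : Measure ℝ} [IsFiniteMeasure μ] [IsFiniteMeasure ν] {U : ℝ → ℝ}
    {a b : ℝ} (hU : IntegrableOn U (Ioc a b) m)
    (h : ∀ s ∈ Icc a b, ∀ t ∈ Icc a b, s ≤ t →
      μ.real (Ioc s t) - ν.real (Ioc s t) = ∫ x in Ioc s t, U x ∂m)
    {f : ℝ → E} {C : ℝ} (hf : StronglyMeasurable f) (hC : ∀ x, ‖f x‖ ≤ C) :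
    (∫ x in Ioc a b, f x ∂μ) - ∫ x in Ioc a b, f x ∂ν = ∫ x in Ioc a b, U x • f x ∂m := by
  refine integral_sub_integral_eq_integral_smul hU (fun s t _ => ?_) hf hC
  rw [measureReal_restrict_apply measurableSet_Ioc, measureReal_restrict_apply measurableSet_Ioc,
    Measure.restrict_restrict measurableSet_Ioc, Ioc_inter_Ioc]
  rcases le_or_gt (min t b) (max s a) with hle | hlt
  · simp [Ioc_eq_empty_of_le hle]
  · have hab : max s a ≤ b := hlt.le.trans (min_le_right _ _)
    have hab' : a ≤ min t b := (le_max_right _ _).trans hlt.le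
    exact h _ ⟨le_max_right _ _, hab⟩ _ ⟨hab', min_le_right _ _⟩ hlt.le

/-! ### Decay of Fourier coefficients -/

theorem norm_integral_mul_sub_integral_mul_le {α 𝕜 : Type*} [RCLike 𝕜] {_ : MeasurableSpace α}
    {μ : Measure α} {e F G : α → 𝕜} (he : AEStronglyMeasurable e μ) (hb : ∀ x, ‖e x‖ ≤ 1)
    (hF : Integrable F μ) (hG : Integrable G μ) :
    ‖∫ x, e x * F x ∂μ - ∫ x, e x * G x ∂μ‖ ≤ ∫ x, ‖F x - G x‖ ∂μ := by
  rw [← integral_sub (hF.bdd_mul he (.of_forall hb)) (hG.bdd_mul he (.of_forall hb))]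
  refine norm_integral_le_of_norm_le (hF.sub hG).norm (.of_forall fun x => ?_)
  rw [← mul_sub, norm_mul]
  exact mul_le_of_le_one_left (norm_nonneg _) (hb x)

theorem tendsto_integral_mul_of_forall_exists_tendsto {α ι 𝕜 : Type*} [RCLike 𝕜]
    {_ : MeasurableSpace α} {μ : Measure α} {l : Filter ι} {e : ι → α → 𝕜}
    (he : ∀ i, AEStronglyMeasurable (e i) μ) (hb : ∀ i x, ‖e i x‖ ≤ 1) {F : α → 𝕜}
    (hF : Integrable F μ)
    (h : ∀ ε > 0, ∃ G, Integrable G μ ∧ ∫ x, ‖F x - G x‖ ∂μ ≤ ε ∧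
      Tendsto (fun i => ∫ x, e i x * G x ∂μ) l (𝓝 0)) :
    Tendsto (fun i => ∫ x, e i x * F x ∂μ) l (𝓝 0) := by
  refine Metric.tendsto_nhds.2 fun ε hε => ?_
  obtain ⟨G, hG, hle, hlim⟩ := h (ε / 2) (half_pos hε)
  filter_upwards [Metric.tendsto_nhds.1 hlim (ε / 2) (half_pos hε)] with i hi
  rw [dist_zero_right] at hi ⊢
  linarith [norm_sub_norm_le (∫ x, e i x * F x ∂μ) (∫ x, e i x * G x ∂μ),
    norm_integral_mul_sub_integral_mul_le (he i) (hb i) hF hG]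

section AddCircle

theorem norm_fourier_apply {T : ℝ} (n : ℤ) (y : AddCircle T) : ‖fourier n y‖ = 1 := by
  rw [fourier_apply, Circle.norm_coe]

variable {T : ℝ} [Fact (0 < T)]

section

variable {μ : Measure (AddCircle T)} {h : AddCircle T → ℂ} {N : ℕ}

theorem eventually_integral_fourier_neg_mul_eq_zero (hh : Integrable h μ)
    (hz : ∀ n : ℕ, N ≤ n → ∫ y, fourier (-n : ℤ) y * h y ∂μ = 0) {P : C(AddCircle T, ℂ)}
    (hP : P ∈ Submodule.span ℂ (range (fourier (T := T)))) :
    ∀ᶠ n : ℕ in atTop, ∫ y, fourier (-n : ℤ) y * (P y * h y) ∂μ = 0 := by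
  have hint : ∀ (n : ℕ) (P : C(AddCircle T, ℂ)),
      Integrable (fun y => fourier (-n : ℤ) y * (P y * h y)) μ := fun n P =>
    (hh.bdd_mul P.continuous.aestronglyMeasurable (.of_forall P.norm_coe_le_norm)).bdd_mul
      (fourier _).continuous.aestronglyMeasurable (.of_forall fun _ => (norm_fourier_apply _ _).le)
  induction hP using Submodule.span_induction with
  | mem P hP =>
    obtain ⟨k, rfl⟩ := hP
    filter_upwards [eventually_ge_atTop (N + k.toNat)] with n hn
    rw [← hz (n - k).toNat (by omega), Int.toNat_of_nonneg (by omega), neg_sub, sub_eq_neg_add]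
    simp only [fourier_add, mul_assoc]
  | zero => simp
  | add P Q _ _ hP hQ =>
    filter_upwards [hP, hQ] with n hPn hQn
    simp only [ContinuousMap.add_apply, add_mul, mul_add]
    rw [integral_add (hint n P) (hint n Q), hPn, hQn, add_zero]
  | smul a P _ hP =>
    filter_upwards [hP] with n hPn
    simp only [ContinuousMap.smul_apply, smul_eq_mul, mul_assoc, mul_left_comm _ a]
    rw [integral_const_mul, hPn, mul_zero]

theorem tendsto_integral_fourier_neg_mul_continuousMap (hh : Integrable h μ)
    (hz : ∀ n : ℕ, N ≤ n → ∫ y, fourier (-n : ℤ) y * h y ∂μ = 0) (G : C(AddCircle T, ℂ)) :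
    Tendsto (fun n : ℕ => ∫ y, fourier (-n : ℤ) y * (G y * h y) ∂μ) atTop (𝓝 0) := by
  have hint : ∀ P : C(AddCircle T, ℂ), Integrable (fun y => P y * h y) μ := fun P =>
    hh.bdd_mul P.continuous.aestronglyMeasurable (.of_forall P.norm_coe_le_norm)
  refine tendsto_integral_mul_of_forall_exists_tendsto
    (fun _ => (fourier _).continuous.aestronglyMeasurable)
    (fun _ _ => (norm_fourier_apply _ _).le) (hint G) fun ε hε => ?_
  have : 0 ≤ ∫ y, ‖h y‖ ∂μ := integral_nonneg fun _ => norm_nonneg _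
  obtain ⟨P, hP, hGP⟩ := Metric.mem_closure_iff.1
    (span_fourier_closure_eq_top (T := T) ▸ Submodule.mem_top :
      G ∈ (Submodule.span ℂ (range (fourier (T := T)))).topologicalClosure)
    (ε / ((∫ y, ‖h y‖ ∂μ) + 1)) (by positivity)
  refine ⟨fun y => P y * h y, hint P, ?_,
    tendsto_const_nhds.congr' ((eventually_integral_fourier_neg_mul_eq_zero hh hz hP).mono
      fun _ hn => hn.symm)⟩
  calc ∫ y, ‖G y * h y - P y * h y‖ ∂μ
      ≤ ∫ y, ‖G - P‖ * ‖h y‖ ∂μ := by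
        refine integral_mono ((hint G).sub (hint P)).norm (hh.norm.const_mul _) fun y => ?_
        simp only [← sub_mul, norm_mul]
        gcongr
        exact (G - P).norm_coe_le_norm y
    _ = ‖G - P‖ * ∫ y, ‖h y‖ ∂μ := integral_const_mul _ _
    _ ≤ ε / ((∫ y, ‖h y‖ ∂μ) + 1) * ((∫ y, ‖h y‖ ∂μ) + 1) := by
        rw [← dist_eq_norm]
        gcongr
        linarith
    _ = ε := div_mul_cancel₀ _ (by positivity)

theorem tendsto_integral_fourier_neg_mul [IsFiniteMeasure μ] (hm : AEStronglyMeasurable h μ)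
    (hh : ∀ y, ‖h y‖ = 1) (hz : ∀ n : ℕ, N ≤ n → ∫ y, fourier (-n : ℤ) y * h y ∂μ = 0)
    {F : AddCircle T → ℂ} (hF : Integrable F μ) :
    Tendsto (fun n : ℕ => ∫ y, fourier (-n : ℤ) y * F y ∂μ) atTop (𝓝 0) := by
  have hle : ∀ᵐ y ∂μ, ‖h y‖ ≤ 1 := .of_forall fun y => (hh y).le
  refine tendsto_integral_mul_of_forall_exists_tendsto
    (fun _ => (fourier _).continuous.aestronglyMeasurable)
    (fun _ _ => (norm_fourier_apply _ _).le) hF fun ε hε => ?_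
  obtain ⟨G, hG, hGi⟩ := (hF.mul_bdd (c := 1) (g := fun y => starRingEnd ℂ (h y))
    (Complex.continuous_conj.comp_aestronglyMeasurable hm)
    (by simpa only [RCLike.norm_conj] using hle)).exists_boundedContinuous_integral_sub_le hε
  refine ⟨fun y => G y * h y, hGi.mul_bdd hm hle, ?_,
    tendsto_integral_fourier_neg_mul_continuousMap (.of_bound hm 1 hle) hz G.toContinuousMap⟩
  refine (integral_congr_ae (.of_forall fun y => ?_)).trans_le hG
  simp only
  have hconj : starRingEnd ℂ (h y) * h y = 1 := by rw [Complex.conj_mul', hh]; simp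
  calc ‖F y - G y * h y‖ = ‖F y * (starRingEnd ℂ (h y) * h y) - G y * h y‖ := by
        rw [hconj, mul_one]
    _ = ‖(F y * starRingEnd ℂ (h y) - G y) * h y‖ := by ring_nf
    _ = _ := by rw [norm_mul, hh, mul_one]

theorem tendsto_integral_fourier_mul [IsFiniteMeasure μ] (hm : AEStronglyMeasurable h μ)
    (hh : ∀ y, ‖h y‖ = 1) (hz : ∀ n : ℕ, N ≤ n → ∫ y, fourier (-n : ℤ) y * h y ∂μ = 0)
    {F : AddCircle T → ℂ} (hF : Integrable F μ) :
    Tendsto (fun n : ℕ => ∫ y, fourier (n : ℤ) y * F y ∂μ) atTop (𝓝 0) := by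
  have hlim := (Complex.continuous_conj.tendsto 0).comp <|
    tendsto_integral_fourier_neg_mul hm hh hz (F := fun y => starRingEnd ℂ (F y))
      (Complex.conjCLE.integrable_comp_iff.2 hF)
  simpa only [Function.comp_def, ← integral_conj, map_mul, fourier_neg, Complex.conj_conj,
    map_zero] using hlim

end

theorem tendsto_setIntegral_Ioc_fourier_mul {m : Measure ℝ} [IsFiniteMeasure m] {A : ℝ}
    {h : ℝ → ℂ} (hm : Measurable h) (hh : ∀ x, ‖h x‖ = 1) {N : ℕ}
    (hz : ∀ n : ℕ, N ≤ n →
      ∫ x in Ioc A (A + T), fourier (-n : ℤ) (x : AddCircle T) * h x ∂m = 0)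
    {F : ℝ → ℂ} (hF : IntegrableOn F (Ioc A (A + T)) m) :
    Tendsto (fun n : ℕ => ∫ x in Ioc A (A + T), fourier (n : ℤ) (x : AddCircle T) * F x ∂m)
      atTop (𝓝 0) := by
  let e := (AddCircle.measurableEquivIoc T A).symm
  let μ := (m.comap ((↑) : Ioc A (A + T) → ℝ)).map e
  have hintegral : ∀ (k : ℤ) (f : ℝ → ℂ), ∫ y, fourier k y * f (e.symm y) ∂μ =
      ∫ x in Ioc A (A + T), fourier k (x : AddCircle T) * f x ∂m := fun k f => by
    rw [integral_map_equiv, ← integral_subtype_comap measurableSet_Ioc]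
    simp only [MeasurableEquiv.symm_apply_apply]
    rfl
  simp only [← hintegral] at hz ⊢
  refine tendsto_integral_fourier_mul
    (hm.comp (measurable_subtype_coe.comp e.symm.measurable)).aestronglyMeasurable
    (fun _ => hh _) hz ((integrable_map_equiv e _).2 ?_)
  simpa only [Function.comp_def, MeasurableEquiv.symm_apply_apply] using
    (integrableOn_iff_comap_subtypeVal measurableSet_Ioc).1 hF

end AddCircle

theorem fourier_coe_two_pi (n : ℤ) (x : ℝ) :
    fourier n (x : AddCircle (2 * Real.pi)) = Complex.exp (Complex.I * n * x) := by
  have hpi : (Real.pi : ℂ) ≠ 0 := Complex.ofReal_ne_zero.2 Real.pi_ne_zero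
  rw [fourier_coe_apply]
  push_cast
  field_simp

theorem IsExteriorParam.intervalIntegral_fourier_neg_mul_eq_zero {Γ : Set ℂ} {φ ψ : ℂ → ℂ}
    {c : ℝ} (hψ : IsExteriorParam Γ φ ψ) (hφ : IsExteriorMap Γ φ c) {n : ℕ} (hn : 2 ≤ n) (A : ℝ) :
    ∫ x in A..A + 2 * Real.pi,
      fourier (-n : ℤ) (x : AddCircle (2 * Real.pi)) * boundaryParam ψ x = 0 := by
  have hper : Function.Periodic (fun x : ℝ =>
      fourier (-n : ℤ) (x : AddCircle (2 * Real.pi)) * boundaryParam ψ x) (2 * Real.pi) :=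
    fun x => by
      simp only [AddCircle.coe_add_period, periodic_boundaryParam ψ x]
  have hcircle := hψ.circleIntegral_inv_pow_mul_eq_zero hφ (n := n + 1) (by omega)
  rw [circleIntegral] at hcircle
  rw [hper.intervalIntegral_add_eq A 0, zero_add, ← mul_right_inj' Complex.I_ne_zero, mul_zero,
    ← hcircle, ← intervalIntegral.integral_const_mul]
  refine intervalIntegral.integral_congr fun x _ => ?_
  simp only [deriv_circleMap, smul_eq_mul, circleMap_zero_one, boundaryParam, fourier_coe_two_pi]
  have hinv : Complex.exp (Complex.I * (-n : ℤ) * x) = (Complex.exp (Complex.I * x) ^ n)⁻¹ := by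
    rw [← Complex.exp_nat_mul, ← Complex.exp_neg]
    push_cast
    ring_nf
  rw [hinv, pow_succ]
  have := Complex.exp_ne_zero (Complex.I * x)
  field_simp

theorem IsExteriorParam.setIntegral_fourier_neg_mul_eq_zero {Γ : Set ℂ} {φ ψ : ℂ → ℂ} {c : ℝ}
    (hψ : IsExteriorParam Γ φ ψ) (hφ : IsExteriorMap Γ φ c) {m : Measure ℝ} [NullSingletonClass m]
    {h : ℝ → ℂ} {A : ℝ} (hh : HasStieltjesDensity (boundaryParam ψ) h m A (A + 2 * Real.pi))
    {n : ℕ} (hn : 2 ≤ n) :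
    ∫ x in Ioc A (A + 2 * Real.pi),
      fourier (-n : ℤ) (x : AddCircle (2 * Real.pi)) * h x ∂m = 0 := by
  have hA : A ≤ A + 2 * Real.pi := by linarith [Real.pi_pos]
  have hparts := HasStieltjesDensity.integral_mul_add_integral_mul hA hh <|
    .of_hasDerivAt (fun t => hasDerivAt_fourier_neg (2 * Real.pi) n t)
      (by fun_prop) A (A + 2 * Real.pi)
  have hg : boundaryParam ψ (A + 2 * Real.pi) = boundaryParam ψ A := periodic_boundaryParam ψ A
  have hzero := hψ.intervalIntegral_fourier_neg_mul_eq_zero hφ hn A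
  simp only [mul_left_comm (boundaryParam ψ _), mul_comm (boundaryParam ψ _) (fourier _ _)]
    at hparts
  rwa [intervalIntegral.integral_const_mul, hzero, mul_zero, add_zero, AddCircle.coe_add_period, hg,
    sub_self, intervalIntegral.integral_of_le hA] at hparts

/-! ### Secant arguments -/

theorem tendstoUniformlyOn_integral_mul {α X ι 𝕜 : Type*} [RCLike 𝕜] [TopologicalSpace X]
    {_ : MeasurableSpace α} {μ : Measure α} {l : Filter ι} {K : Set X} (hK : IsCompact K)
    {e : ι → α → 𝕜} (he : ∀ i, AEStronglyMeasurable (e i) μ) (hb : ∀ i x, ‖e i x‖ ≤ 1)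
    {F : X → α → 𝕜} (hF : ∀ p ∈ K, Integrable (F p) μ)
    (hcont : ∀ p ∈ K, Tendsto (fun q => ∫ x, ‖F q x - F p x‖ ∂μ) (𝓝[K] p) (𝓝 0))
    (hlim : ∀ p ∈ K, Tendsto (fun i => ∫ x, e i x * F p x ∂μ) l (𝓝 0)) :
    TendstoUniformlyOn (fun i p => ∫ x, e i x * F p x ∂μ) 0 l K := by
  rw [← tendstoLocallyUniformlyOn_iff_tendstoUniformlyOn_of_compact hK,
    Metric.tendstoLocallyUniformlyOn_iff]
  intro ε hε p hp
  refine ⟨_, inter_mem self_mem_nhdsWithin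
    ((hcont p hp).eventually (gt_mem_nhds (half_pos hε))), ?_⟩
  filter_upwards [Metric.tendsto_nhds.1 (hlim p hp) (ε / 2) (half_pos hε)] with i hi q ⟨hq, hqp⟩
  rw [Pi.zero_apply, dist_zero_left]
  rw [dist_zero_right] at hi
  linarith [norm_sub_norm_le (∫ x, e i x * F q x ∂μ) (∫ x, e i x * F p x ∂μ),
    norm_integral_mul_sub_integral_mul_le (he i) (hb i) (hF q hq) (hF p hp),
    show ∫ x, ‖F q x - F p x‖ ∂μ < ε / 2 from hqp]

theorem tendsto_iSup_norm_of_tendstoUniformlyOn {X ι E : Type*} [SeminormedAddCommGroup E]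
    {l : Filter ι} {s : Set X} {f : ι → X → E} (hf : TendstoUniformlyOn f 0 l s) :
    Tendsto (fun i => ⨆ p : s, ‖f i p‖) l (𝓝 0) := by
  refine Metric.tendsto_nhds.2 fun ε hε => ?_
  filter_upwards [Metric.tendstoUniformlyOn_iff.1 hf (ε / 2) (half_pos hε)] with i hi
  rw [dist_zero_right, Real.norm_of_nonneg (Real.iSup_nonneg fun _ => norm_nonneg _)]
  refine (Real.iSup_le (fun p => ?_) (half_pos hε).le).trans_lt (half_lt_self hε)
  simpa only [Pi.zero_apply, dist_zero_left] using (hi p p.2).le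

/-- The density with respect to `m` of the argument of `g - g θ`, where `h` is the density of `dg`,
cut off to the parameters at distance at least `δ` from `θ` modulo `2π`. -/
def secantDensity (g h : ℝ → ℂ) (δ θ : ℝ) : ℝ → ℝ :=
  (Ioc (θ + δ) (θ - δ + 2 * Real.pi)).indicator fun x => ((g x - g θ)⁻¹ * h x).im

section SecantDensity

variable {g h : ℝ → ℂ} {δ : ℝ}

theorem measurable_secantDensity (hg : Continuous g) (hh : Measurable h) (δ θ : ℝ) :
    Measurable (secantDensity g h δ θ) :=
  (Complex.measurable_im.comp ((hg.measurable.sub_const _).inv.mul hh)).indicator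
    measurableSet_Ioc

theorem exists_abs_secantDensity_le (hg : Continuous g)
    (hne : ∀ θ, ∀ t ∈ Icc (θ + δ) (θ - δ + 2 * Real.pi), g t - g θ ≠ 0) (hh : ∀ x, ‖h x‖ = 1)
    {K : Set ℝ} (hK : IsCompact K) : ∃ C, ∀ θ ∈ K, ∀ x, |secantDensity g h δ θ x| ≤ C := by
  have hcont : ContinuousOn (fun p : ℝ × ℝ => (g (p.1 + p.2) - g p.1)⁻¹)
      (K ×ˢ Icc δ (2 * Real.pi - δ)) :=
    ContinuousOn.inv₀ (by fun_prop) fun ⟨θ, u⟩ ⟨_, hu⟩ =>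
      hne θ (θ + u) ⟨by linarith [hu.1], by linarith [hu.2]⟩
  obtain ⟨C, hC⟩ := (hK.prod isCompact_Icc).exists_bound_of_continuousOn hcont
  refine ⟨max C 0, fun θ hθ x => ?_⟩
  by_cases hx : x ∈ Ioc (θ + δ) (θ - δ + 2 * Real.pi)
  · have hbound : ‖(g x - g θ)⁻¹‖ ≤ C := by
      simpa only [add_sub_cancel] using
        hC (θ, x - θ) ⟨hθ, by linarith [hx.1], by linarith [hx.2]⟩
    rw [secantDensity, indicator_of_mem hx]
    refine (Complex.abs_im_le_norm _).trans ?_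
    rw [norm_mul, hh, mul_one]
    exact hbound.trans (le_max_left _ _)
  · rw [secantDensity, indicator_of_notMem hx, abs_zero]
    exact le_max_right _ _

theorem continuousAt_secantDensity (hg : Continuous g)
    (hne : ∀ θ, ∀ t ∈ Icc (θ + δ) (θ - δ + 2 * Real.pi), g t - g θ ≠ 0) {θ x : ℝ}
    (hl : x ≠ θ + δ) (hr : x ≠ θ - δ + 2 * Real.pi) :
    ContinuousAt (fun θ => secantDensity g h δ θ x) θ := by
  let S := Ico (x + δ - 2 * Real.pi) (x - δ)
  have hmem : ∀ θ, x ∈ Ioc (θ + δ) (θ - δ + 2 * Real.pi) ↔ θ ∈ S := fun θ =>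
    ⟨fun hx => ⟨by linarith [hx.2], by linarith [hx.1]⟩,
      fun hx => ⟨by linarith [hx.2], by linarith [hx.1]⟩⟩
  have hindicator : (fun θ => secantDensity g h δ θ x) =
      S.indicator fun θ => ((g x - g θ)⁻¹ * h x).im := by
    ext θ
    simp only [secantDensity, indicator_apply, hmem]
  rw [hindicator]
  refine ContinuousOn.continuousAt_indicator ?_ fun hθ => ?_
  · refine Complex.continuous_im.comp_continuousOn (.mul (.inv₀ (by fun_prop) fun θ hθ => ?_)
      continuousOn_const)
    exact hne θ x (Ioc_subset_Icc_self ((hmem θ).2 (interior_subset hθ)))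
  · have hlt : x + δ - 2 * Real.pi < x - δ := by
      by_contra! hle
      simp [S, Ico_eq_empty_of_le hle] at hθ
    rw [frontier_Ico hlt] at hθ
    rcases hθ with rfl | rfl
    · exact hr (by ring)
    · exact hl (by ring)

theorem tendsto_integral_norm_secantDensity_sub {m : Measure ℝ} [IsFiniteMeasure m]
    [NullSingletonClass m] (hg : Continuous g)
    (hne : ∀ θ, ∀ t ∈ Icc (θ + δ) (θ - δ + 2 * Real.pi), g t - g θ ≠ 0) (hm : Measurable h)
    (hh : ∀ x, ‖h x‖ = 1) {K : Set ℝ} (hK : IsCompact K) {θ₀ : ℝ} (hθ₀ : θ₀ ∈ K) :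
    Tendsto (fun θ => ∫ x, |secantDensity g h δ θ x - secantDensity g h δ θ₀ x| ∂m)
      (𝓝[K] θ₀) (𝓝 0) := by
  obtain ⟨C, hC⟩ := exists_abs_secantDensity_le hg hne hh hK
  have hWm := measurable_secantDensity hg hm δ
  rw [← integral_zero ℝ ℝ (μ := m)]
  refine tendsto_integral_filter_of_dominated_convergence (fun _ => C + C)
    (.of_forall fun θ => ((hWm θ).sub (hWm θ₀)).abs.aestronglyMeasurable) ?_
    (integrable_const _) ?_
  · filter_upwards [self_mem_nhdsWithin] with θ hθ
    refine .of_forall fun x => ?_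
    rw [Real.norm_eq_abs, abs_abs]
    exact (abs_sub _ _).trans (add_le_add (hC θ hθ x) (hC θ₀ hθ₀ x))
  · filter_upwards [compl_mem_ae_iff.2 (measure_singleton (θ₀ + δ)),
      compl_mem_ae_iff.2 (measure_singleton (θ₀ - δ + 2 * Real.pi))] with x hl hr
    have hlim := (continuousAt_secantDensity (h := h) hg hne hl hr).tendsto.sub_const
      (secantDensity g h δ θ₀ x)
    simpa only [sub_self, abs_zero] using hlim.abs.mono_left nhdsWithin_le_nhds

end SecantDensity

theorem IsExteriorParam.boundaryParam_sub_ne_zero {Γ : Set ℂ} {φ ψ : ℂ → ℂ}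
    (hψ : IsExteriorParam Γ φ ψ) {δ : ℝ} (hδ : 0 < δ) (θ : ℝ) {t : ℝ}
    (ht : t ∈ Icc (θ + δ) (θ - δ + 2 * Real.pi)) : boundaryParam ψ t - boundaryParam ψ θ ≠ 0 := by
  rw [sub_ne_zero, (hψ.injOn_boundaryParam (θ - δ)).ne_iff ⟨by linarith [ht.1], ht.2⟩
    ⟨by linarith, by linarith [ht.1, ht.2]⟩]
  linarith [ht.1]

theorem IsExteriorParam.tendsto_integral_exp_mul_secantDensity {Γ : Set ℂ} {φ ψ : ℂ → ℂ} {c : ℝ}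
    (hψ : IsExteriorParam Γ φ ψ) (hφ : IsExteriorMap Γ φ c) {m : Measure ℝ} [IsFiniteMeasure m]
    [NullSingletonClass m] {h : ℝ → ℂ} (hm : Measurable h) (hh : ∀ x, ‖h x‖ = 1) {θ : ℝ}
    (hg : HasStieltjesDensity (boundaryParam ψ) h m θ (θ + 2 * Real.pi)) {δ : ℝ} (hδ : 0 < δ)
    (hi : Integrable (secantDensity (boundaryParam ψ) h δ θ) m) :
    Tendsto (fun n : ℕ => ∫ x, Complex.exp (Complex.I * n * x) *
      (secantDensity (boundaryParam ψ) h δ θ x : ℂ) ∂m) atTop (𝓝 0) := by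
  have : Fact (0 < 2 * Real.pi) := ⟨Real.two_pi_pos⟩
  have hsub : Ioc (θ + δ) (θ - δ + 2 * Real.pi) ⊆ Ioc θ (θ + 2 * Real.pi) :=
    Ioc_subset_Ioc (by linarith) (by linarith)
  refine (tendsto_setIntegral_Ioc_fourier_mul hm hh
    (fun n hn => hψ.setIntegral_fourier_neg_mul_eq_zero hφ hg hn) hi.ofReal.integrableOn).congr
    fun n => ?_
  simp only [fourier_coe_two_pi, Int.cast_natCast]
  refine setIntegral_eq_integral_of_forall_compl_eq_zero fun x hx => ?_
  rw [secantDensity, indicator_of_notMem fun hx' => hx (hsub hx'), RCLike.ofReal_zero, mul_zero]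

theorem norm_exp_I_mul_natCast_mul (n : ℕ) (x : ℝ) : ‖Complex.exp (Complex.I * n * x)‖ = 1 := by
  simpa only [mul_assoc, Complex.ofReal_mul, Complex.ofReal_natCast] using
    Complex.norm_exp_I_mul_ofReal (n * x)

theorem IsExteriorParam.tendstoUniformlyOn_integral_exp_mul_secantDensity {Γ : Set ℂ}
    {φ ψ : ℂ → ℂ} {c : ℝ} (hψ : IsExteriorParam Γ φ ψ) (hφ : IsExteriorMap Γ φ c)
    {m : Measure ℝ} [IsFiniteMeasure m] [NullSingletonClass m] {h : ℝ → ℂ} (hm : Measurable h)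
    (hh : ∀ x, ‖h x‖ = 1) (hg : HasStieltjesDensity (boundaryParam ψ) h m 0 (4 * Real.pi))
    {δ : ℝ} (hδ : 0 < δ) :
    TendstoUniformlyOn (fun (n : ℕ) θ => ∫ x, Complex.exp (Complex.I * n * x) *
      (secantDensity (boundaryParam ψ) h δ θ x : ℂ) ∂m) 0 atTop (Icc 0 (2 * Real.pi)) := by
  have hgc := hψ.continuous_boundaryParam
  have hne := fun θ t => hψ.boundaryParam_sub_ne_zero hδ θ (t := t)
  obtain ⟨C, hC⟩ := exists_abs_secantDensity_le hgc hne hh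
    (isCompact_Icc (a := (0 : ℝ)) (b := 2 * Real.pi))
  have hi : ∀ θ ∈ Icc 0 (2 * Real.pi), Integrable (secantDensity (boundaryParam ψ) h δ θ) m :=
    fun θ hθ => .of_bound (measurable_secantDensity hgc hm δ θ).aestronglyMeasurable C
      (.of_forall (hC θ hθ))
  refine tendstoUniformlyOn_integral_mul isCompact_Icc
    (fun n => Continuous.aestronglyMeasurable (by fun_prop))
    (fun n x => (norm_exp_I_mul_natCast_mul n x).le) (fun θ hθ => (hi θ hθ).ofReal)
    (fun θ hθ => ?_) fun θ hθ => hψ.tendsto_integral_exp_mul_secantDensity hφ hm hh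
      (hg.mono hθ.1 (by linarith [hθ.2])) hδ (hi θ hθ)
  simpa only [← Complex.ofReal_sub, Complex.norm_real, Real.norm_eq_abs] using
    tendsto_integral_norm_secantDensity_sub hgc hne hm hh isCompact_Icc hθ

section SecantArg

variable {Γ : Set ℂ} {φ ψ : ℂ → ℂ} {θ δ : ℝ} {v : ℝ → ℝ}

theorem IsSecantArg.exp_log_norm_add_I_mul {α t : ℝ} (hv : IsSecantArg ψ θ α v)
    (ht : t ∈ Icc α (α + 2 * Real.pi)) (htθ : t ≠ θ)
    (hne : boundaryParam ψ t - boundaryParam ψ θ ≠ 0) :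
    Complex.exp (Real.log ‖boundaryParam ψ t - boundaryParam ψ θ‖ + Complex.I * v t) =
      boundaryParam ψ t - boundaryParam ψ θ := by
  rw [Complex.exp_add, hv.branch t ht htθ, ← Complex.ofReal_exp,
    Real.exp_log (norm_pos_iff.2 hne)]
  exact mul_div_cancel₀ _ (Complex.ofReal_ne_zero.2 (norm_ne_zero_iff.2 hne))

variable {m : Measure ℝ} {h : ℝ → ℂ}

theorem IsExteriorParam.integrableOn_inv_boundaryParam_sub_mul (hψ : IsExteriorParam Γ φ ψ)
    (hδ : 0 < δ) (hh : IntegrableOn h (Ioc (θ + δ) (θ - δ + 2 * Real.pi)) m) :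
    IntegrableOn (fun x => (boundaryParam ψ x - boundaryParam ψ θ)⁻¹ * h x)
      (Ioc (θ + δ) (θ - δ + 2 * Real.pi)) m :=
  hh.continuousOn_mul_of_subset
    ((hψ.continuous_boundaryParam.sub continuous_const).continuousOn.inv₀
      fun _ ht => hψ.boundaryParam_sub_ne_zero hδ θ ht)
    isCompact_Icc measurableSet_Ioc Ioc_subset_Icc_self

theorem IsSecantArg.setIntegral_im_inv_mul_eq_sub (hv : IsSecantArg ψ θ (θ - δ) v)
    (hψ : IsExteriorParam Γ φ ψ) [NullSingletonClass m]
    (hh : HasStieltjesDensity (boundaryParam ψ) h m (θ + δ) (θ - δ + 2 * Real.pi)) {s t : ℝ}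
    (hs : s ∈ Icc (θ + δ) (θ - δ + 2 * Real.pi)) (ht : t ∈ Icc (θ + δ) (θ - δ + 2 * Real.pi))
    (hst : s ≤ t) :
    ∫ x in Ioc s t, ((boundaryParam ψ x - boundaryParam ψ θ)⁻¹ * h x).im ∂m = v t - v s := by
  have hδ : 0 < δ := by linarith [hv.hα]
  have hsub : Icc s t ⊆ Icc (θ + δ) (θ - δ + 2 * Real.pi) := Icc_subset_Icc hs.1 ht.2
  have hne : ∀ x ∈ Icc s t, boundaryParam ψ x - boundaryParam ψ θ ≠ 0 := fun x hx =>
    hψ.boundaryParam_sub_ne_zero hδ θ (hsub hx)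
  have hL : ContinuousOn (fun x : ℝ => (Real.log ‖boundaryParam ψ x - boundaryParam ψ θ‖ : ℂ) +
      Complex.I * v x) (Icc s t) := by
    refine .add (Complex.continuous_ofReal.comp_continuousOn (.log ?_ fun x hx =>
      norm_ne_zero_iff.2 (hne x hx))) (continuousOn_const.mul
        (Complex.continuous_ofReal.comp_continuousOn (hv.contAfter.mono fun x hx =>
          ⟨by linarith [hx.1, hs.1], (hsub hx).2⟩)))
    exact (hψ.continuous_boundaryParam.sub continuous_const).norm.continuousOn
  have hlog := ((hh.mono hs.1 ht.2).sub_const (boundaryParam ψ θ)).integral_inv_mul_eq_sub hst hL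
    fun x hx => hv.exp_log_norm_add_I_mul ⟨by linarith [(hsub hx).1], (hsub hx).2⟩
      (by linarith [(hsub hx).1]) (hne x hx)
  have him := integral_im ((hψ.integrableOn_inv_boundaryParam_sub_mul hδ hh.integrableOn).mono_set
    (Ioc_subset_Ioc hs.1 ht.2))
  rw [intervalIntegral.integral_of_le hst] at hlog
  rw [hlog] at him
  simpa using him

theorem IsSecantArg.setIntegral_sub_setIntegral_eq (hv : IsSecantArg ψ θ (θ - δ) v)
    {μ ν : Measure ℝ} (hμν : IsLSPair v (θ - δ) (θ - δ + 2 * Real.pi) μ ν)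
    (hψ : IsExteriorParam Γ φ ψ) [NullSingletonClass m]
    (hh : HasStieltjesDensity (boundaryParam ψ) h m (θ + δ) (θ - δ + 2 * Real.pi)) {f : ℝ → ℂ}
    {C : ℝ} (hf : StronglyMeasurable f) (hC : ∀ x, ‖f x‖ ≤ C) :
    (∫ x in Ioc (θ + δ) (θ - δ + 2 * Real.pi), f x ∂μ) -
        ∫ x in Ioc (θ + δ) (θ - δ + 2 * Real.pi), f x ∂ν =
      ∫ x, f x * (secantDensity (boundaryParam ψ) h δ θ x : ℂ) ∂m := by
  have hδ : 0 < δ := by linarith [hv.hα]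
  have := hμν.finp
  have := hμν.finn
  rw [setIntegral_Ioc_sub_setIntegral_Ioc_eq
    (hψ.integrableOn_inv_boundaryParam_sub_mul hδ hh.integrableOn).im ?_ hf hC,
    ← integral_indicator measurableSet_Ioc]
  · refine integral_congr_ae (.of_forall fun x => ?_)
    simp only [secantDensity, indicator_apply]
    split_ifs <;> simp [mul_comm]
  · intro s hs t ht hst
    exact (hμν.incr s t (by linarith [hs.1]) hst ht.2).trans
      (hv.setIntegral_im_inv_mul_eq_sub hψ hh hs ht hst).symm

end SecantArg

theorem secant_integral_tail_uniformly_vanishes_general {Γ : Set ℂ} {φ ψ : ℂ → ℂ} {c : ℝ}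
    (hΓ : μH[1] Γ ≠ ∞) (hφ : IsExteriorMap Γ φ c) (hψ : IsExteriorParam Γ φ ψ) {δ : ℝ}
    {v : ℝ → ℝ → ℝ} {μp μn : ℝ → Measure ℝ}
    (H : ∀ θ ∈ Ico 0 (2 * Real.pi), IsSecantArg ψ θ (θ - δ) (v θ) ∧
      IsLSPair (v θ) (θ - δ) (θ - δ + 2 * Real.pi) (μp θ) (μn θ)) :
    Tendsto (fun n : ℕ => ⨆ θ : Ico (0 : ℝ) (2 * Real.pi),
        ‖(∫ t in Ioc ((θ : ℝ) + δ) ((θ : ℝ) - δ + 2 * Real.pi),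
            Complex.exp (Complex.I * n * t) ∂μp θ) -
          ∫ t in Ioc ((θ : ℝ) + δ) ((θ : ℝ) - δ + 2 * Real.pi),
            Complex.exp (Complex.I * n * t) ∂μn θ‖) atTop (𝓝 0) := by
  have hδ : 0 < δ := by linarith [(H 0 ⟨le_rfl, Real.two_pi_pos⟩).1.hα]
  obtain ⟨m, h, _, _, hm, hh, hg⟩ := exists_hasStieltjesDensity_norm_eq_one
    (by positivity) hψ.continuous_boundaryParam.continuousOn
    (hψ.boundedVariationOn_boundaryParam hΓ)
  refine (tendsto_iSup_norm_of_tendstoUniformlyOn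
    ((hψ.tendstoUniformlyOn_integral_exp_mul_secantDensity hφ hm hh hg hδ).mono
      Ico_subset_Icc_self)).congr fun n => iSup_congr fun θ => congrArg _ (Eq.symm ?_)
  obtain ⟨hv, hμν⟩ := H θ θ.2
  exact hv.setIntegral_sub_setIntegral_eq hμν hψ
    (hg.mono (by linarith [θ.2.1]) (by linarith [θ.2.2]))
    (Continuous.stronglyMeasurable (by fun_prop)) fun x => (norm_exp_I_mul_natCast_mul n x).le

/-- Let `Γ` be a piecewise Dini-smooth Jordan curve. For every sufficiently
small `δ > 0`, `lim_{n→∞} sup_{θ∈[0,2π)} |∫_{θ+δ}^{θ−δ+2π} e^{int} dv_θ(t)| = 0`, where for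
each `θ`, `v_θ` is a secant-argument function of `Γ` on `[θ−δ, θ−δ+2π]` whose
Lebesgue–Stieltjes measure is realized by the pair of finite measures `(μp θ, μn θ)`. -/
theorem secant_integral_tail_uniformly_vanishes
    (Γ : Set ℂ) (φ ψ : ℂ → ℂ) (c : ℝ)
    (hΓ : IsPiecewiseDiniSmoothJordanCurve Γ)
    (hφ : IsExteriorMap Γ φ c)
    (hψ : IsExteriorParam Γ φ ψ) :
    ∃ δ₀ : ℝ, 0 < δ₀ ∧ ∀ δ : ℝ, 0 < δ → δ < δ₀ →
      ∀ (v : ℝ → ℝ → ℝ) (μp μn : ℝ → MeasureTheory.Measure ℝ),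
        (∀ θ : ℝ, IsSecantArg ψ θ (θ - δ) (v θ) ∧
          IsLSPair (v θ) (θ - δ) (θ - δ + 2 * Real.pi) (μp θ) (μn θ)) →
        Filter.Tendsto
          (fun n : ℕ =>
            ⨆ θ : Set.Ico (0 : ℝ) (2 * Real.pi),
              ‖(∫ t in Set.Ioc ((θ : ℝ) + δ) ((θ : ℝ) - δ + 2 * Real.pi),
                    Complex.exp (Complex.I * (n : ℂ) * (t : ℂ)) ∂(μp (θ : ℝ)))
                - ∫ t in Set.Ioc ((θ : ℝ) + δ) ((θ : ℝ) - δ + 2 * Real.pi),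
                    Complex.exp (Complex.I * (n : ℂ) * (t : ℂ)) ∂(μn (θ : ℝ))‖)
          Filter.atTop (nhds 0) := by
  exact ⟨Real.pi, Real.pi_pos, fun _ _ _ _ _ _ H =>
    secant_integral_tail_uniformly_vanishes_general hΓ.hausdorffMeasure_ne_top hφ hψ
      fun θ _ => H θ⟩

end
end

section
/- Let Γ be a piecewise Dini-smooth Jordan curve with corners z_k = ψ(e^{iθ_k}), k = 1,…,l, and let Θ_Γ := {θ_k + 2πj : 1≤k≤l, j ∈ ℤ}. For every ε > 0 there exists δ > 0 (small enough that each interval (θ−δ, θ+δ) contains at most one point of Θ_Γ) such that for every θ: if (θ−δ, θ+δ) ∩ Θ_Γ = ∅ then (1/π) ∫_{θ−δ}^{θ+δ} |dv_θ(t)| ≤ 1 + ε, while if (θ−δ, θ+δ) ∩ Θ_Γ ≠ ∅ then (1/π) ∫_{θ−δ}^{θ+δ} |dv_θ(t)| ≤ 2 + ε. -/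
open Filter Topology MeasureTheory Set

noncomputable section

/-!
The variation of a branch `v` of `arg (γ - p)` along a smooth arc is `∫ |Im (γ' / (γ - p))|`.
On a short arc the tangent is nearly a constant unit vector `e`. Let `γ s₀` be the point of the arc
whose projection to `ℝ e` is nearest to that of `p`, and `d = |γ s₀ - p|`. The integrand is then at
most about `d / ((s - s₀)² + d²)`, whose integral over the line is `π`, plus
`ω(|s - s₀|) / |s - s₀|`, whose integral is small by the Dini condition. If `p` lies on the arc one
takes `γ s₀ = p`, and only the second term is left. So every short subarc of a Dini-smooth arc is
seen under total angle at most `π + ε`, and at most `ε` from one of its own points.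

On either side of every boundary parameter the curve is locally such a subarc. Where the exterior
angle is `π` the two one-sided tangents agree and the two sides belong to one short subarc. A window
around `θ` that meets no corner therefore contributes the jump `π` of `v_θ` and a small remainder. A
window with a corner contributes either the jump at the corner itself, at most `2π`, or the jump `π`
at `θ` and an angle of at most `π` from the piece beyond the corner. The scale `δ` is uniform by
periodicity and compactness.
-/

/-! ### Total variation -/

theorem eVariationOn_Ioo_le_lintegral {E : Type*} [NormedAddCommGroup E] [NormedSpace ℝ E]
    [CompleteSpace E] {f f' : ℝ → E} {a b : ℝ} (hf : ∀ s ∈ Ioo a b, HasDerivAt f (f' s) s)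
    (hf' : ContinuousOn f' (Ioo a b)) :
    eVariationOn f (Ioo a b) ≤ ∫⁻ s in Ioo a b, ‖f' s‖ₑ := by
  refine iSup_le fun ⟨n, p, hp, hmem⟩ => ?_
  have hsub (i : ℕ) : Icc (p i) (p (i + 1)) ⊆ Ioo a b :=
    ordConnected_Ioo.out (hmem i) (hmem (i + 1))
  have hstep (i : ℕ) : edist (f (p (i + 1))) (f (p i)) ≤
      ∫⁻ s in Ioc (p i) (p (Order.succ i)), ‖f' s‖ₑ := by
    have hle : p i ≤ p (i + 1) := hp i.le_succ
    have hsub' : uIcc (p i) (p (i + 1)) ⊆ Ioo a b := uIcc_of_le hle ▸ hsub i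
    rw [edist_eq_enorm_sub, ← intervalIntegral.integral_eq_sub_of_hasDerivAt
      (fun s hs => hf s (hsub' hs)) (hf'.mono hsub').intervalIntegrable,
      intervalIntegral.integral_of_le hle]
    exact enorm_integral_le_lintegral_enorm _
  calc ∑ i ∈ Finset.range n, edist (f (p (i + 1))) (f (p i))
      ≤ ∑ i ∈ Finset.range n, ∫⁻ s in Ioc (p i) (p (Order.succ i)), ‖f' s‖ₑ :=
        Finset.sum_le_sum fun i _ => hstep i
    _ = ∫⁻ s in ⋃ i ∈ Finset.range n, Ioc (p i) (p (Order.succ i)), ‖f' s‖ₑ :=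
        (lintegral_biUnion_finset (hp.pairwise_disjoint_on_Ioc_succ.set_pairwise _)
          (fun _ _ => measurableSet_Ioc) _).symm
    _ ≤ ∫⁻ s in Ioo a b, ‖f' s‖ₑ :=
        lintegral_mono_set <| iUnion₂_subset fun i _ => Ioc_subset_Icc_self.trans (hsub i)

section LinearOrder

variable {α E : Type*} [LinearOrder α] [DenselyOrdered α] [TopologicalSpace α] [OrderTopology α]
  [PseudoEMetricSpace E] {f : α → E} {x y : α}

theorem eVariationOn_Icc_eq_Ioo_add_edist {L : E} (hxy : x < y)
    (hx : ContinuousWithinAt f (Ici x) x) (hy : Tendsto f (𝓝[<] y) (𝓝 L)) :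
    eVariationOn f (Icc x y) = eVariationOn f (Ioo x y) + edist (f y) L := by
  have hnhds : 𝓝[Ioi x ∩ Iio y] y = 𝓝[<] y := nhdsWithin_Ioo_eq_nhdsLT hxy
  have : (𝓝[<] y).NeBot := nhdsLT_neBot_of_exists_lt ⟨x, hxy⟩
  rw [← eVariationOn.eVariationOn_Ioc_eq_Icc_of_continuousWithinAt hx]
  exact eVariationOn.eVariationOn_on_inter_Iic_eq_Iio_add_edist (s := Ioi x)
    (by rwa [hnhds]) hxy (by rwa [hnhds])

theorem eVariationOn_Icc_eq_Ioo (hxy : x < y) (hx : ContinuousWithinAt f (Ici x) x)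
    (hy : ContinuousWithinAt f (Iic y) y) :
    eVariationOn f (Icc x y) = eVariationOn f (Ioo x y) := by
  rw [eVariationOn_Icc_eq_Ioo_add_edist hxy hx (hy.mono Iio_subset_Iic_self), edist_self, add_zero]

theorem eVariationOn_Ioo_eq_add {τ : α} (hτ : τ ∈ Ioo x y) (hf : ContinuousAt f τ) :
    eVariationOn f (Ioo x y) = eVariationOn f (Ioo x τ) + eVariationOn f (Ioo τ y) := by
  have hleft : 𝓝[Ioi x ∩ Iio τ] τ = 𝓝[<] τ := nhdsWithin_Ioo_eq_nhdsLT hτ.1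
  have hright : 𝓝[Iio y ∩ Ioi τ] τ = 𝓝[>] τ := by
    rw [inter_comm]; exact nhdsWithin_Ioo_eq_nhdsGT hτ.2
  have h₁ := eVariationOn.eVariationOn_inter_Iio_eq_inter_Iic_of_continuousWithinAt (f := f)
    (s := Ioi x) (by rw [hleft]; exact nhdsLT_neBot_of_exists_lt ⟨x, hτ.1⟩) hf.continuousWithinAt
  have h₂ := eVariationOn.eVariationOn_inter_Ioi_eq_inter_Ici_of_continuousWithinAt (f := f)
    (s := Iio y) (by rw [hright]; exact nhdsGT_neBot_of_exists_gt ⟨y, hτ.2⟩) hf.continuousWithinAt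
  rw [inter_comm, Ioi_inter_Iio, inter_comm, Ici_inter_Iio] at h₂
  rw [Ioi_inter_Iio, Ioi_inter_Iic] at h₁
  rw [h₁, h₂, ← eVariationOn.union f (isGreatest_Ioc hτ.1) (isLeast_Ico hτ.2),
    Ioc_union_Ico_eq_Ioo hτ.1 hτ.2]

end LinearOrder

/-! ### Continuous branches of the argument -/

/-- `v` is a continuous branch of `arg f` on `s`. As `0 / 0 = 0` is not of the form `exp z`, this
forces `f` not to vanish on `s`. -/
def IsArgOn (f : ℝ → ℂ) (v : ℝ → ℝ) (s : Set ℝ) : Prop :=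
  ContinuousOn v s ∧ ∀ t ∈ s, Complex.exp (Complex.I * v t) = f t / ‖f t‖

namespace IsArgOn

variable {f f' : ℝ → ℂ} {v : ℝ → ℝ} {s : Set ℝ}

theorem ne_zero (h : IsArgOn f v s) {t : ℝ} (ht : t ∈ s) : f t ≠ 0 := by
  intro h0
  have := h.2 t ht
  rw [h0, zero_div] at this
  exact Complex.exp_ne_zero _ this

theorem mono {s' : Set ℝ} (h : IsArgOn f v s) (hs : s' ⊆ s) : IsArgOn f v s' :=
  ⟨h.1.mono hs, fun t ht => h.2 t (hs ht)⟩

theorem comp {σ : ℝ → ℝ} {s' : Set ℝ} (h : IsArgOn f v s) (hσ : ContinuousOn σ s')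
    (hs : MapsTo σ s' s) : IsArgOn (f ∘ σ) (v ∘ σ) s' :=
  ⟨h.1.comp hσ hs, fun t ht => h.2 (σ t) (hs ht)⟩

theorem div_eq (h : IsArgOn f v s) {t t' : ℝ} (ht : t ∈ s) (ht' : t' ∈ s) :
    f t / f t' = (‖f t‖ / ‖f t'‖ : ℝ) *
      (Complex.cos (v t - v t' : ℝ) + Complex.sin (v t - v t' : ℝ) * Complex.I) := by
  have hn : (‖f t‖ : ℂ) ≠ 0 := by simpa using h.ne_zero ht
  have hn' : (‖f t'‖ : ℂ) ≠ 0 := by simpa using h.ne_zero ht'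
  have harg : ((v t - v t' : ℝ) : ℂ) * Complex.I = Complex.I * v t - Complex.I * v t' := by
    push_cast; ring
  rw [← Complex.exp_mul_I, harg, Complex.exp_sub, h.2 t ht, h.2 t' ht']
  push_cast
  field_simp

theorem hasDerivAt (h : IsArgOn f v s) {t : ℝ} {d : ℂ} (hs : s ∈ 𝓝 t) (hf : HasDerivAt f d t) :
    HasDerivAt v (d / f t).im t := by
  have ht : t ∈ s := mem_of_mem_nhds hs
  have hlog : HasDerivAt (fun τ => Complex.log (f τ / f t)) (d / f t) t := by
    simpa [div_self (h.ne_zero ht)] using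
      (hf.div_const (f t)).clog_real (by simp [div_self (h.ne_zero ht)])
  have him := (Complex.imCLM.hasFDerivAt.comp_hasDerivAt t hlog).const_add (v t)
  refine him.congr_of_eventuallyEq ?_
  have hv : ContinuousAt v t := h.1.continuousAt hs
  filter_upwards [hs, hv.eventually (Metric.ball_mem_nhds (v t) Real.pi_pos)] with τ hτ hclose
  have hpos : 0 < ‖f τ‖ / ‖f t‖ :=
    div_pos (norm_pos_iff.2 (h.ne_zero hτ)) (norm_pos_iff.2 (h.ne_zero ht))
  obtain ⟨hlo, hhi⟩ := abs_lt.1 (by simpa [Real.dist_eq] using hclose)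
  simp [Complex.log_im, h.div_eq hτ ht, Complex.arg_mul_cos_add_sin_mul_I hpos ⟨hlo, hhi.le⟩,
    -Complex.ofReal_div, -Complex.ofReal_sub]

theorem eVariationOn_Ioo_le {a b : ℝ} (h : IsArgOn f v (Ioo a b))
    (hf : ∀ t ∈ Ioo a b, HasDerivAt f (f' t) t) (hf' : ContinuousOn f' (Ioo a b)) :
    eVariationOn v (Ioo a b) ≤ ∫⁻ t in Ioo a b, ‖(f' t / f t).im‖ₑ :=
  eVariationOn_Ioo_le_lintegral
    (fun t ht => h.hasDerivAt (Ioo_mem_nhds ht.1 ht.2) (hf t ht))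
    (Complex.continuous_im.comp_continuousOn <|
      hf'.div (fun t ht => (hf t ht).continuousAt.continuousWithinAt) fun _ ht => h.ne_zero ht)

end IsArgOn

/-! ### The Cauchy kernel bound for the logarithmic derivative -/

theorem abs_im_div_le (g z : ℂ) (u : ℝ) :
    |(g / z).im| ≤ ‖g‖ * ‖z - u • g‖ / ‖z‖ ^ 2 := by
  have him : (g / z).im = (g * (starRingEnd ℂ) (z - u • g)).im / ‖z‖ ^ 2 := by
    rw [Complex.div_im, ← Complex.normSq_eq_norm_sq]
    simp only [Complex.mul_im, Complex.conj_im, Complex.conj_re, Complex.sub_re, Complex.sub_im,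
      Complex.smul_re, Complex.smul_im, smul_eq_mul]
    ring
  rw [him, abs_div, abs_of_nonneg (sq_nonneg ‖z‖), ← Complex.norm_conj (z - u • g), ← norm_mul]
  gcongr
  exact Complex.abs_im_le_norm _

theorem mul_norm_sq_add_sq_le_norm_sq {E : Type*} [NormedAddCommGroup E] [InnerProductSpace ℝ E]
    {z z₀ e : E} {κ u : ℝ} (he : ‖e‖ = 1) (hκ₀ : 0 ≤ κ) (hκ₁ : κ ≤ 1)
    (hz : ‖z - z₀ - u • e‖ ≤ κ * |u|) (hu : 0 ≤ u * inner ℝ z₀ e) :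
    (1 - κ) ^ 2 * (‖z₀‖ ^ 2 + u ^ 2) ≤ ‖z‖ ^ 2 := by
  set m := √(‖z₀‖ ^ 2 + u ^ 2)
  have hm : m ^ 2 = ‖z₀‖ ^ 2 + u ^ 2 := Real.sq_sqrt (by positivity)
  have hum : |u| ≤ m := Real.abs_le_sqrt (by nlinarith [sq_nonneg ‖z₀‖])
  have hmid : m ≤ ‖z₀ + u • e‖ := by
    refine Real.sqrt_le_iff.2 ⟨norm_nonneg _, ?_⟩
    rw [norm_add_sq_real, inner_smul_right, norm_smul, he, mul_one, Real.norm_eq_abs, sq_abs]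
    linarith
  have htri : ‖z₀ + u • e‖ - ‖z - z₀ - u • e‖ ≤ ‖z‖ := by
    simpa [sub_sub, norm_sub_rev] using norm_sub_norm_le (z₀ + u • e) (z₀ + u • e - z)
  rw [← hm, ← mul_pow]
  refine pow_le_pow_left₀ (mul_nonneg (by linarith) (Real.sqrt_nonneg _)) ?_ 2
  nlinarith [mul_le_mul_of_nonneg_left hum hκ₀]

theorem abs_im_div_le_add {z z₀ e g : ℂ} {κ w u : ℝ} (he : ‖e‖ = 1) (hκ : κ < 1)
    (hge : ‖g - e‖ ≤ κ) (hze : ‖z - z₀ - u • e‖ ≤ κ * |u|) (hzg : ‖z - z₀ - u • g‖ ≤ w * |u|)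
    (hu : 0 ≤ u * inner ℝ z₀ e) :
    |(g / z).im| ≤ (1 + κ) / (1 - κ) ^ 2 * (‖z₀‖ / (u ^ 2 + ‖z₀‖ ^ 2) + w / |u|) := by
  have hκ₀ : 0 ≤ κ := (norm_nonneg _).trans hge
  have hg : ‖g‖ ≤ 1 + κ := by
    linarith [norm_le_norm_add_norm_sub' g e]
  have hnum : ‖z - u • g‖ ≤ ‖z₀‖ + w * |u| := by
    have := norm_add_le z₀ (z - z₀ - u • g)
    rw [show z₀ + (z - z₀ - u • g) = z - u • g by abel] at this
    linarith
  have hw : 0 ≤ w * |u| := (norm_nonneg _).trans hzg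
  rcases eq_or_ne (u ^ 2 + ‖z₀‖ ^ 2) 0 with h0 | h0
  · obtain ⟨rfl, hz₀⟩ : u = 0 ∧ ‖z₀‖ = 0 := by
      constructor <;> nlinarith [sq_nonneg u, sq_nonneg ‖z₀‖]
    have hz : z = 0 := by simpa [norm_eq_zero.1 hz₀] using hze
    simp [hz, hz₀]
  have hm : 0 < u ^ 2 + ‖z₀‖ ^ 2 := by positivity
  have hκ₁ : 0 < (1 - κ) ^ 2 := pow_pos (by linarith) 2
  have hden : (1 - κ) ^ 2 * (u ^ 2 + ‖z₀‖ ^ 2) ≤ ‖z‖ ^ 2 :=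
    add_comm (u ^ 2) _ ▸ mul_norm_sq_add_sq_le_norm_sq he hκ₀ hκ.le hze hu
  have hwu : w * |u| / (u ^ 2 + ‖z₀‖ ^ 2) ≤ w / |u| := by
    rcases eq_or_ne u 0 with rfl | hu0
    · simp
    calc w * |u| / (u ^ 2 + ‖z₀‖ ^ 2) ≤ w * |u| / u ^ 2 := by
          gcongr
          linarith [sq_nonneg ‖z₀‖]
      _ = w / |u| := by
          rw [← sq_abs, sq, mul_div_mul_right _ _ (abs_ne_zero.2 hu0)]
  calc |(g / z).im| ≤ ‖g‖ * ‖z - u • g‖ / ‖z‖ ^ 2 := abs_im_div_le g z u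
    _ ≤ (1 + κ) * (‖z₀‖ + w * |u|) / ((1 - κ) ^ 2 * (u ^ 2 + ‖z₀‖ ^ 2)) := by gcongr
    _ = (1 + κ) / (1 - κ) ^ 2 *
        (‖z₀‖ / (u ^ 2 + ‖z₀‖ ^ 2) + w * |u| / (u ^ 2 + ‖z₀‖ ^ 2)) := by
        rw [mul_div_mul_comm, add_div ‖z₀‖]
    _ ≤ _ := by gcongr

theorem lintegral_div_sq_add_sq_le (D s₀ : ℝ) :
    ∫⁻ s : ℝ, ENNReal.ofReal (D / ((s - s₀) ^ 2 + D ^ 2)) ≤ ENNReal.ofReal Real.pi := by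
  rcases le_or_gt D 0 with hD | hD
  · have hle (s : ℝ) : D / ((s - s₀) ^ 2 + D ^ 2) ≤ 0 :=
      div_nonpos_of_nonpos_of_nonneg hD (by positivity)
    simp [ENNReal.ofReal_of_nonpos (hle _)]
  lift D to NNReal using hD.le
  have hpdf (s : ℝ) : ENNReal.ofReal (D / ((s - s₀) ^ 2 + D ^ 2)) =
      ENNReal.ofReal Real.pi * ProbabilityTheory.cauchyPDF s₀ D s := by
    rw [ProbabilityTheory.cauchyPDF_def, ← ENNReal.ofReal_mul Real.pi_pos.le,
      ProbabilityTheory.cauchyPDFReal_def]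
    congr 1
    field_simp
  simp_rw [hpdf]
  rw [lintegral_const_mul _ (ProbabilityTheory.measurable_cauchyPDF s₀ D),
    ProbabilityTheory.lintegral_cauchyPDF_eq_one s₀ (by exact_mod_cast hD.ne'), mul_one]

theorem exists_mem_Icc_forall_sub_mul_nonneg {f : ℝ → ℝ} {c d : ℝ} (hcd : c ≤ d)
    (hf : ContinuousOn f (Icc c d)) : ∃ s₀ ∈ Icc c d, ∀ s ∈ Icc c d, 0 ≤ (s - s₀) * f s₀ := by
  rcases le_or_gt 0 (f c) with hc | hc
  · exact ⟨c, left_mem_Icc.2 hcd, fun s hs => mul_nonneg (sub_nonneg.2 hs.1) hc⟩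
  rcases le_or_gt (f d) 0 with hd | hd
  · exact ⟨d, right_mem_Icc.2 hcd, fun s hs => mul_nonneg_of_nonpos_of_nonpos
      (sub_nonpos.2 hs.2) hd⟩
  obtain ⟨s, hs, h0⟩ := intermediate_value_Icc hcd hf ⟨hc.le, hd.le⟩
  exact ⟨s, hs, fun t _ => by rw [h0, mul_zero]⟩

theorem norm_sub_sub_smul_le {E : Type*} [NormedAddCommGroup E] [NormedSpace ℝ E] {f f' : ℝ → E}
    {S : Set ℝ} {s t C : ℝ} {w : E} (hS : Convex ℝ S) (hf : ∀ x ∈ S, HasDerivWithinAt f (f' x) S x)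
    (hC : ∀ x ∈ S, ‖f' x - w‖ ≤ C) (hs : s ∈ S) (ht : t ∈ S) :
    ‖f s - f t - (s - t) • w‖ ≤ C * |s - t| := by
  have := hS.norm_image_sub_le_of_norm_hasDerivWithin_le (f := fun x => f x - x • w)
    (fun x hx => (hf x hx).sub <| by simpa using ((hasDerivWithinAt_id x S).smul_const w)) hC ht hs
  rwa [show f s - f t - (s - t) • w = f s - s • w - (f t - t • w) by module]

/-! ### Dini continuity -/

theorem lintegral_Ioo_comp_abs_sub_le {h : ℝ → ENNReal} (hh : Measurable h) {a b s₀ : ℝ}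
    (hs₀ : s₀ ∈ Icc a b) :
    ∫⁻ s in Ioo a b, h |s - s₀| ≤ 2 * ∫⁻ t in Ico 0 (b - a), h t := by
  set g := (Ico 0 (b - a)).indicator h
  have hg : Measurable g := hh.indicator measurableSet_Ico
  have hle : ∀ s ∈ Ioo a b, h |s - s₀| ≤ g (s - s₀) + g (s₀ - s) := by
    intro s hs
    rcases le_total s₀ s with hss | hss
    · rw [abs_of_nonneg (sub_nonneg.2 hss)]
      exact (indicator_of_mem (by grind) h).ge.trans le_self_add
    · rw [abs_of_nonpos (sub_nonpos.2 hss), neg_sub]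
      exact (indicator_of_mem (by grind) h).ge.trans le_add_self
  calc ∫⁻ s in Ioo a b, h |s - s₀| ≤ ∫⁻ s in Ioo a b, g (s - s₀) + g (s₀ - s) :=
        setLIntegral_mono (by fun_prop) hle
    _ ≤ ∫⁻ s, g (s - s₀) + g (s₀ - s) := setLIntegral_le_lintegral _ _
    _ = 2 * ∫⁻ t in Ico 0 (b - a), h t := by
        rw [lintegral_add_left (by fun_prop), lintegral_sub_right_eq_self g s₀,
          lintegral_sub_left_eq_self g s₀, lintegral_indicator measurableSet_Ico, two_mul]

/-- A modulus of continuity satisfying Dini's condition `∫₀ W(t) / t dt < ∞`, extended to a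
nonnegative monotone function on the whole line. -/
structure IsDiniModulus (W : ℝ → ℝ) : Prop where
  mono : Monotone W
  nonneg : 0 ≤ W
  dini : IntegrableAtFilter (fun t => W t / t) (𝓝[>] 0)

namespace IsDiniModulus

variable {W W₁ W₂ : ℝ → ℝ}

theorem add (h₁ : IsDiniModulus W₁) (h₂ : IsDiniModulus W₂) : IsDiniModulus (W₁ + W₂) where
  mono := h₁.mono.add h₂.mono
  nonneg := add_nonneg h₁.nonneg h₂.nonneg
  dini := (h₁.dini.add h₂.dini).congr <| .of_forall fun t => by simp [add_div]

theorem exists_intervalIntegrable (h : IsDiniModulus W) :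
    ∃ X > 0, IntervalIntegrable (fun t => W t / t) volume 0 X := by
  obtain ⟨U, hU, hint⟩ := h.dini
  obtain ⟨X, hX, hXU⟩ := mem_nhdsGT_iff_exists_Ioc_subset.1 hU
  exact ⟨X, hX, (intervalIntegrable_iff_integrableOn_Ioc_of_le hX.le).2 (hint.mono_set hXU)⟩

theorem mul_comp_mul (h : IsDiniModulus W) {k : ℝ} (hk : 0 < k) :
    IsDiniModulus fun t => k * W (k * t) where
  mono _ _ hst := mul_le_mul_of_nonneg_left (h.mono (mul_le_mul_of_nonneg_left hst hk.le)) hk.le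
  nonneg _ := mul_nonneg hk.le (h.nonneg _)
  dini := by
    obtain ⟨X, hX, hint⟩ := h.exists_intervalIntegrable
    have hXk : 0 < X / k := div_pos hX hk
    have hscaled := (hint.comp_mul_left (c := k)).const_mul (k ^ 2)
    rw [zero_div, intervalIntegrable_iff_integrableOn_Ioc_of_le hXk.le] at hscaled
    refine ⟨Ioc 0 (X / k), Ioc_mem_nhdsGT hXk,
      hscaled.congr_fun (fun t ht => ?_) measurableSet_Ioc⟩
    have : t ≠ 0 := ht.1.ne'
    dsimp only
    field_simp

theorem tendsto_zero (h : IsDiniModulus W) : Tendsto W (𝓝[>] 0) (𝓝 0) := by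
  suffices hex : ∀ η > 0, ∃ t > 0, W t < η by
    refine tendsto_order.2
      ⟨fun η hη => .of_forall fun t => hη.trans_le (h.nonneg t), fun η hη => ?_⟩
    obtain ⟨t, ht, htη⟩ := hex η hη
    filter_upwards [Ioc_mem_nhdsGT ht] with s hs using (h.mono hs.2).trans_lt htη
  by_contra! hcon
  obtain ⟨η, hη, hW⟩ := hcon
  obtain ⟨X, hX, hint⟩ := h.exists_intervalIntegrable
  have hinv : IntervalIntegrable (fun t : ℝ => t⁻¹) volume 0 X := by
    refine (hint.const_mul η⁻¹).mono_fun' measurable_inv.aestronglyMeasurable ?_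
    refine (ae_restrict_iff' measurableSet_uIoc).2 (.of_forall fun t ht => ?_)
    have ht0 : 0 < t := (uIoc_of_le hX.le ▸ ht).1
    calc ‖t⁻¹‖ = η⁻¹ * (η / t) := by
          rw [Real.norm_of_nonneg (inv_nonneg.2 ht0.le)]; field_simp
      _ ≤ η⁻¹ * (W t / t) := by gcongr; exact hW t ht0
  rcases intervalIntegrable_inv_iff.1 hinv with h0 | h0
  · exact hX.ne h0
  · exact h0 left_mem_uIcc

theorem tendsto_lintegral_zero (h : IsDiniModulus W) :
    Tendsto (fun X => ∫⁻ t in Ico 0 X, ENNReal.ofReal (W t / t)) (𝓝[>] 0) (𝓝 0) := by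
  obtain ⟨X₀, hX₀, hint⟩ := h.exists_intervalIntegrable
  rw [intervalIntegrable_iff_integrableOn_Ico_of_le hX₀.le] at hint
  have hvol : Tendsto (volume.restrict (Ico 0 X₀) ∘ fun X : ℝ => Ico 0 X) (𝓝[>] 0) (𝓝 0) := by
    refine tendsto_of_tendsto_of_tendsto_of_le_of_le tendsto_const_nhds ?_ (fun _ => zero_le)
      fun X => Measure.restrict_apply_le _ _
    simp only [Real.volume_Ico, sub_zero]
    exact (ENNReal.tendsto_ofReal tendsto_id).mono_left nhdsWithin_le_nhds |>.trans (by simp)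
  refine (tendsto_setLIntegral_zero hint.lintegral_lt_top.ne hvol).congr' ?_
  filter_upwards [Ioc_mem_nhdsGT hX₀] with X hX
  rw [Measure.restrict_restrict measurableSet_Ico,
    inter_eq_left.2 (Ico_subset_Ico_right hX.2)]

end IsDiniModulus

/-- `f` has a modulus of continuity on `s` that satisfies Dini's condition. -/
def DiniContinuousOn {E : Type*} [NormedAddCommGroup E] (f : ℝ → E) (s : Set ℝ) : Prop :=
  ∃ W, IsDiniModulus W ∧ ∀ x ∈ s, ∀ y ∈ s, ‖f x - f y‖ ≤ W |x - y|

namespace DiniContinuousOn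

variable {E : Type*} [NormedAddCommGroup E] {f g : ℝ → E} {s t : Set ℝ}

theorem congr (h : DiniContinuousOn f s) (hfg : EqOn f g s) : DiniContinuousOn g s :=
  let ⟨W, hW, hfW⟩ := h
  ⟨W, hW, fun x hx y hy => hfg hx ▸ hfg hy ▸ hfW x hx y hy⟩

theorem union (hs : DiniContinuousOn f s) (ht : DiniContinuousOn f t) {a : ℝ}
    (has : IsGreatest s a) (hat : IsLeast t a) : DiniContinuousOn f (s ∪ t) := by
  obtain ⟨W₁, hW₁, h₁⟩ := hs
  obtain ⟨W₂, hW₂, h₂⟩ := ht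
  have hst : ∀ x ∈ s, ∀ y ∈ t, ‖f x - f y‖ ≤ (W₁ + W₂) |x - y| := by
    intro x hx y hy
    have hxa := has.2 hx
    have hay := hat.2 hy
    calc ‖f x - f y‖ ≤ ‖f x - f a‖ + ‖f a - f y‖ := norm_sub_le_norm_sub_add_norm_sub _ _ _
      _ ≤ W₁ |x - a| + W₂ |a - y| := add_le_add (h₁ x hx a has.1) (h₂ a hat.1 y hy)
      _ ≤ W₁ |x - y| + W₂ |x - y| :=
        add_le_add (hW₁.mono (by grind)) (hW₂.mono (by grind))
  refine ⟨W₁ + W₂, hW₁.add hW₂, ?_⟩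
  rintro x (hx | hx) y (hy | hy)
  · exact (h₁ x hx y hy).trans (le_add_of_nonneg_right (hW₂.nonneg _))
  · exact hst x hx y hy
  · rw [norm_sub_rev, abs_sub_comm]
    exact hst y hy x hx
  · exact (h₂ x hx y hy).trans (le_add_of_nonneg_left (hW₁.nonneg _))

theorem smul_comp_affine [NormedSpace ℝ E] (h : DiniContinuousOn f s) {s₀ k : ℝ} (hk : k ≠ 0)
    (hts : MapsTo (fun x => s₀ + k * x) t s) :
    DiniContinuousOn (fun x => k • f (s₀ + k * x)) t := by
  obtain ⟨W, hW, hfW⟩ := h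
  refine ⟨_, hW.mul_comp_mul (abs_pos.2 hk), fun x hx y hy => ?_⟩
  rw [← smul_sub, norm_smul, Real.norm_eq_abs, ← abs_mul]
  gcongr
  exact (hfW _ (hts hx) _ (hts hy)).trans_eq (by ring_nf)

theorem continuousOn (h : DiniContinuousOn f s) : ContinuousOn f s := by
  obtain ⟨W, hW, hfW⟩ := h
  intro x hx
  refine Metric.continuousWithinAt_iff.2 fun ε hε => ?_
  obtain ⟨t, htε, ht⟩ :=
    ((hW.tendsto_zero.eventually_lt_const hε).and self_mem_nhdsWithin).exists
  refine ⟨t, ht, fun y hy hyx => ?_⟩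
  rw [dist_eq_norm]
  exact ((hfW y hy x hx).trans (hW.mono hyx.le)).trans_lt htε

end DiniContinuousOn

theorem bddAbove_modCont {g : ℝ → ℂ} {a b : ℝ} (hg : ContinuousOn g (Icc a b)) (t : ℝ) :
    BddAbove {d : ℝ | ∃ s₁ ∈ Icc a b, ∃ s₂ ∈ Icc a b, |s₁ - s₂| ≤ t ∧ d = ‖g s₁ - g s₂‖} := by
  obtain ⟨C, hC⟩ := isCompact_Icc.exists_bound_of_continuousOn hg
  refine ⟨C + C, ?_⟩
  rintro _ ⟨s₁, h₁, s₂, h₂, _, rfl⟩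
  exact (norm_sub_le _ _).trans (add_le_add (hC _ h₁) (hC _ h₂))

theorem modCont_nonneg (g : ℝ → ℂ) (a b t : ℝ) : 0 ≤ modCont g a b t :=
  Real.sSup_nonneg fun _ ⟨_, _, _, _, _, hd⟩ => hd ▸ norm_nonneg _

theorem monotone_modCont {g : ℝ → ℂ} {a b : ℝ} (hg : ContinuousOn g (Icc a b)) :
    Monotone (modCont g a b) := by
  refine fun x y hxy => Real.sSup_le (fun d ⟨s, hs, t, ht, hst, hd⟩ => ?_) (modCont_nonneg g a b y)
  exact le_csSup (bddAbove_modCont hg y) ⟨s, hs, t, ht, hst.trans hxy, hd⟩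

theorem IsDiniSmoothArc.diniContinuousOn {γ γ' : ℝ → ℂ} {a b : ℝ} (h : IsDiniSmoothArc γ γ' a b) :
    DiniContinuousOn γ' (Icc a b) :=
  ⟨modCont γ' a b,
    ⟨monotone_modCont h.cont, modCont_nonneg γ' a b, ⟨_, Ioc_mem_nhdsGT one_pos, h.dini⟩⟩,
    fun _ hx _ hy => le_csSup (bddAbove_modCont h.cont _) ⟨_, hx, _, hy, le_rfl, rfl⟩⟩

/-! ### Nearly straight pieces of a curve -/

/-- Every subarc of `G` on `I` is seen under total angle at most `π + ε` from any point of the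
plane, and at most `ε` from a point of that subarc; the total angle seen from `p` is the variation
of a branch of `arg (G - p)`. -/
def NearlyStraightOn (G : ℝ → ℂ) (I : Set ℝ) (ε : ENNReal) : Prop :=
  ∀ x ∈ I, ∀ y ∈ I, ∀ (p : ℂ) (v : ℝ → ℝ), IsArgOn (fun t => G t - p) v (Ioo x y) →
    eVariationOn v (Ioo x y) ≤ ENNReal.ofReal Real.pi + ε ∧
      (p ∈ G '' Icc x y → eVariationOn v (Ioo x y) ≤ ε)

theorem NearlyStraightOn.mono {G : ℝ → ℂ} {I J : Set ℝ} {ε : ENNReal} (h : NearlyStraightOn G I ε)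
    (hJ : J ⊆ I) : NearlyStraightOn G J ε :=
  fun x hx y hy => h x (hJ hx) y (hJ hy)

section Subarc

variable {γ γ' : ℝ → ℂ} {W v : ℝ → ℝ} {a b s₀ κ : ℝ} {e p : ℂ}

theorem abs_im_deriv_div_sub_le {s : ℝ}
    (hγ : ∀ s ∈ Icc a b, HasDerivWithinAt γ (γ' s) (Icc a b) s) (hW : Monotone W)
    (hγW : ∀ s ∈ Icc a b, ∀ t ∈ Icc a b, ‖γ' s - γ' t‖ ≤ W |s - t|)
    (he : ‖e‖ = 1) (hκ : κ < 1) (hγe : ∀ s ∈ Icc a b, ‖γ' s - e‖ ≤ κ) (hs₀ : s₀ ∈ Icc a b)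
    (hs : s ∈ Icc a b) (hinner : 0 ≤ (s - s₀) * inner ℝ (γ s₀ - p) e) :
    |(γ' s / (γ s - p)).im| ≤ (1 + κ) / (1 - κ) ^ 2 *
      (‖γ s₀ - p‖ / ((s - s₀) ^ 2 + ‖γ s₀ - p‖ ^ 2) + W |s - s₀| / |s - s₀|) := by
  have hsub : uIcc s₀ s ⊆ Icc a b := uIcc_subset_Icc hs₀ hs
  have hγW' : ∀ x ∈ uIcc s₀ s, ‖γ' x - γ' s‖ ≤ W |s - s₀| := fun x hx =>
    (hγW x (hsub hx) s hs).trans <| hW <| abs_sub_comm s x ▸ abs_sub_right_of_mem_uIcc hx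
  refine abs_im_div_le_add he hκ (hγe s hs) ?_ ?_ hinner
  · rw [sub_sub_sub_cancel_right]
    exact norm_sub_sub_smul_le (convex_Icc a b) hγ hγe hs hs₀
  · rw [sub_sub_sub_cancel_right]
    exact norm_sub_sub_smul_le (convex_uIcc s₀ s) (fun x hx => (hγ x (hsub hx)).mono hsub) hγW'
      right_mem_uIcc left_mem_uIcc

theorem IsArgOn.eVariationOn_Ioo_le_lintegral_add (hv : IsArgOn (fun s => γ s - p) v (Ioo a b))
    (hγ : ∀ s ∈ Icc a b, HasDerivWithinAt γ (γ' s) (Icc a b) s) (hW : IsDiniModulus W)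
    (hγW : ∀ s ∈ Icc a b, ∀ t ∈ Icc a b, ‖γ' s - γ' t‖ ≤ W |s - t|)
    (he : ‖e‖ = 1) (hκ : κ < 1) (hγe : ∀ s ∈ Icc a b, ‖γ' s - e‖ ≤ κ) (hs₀ : s₀ ∈ Icc a b)
    (hinner : ∀ s ∈ Icc a b, 0 ≤ (s - s₀) * inner ℝ (γ s₀ - p) e) :
    eVariationOn v (Ioo a b) ≤ ENNReal.ofReal ((1 + κ) / (1 - κ) ^ 2) *
      ((∫⁻ s, ENNReal.ofReal (‖γ s₀ - p‖ / ((s - s₀) ^ 2 + ‖γ s₀ - p‖ ^ 2))) +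
        2 * ∫⁻ t in Ico 0 (b - a), ENNReal.ofReal (W t / t)) := by
  have hκ₀ : 0 ≤ κ := (norm_nonneg _).trans (hγe s₀ hs₀)
  have hWm : Measurable W := hW.mono.measurable
  have hbound : ∀ s ∈ Ioo a b, ‖(γ' s / (γ s - p)).im‖ₑ ≤ ENNReal.ofReal ((1 + κ) / (1 - κ) ^ 2) *
      (ENNReal.ofReal (‖γ s₀ - p‖ / ((s - s₀) ^ 2 + ‖γ s₀ - p‖ ^ 2)) +
        ENNReal.ofReal (W |s - s₀| / |s - s₀|)) := by
    intro s hs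
    have hs' := Ioo_subset_Icc_self hs
    rw [Real.enorm_eq_ofReal_abs, ← ENNReal.ofReal_add (by positivity)
      (div_nonneg (hW.nonneg _) (abs_nonneg _)), ← ENNReal.ofReal_mul (by positivity)]
    exact ENNReal.ofReal_le_ofReal <|
      abs_im_deriv_div_sub_le hγ hW.mono hγW he hκ hγe hs₀ hs' (hinner s hs')
  calc eVariationOn v (Ioo a b)
      ≤ ∫⁻ s in Ioo a b, ‖(γ' s / (γ s - p)).im‖ₑ :=
        hv.eVariationOn_Ioo_le (fun s hs =>
          ((hγ s (Ioo_subset_Icc_self hs)).hasDerivAt (Icc_mem_nhds hs.1 hs.2)).sub_const p)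
          (DiniContinuousOn.continuousOn ⟨W, hW, hγW⟩ |>.mono Ioo_subset_Icc_self)
    _ ≤ _ := setLIntegral_mono (by fun_prop) hbound
    _ = ENNReal.ofReal ((1 + κ) / (1 - κ) ^ 2) *
        ((∫⁻ s in Ioo a b, ENNReal.ofReal (‖γ s₀ - p‖ / ((s - s₀) ^ 2 + ‖γ s₀ - p‖ ^ 2))) +
          ∫⁻ s in Ioo a b, ENNReal.ofReal (W |s - s₀| / |s - s₀|)) := by
        rw [lintegral_const_mul _ (by fun_prop), lintegral_add_left (by fun_prop)]
    _ ≤ _ := by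
        gcongr
        · exact Measure.restrict_le_self
        · exact lintegral_Ioo_comp_abs_sub_le (by fun_prop) hs₀

end Subarc

theorem IsDiniModulus.eventually_turning_bound_le {W : ℝ → ℝ} (hW : IsDiniModulus W) {ε : ENNReal}
    (hε : ε ≠ 0) : ∀ᶠ X in 𝓝[>] 0, W X < 1 ∧
      ENNReal.ofReal ((1 + W X) / (1 - W X) ^ 2) * (ENNReal.ofReal Real.pi +
        2 * ∫⁻ t in Ico 0 X, ENNReal.ofReal (W t / t)) ≤ ENNReal.ofReal Real.pi + ε ∧
      ENNReal.ofReal ((1 + W X) / (1 - W X) ^ 2) *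
        (2 * ∫⁻ t in Ico 0 X, ENNReal.ofReal (W t / t)) ≤ ε := by
  have hA : Tendsto (fun X => ENNReal.ofReal ((1 + W X) / (1 - W X) ^ 2)) (𝓝[>] 0) (𝓝 1) := by
    have hcont : ContinuousAt (fun w : ℝ => (1 + w) / (1 - w) ^ 2) 0 := by
      fun_prop (disch := norm_num)
    simpa using ENNReal.tendsto_ofReal (hcont.tendsto.comp hW.tendsto_zero)
  have hD : Tendsto (fun X => 2 * ∫⁻ t in Ico 0 X, ENNReal.ofReal (W t / t)) (𝓝[>] 0) (𝓝 0) := by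
    simpa using ENNReal.Tendsto.const_mul hW.tendsto_lintegral_zero
      (.inr (by simp : (2 : ENNReal) ≠ ⊤))
  have hpi : Tendsto (fun X => ENNReal.ofReal ((1 + W X) / (1 - W X) ^ 2) *
      (ENNReal.ofReal Real.pi + 2 * ∫⁻ t in Ico 0 X, ENNReal.ofReal (W t / t)))
      (𝓝[>] 0) (𝓝 (ENNReal.ofReal Real.pi)) := by
    simpa using ENNReal.Tendsto.mul hA (.inr (by simp)) (tendsto_const_nhds.add hD)
      (.inr (by simp))
  have h0 := ENNReal.Tendsto.mul hA (.inr (by simp)) hD (.inr (by simp))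
  rw [mul_zero] at h0
  filter_upwards [hW.tendsto_zero.eventually_lt_const one_pos,
    hpi.eventually_le_const (ENNReal.lt_add_right ENNReal.ofReal_ne_top hε),
    h0.eventually_le_const (pos_iff_ne_zero.2 hε)] with X h₁ h₂ h₃ using ⟨h₁, h₂, h₃⟩

/-! ### Dini-smooth charts -/

/-- A chart `s ↦ G (σ s)` of the curve `G` around `σ 0` by a Dini-smooth arc over `[c, d]`, with
velocity `v` of norm one at `0`. The parameter change `σ` is merely a homeomorphism. -/
structure DiniChart (G : ℝ → ℂ) (σ : ℝ → ℝ) (v : ℝ → ℂ) (c d : ℝ) : Prop where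
  mem : 0 ∈ Icc c d
  cont : ContinuousOn σ (Icc c d)
  mono : StrictMonoOn σ (Icc c d)
  deriv : ∀ s ∈ Icc c d, HasDerivWithinAt (G ∘ σ) (v s) (Icc c d) s
  dini : DiniContinuousOn v (Icc c d)
  norm_zero : ‖v 0‖ = 1

namespace DiniChart

variable {G : ℝ → ℂ} {σ : ℝ → ℝ} {v : ℝ → ℂ} {c d : ℝ}

theorem image_Icc (h : DiniChart G σ v c d) {a b : ℝ} (ha : a ∈ Icc c d) (hb : b ∈ Icc c d)
    (hab : a ≤ b) : σ '' Icc a b = Icc (σ a) (σ b) :=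
  have hsub : Icc a b ⊆ Icc c d := Icc_subset_Icc ha.1 hb.2
  (h.cont.mono hsub).image_Icc_of_monotoneOn hab (h.mono.monotoneOn.mono hsub)

theorem eVariationOn_Ioo_comp (h : DiniChart G σ v c d) (f : ℝ → ℝ) {a b : ℝ} (ha : a ∈ Icc c d)
    (hb : b ∈ Icc c d) (hab : a ≤ b) :
    eVariationOn (f ∘ σ) (Ioo a b) = eVariationOn f (Ioo (σ a) (σ b)) := by
  have hsub : Icc a b ⊆ Icc c d := Icc_subset_Icc ha.1 hb.2
  rw [← (h.cont.mono hsub).image_Ioo_of_strictMonoOn hab (h.mono.mono hsub)]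
  exact eVariationOn.comp_eq_of_monotoneOn f σ
    (h.mono.monotoneOn.mono (Ioo_subset_Icc_self.trans hsub))

theorem exists_nearlyStraightOn_image (h : DiniChart G σ v c d) {ε : ENNReal} (hε : ε ≠ 0) :
    ∃ X > 0, NearlyStraightOn G (σ '' (Icc c d ∩ Icc (-X) X)) ε := by
  obtain ⟨W, hW, hvW⟩ := h.dini
  obtain ⟨Y, ⟨hκ, hplane, hcurve⟩, hY⟩ :=
    ((hW.eventually_turning_bound_le hε).and self_mem_nhdsWithin).exists
  refine ⟨Y / 2, half_pos hY, ?_⟩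
  rintro _ ⟨a, ⟨ha, haY⟩, rfl⟩ _ ⟨b, ⟨hb, hbY⟩, rfl⟩ p w hw
  rcases le_or_gt b a with hba | hab
  · have hempty : Ioo (σ a) (σ b) = ∅ := Ioo_eq_empty_of_le (h.mono.monotoneOn hb ha hba)
    simp [hempty]
  have hsub : Icc a b ⊆ Icc c d := Icc_subset_Icc ha.1 hb.2
  have hκv : ∀ s ∈ Icc a b, ‖v s - v 0‖ ≤ W Y := fun s hs =>
    (hvW s (hsub hs) 0 h.mem).trans (hW.mono (by grind))
  have hderiv : ∀ s ∈ Icc a b, HasDerivWithinAt (G ∘ σ) (v s) (Icc a b) s := fun s hs =>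
    (h.deriv s (hsub hs)).mono hsub
  have hlength : ∫⁻ t in Ico 0 (b - a), ENNReal.ofReal (W t / t) ≤
      ∫⁻ t in Ico 0 Y, ENNReal.ofReal (W t / t) :=
    lintegral_mono_set (Ico_subset_Ico_right (by grind))
  have hwσ : IsArgOn (fun s => (G ∘ σ) s - p) (w ∘ σ) (Ioo a b) :=
    hw.comp (h.cont.mono (Ioo_subset_Icc_self.trans hsub)) fun s hs =>
      ⟨h.mono ha (hsub (Ioo_subset_Icc_self hs)) hs.1,
        h.mono (hsub (Ioo_subset_Icc_self hs)) hb hs.2⟩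
  have hbound {s₀ : ℝ} := hwσ.eVariationOn_Ioo_le_lintegral_add (s₀ := s₀) hderiv hW
    (fun s hs t ht => hvW s (hsub hs) t (hsub ht)) h.norm_zero hκ hκv
  rw [← h.eVariationOn_Ioo_comp w ha hb hab.le]
  constructor
  · have hinner : ContinuousOn (fun s => inner ℝ ((G ∘ σ) s - p) (v 0)) (Icc a b) :=
      ((HasDerivWithinAt.continuousOn hderiv).sub continuousOn_const).inner continuousOn_const
    obtain ⟨s₀, hs₀, hfoot⟩ := exists_mem_Icc_forall_sub_mul_nonneg hab.le hinner
    refine (hbound hs₀ hfoot).trans (le_trans ?_ hplane)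
    gcongr
    exact lintegral_div_sq_add_sq_le _ _
  · rw [← h.image_Icc ha hb hab.le]
    rintro ⟨_, ⟨s₀, hs₀, rfl⟩, rfl⟩
    refine (hbound hs₀ fun s _ => by simp).trans (le_trans ?_ hcurve)
    simpa using mul_right_mono (mul_right_mono hlength)

theorem image_inter_Icc_mem_nhdsGE (h : DiniChart G σ v c d) (hd : 0 < d) {X : ℝ} (hX : 0 < X) :
    σ '' (Icc c d ∩ Icc (-X) X) ∈ 𝓝[≥] σ 0 := by
  have hm : 0 < min d X := lt_min hd hX
  have hmem : min d X ∈ Icc c d := ⟨h.mem.1.trans hm.le, min_le_left _ _⟩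
  filter_upwards [Icc_mem_nhdsGE (h.mono h.mem hmem hm)]
  rw [← h.image_Icc h.mem hmem hm.le]
  exact image_mono fun s hs => by have := h.mem.1; grind

theorem image_inter_Icc_mem_nhdsLE (h : DiniChart G σ v c d) (hc : c < 0) {X : ℝ} (hX : 0 < X) :
    σ '' (Icc c d ∩ Icc (-X) X) ∈ 𝓝[≤] σ 0 := by
  have hm : max c (-X) < 0 := max_lt hc (neg_neg_of_pos hX)
  have hmem : max c (-X) ∈ Icc c d := ⟨le_max_left _ _, hm.le.trans h.mem.2⟩
  filter_upwards [Icc_mem_nhdsLE (h.mono hmem h.mem hm)]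
  rw [← h.image_Icc hmem h.mem hm.le]
  exact image_mono fun s hs => by have := h.mem.2; grind

theorem congr (h : DiniChart G σ v c d) {σ' : ℝ → ℝ} {v' : ℝ → ℂ} (hσ : EqOn σ' σ (Icc c d))
    (hv : EqOn v v' (Icc c d)) : DiniChart G σ' v' c d where
  mem := h.mem
  cont := h.cont.congr hσ
  mono := h.mono.congr hσ.symm
  deriv s hs := hv hs ▸ (h.deriv s hs).congr_of_mem (fun _ ht => congrArg G (hσ ht)) hs
  dini := h.dini.congr hv
  norm_zero := hv h.mem ▸ h.norm_zero

theorem union (h₁ : DiniChart G σ v c 0) (h₂ : DiniChart G σ v 0 d) : DiniChart G σ v c d := by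
  have hIcc : Icc c 0 ∪ Icc 0 d = Icc c d := Icc_union_Icc_eq_Icc h₁.mem.1 h₂.mem.2
  have hg : IsGreatest (Icc c 0) 0 := isGreatest_Icc h₁.mem.1
  have hl : IsLeast (Icc 0 d) 0 := isLeast_Icc h₂.mem.2
  have hderiv : ∀ s ∈ Icc c 0 ∪ Icc 0 d,
      HasDerivWithinAt (G ∘ σ) (v s) (Icc c 0 ∪ Icc 0 d) s := by
    intro s hs
    refine HasDerivWithinAt.union ?_ ?_
    · by_cases hs' : s ∈ Icc c 0
      · exact h₁.deriv s hs'
      · exact HasFDerivWithinAt.of_notMem_closure (by rwa [isClosed_Icc.closure_eq])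
    · by_cases hs' : s ∈ Icc 0 d
      · exact h₂.deriv s hs'
      · exact HasFDerivWithinAt.of_notMem_closure (by rwa [isClosed_Icc.closure_eq])
  exact
  { mem := ⟨h₁.mem.1, h₂.mem.2⟩
    cont := hIcc ▸ h₁.cont.union_of_isClosed h₂.cont isClosed_Icc isClosed_Icc
    mono := hIcc ▸ h₁.mono.union h₂.mono hg hl
    deriv := hIcc ▸ hderiv
    dini := hIcc ▸ h₁.dini.union h₂.dini hg hl
    norm_zero := h₁.norm_zero }

theorem exists_union {σ₁ σ₂ : ℝ → ℝ} {v₁ v₂ : ℝ → ℂ} (h₁ : DiniChart G σ₁ v₁ c 0)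
    (h₂ : DiniChart G σ₂ v₂ 0 d) (hσ : σ₁ 0 = σ₂ 0) (hv : v₁ 0 = v₂ 0) :
    ∃ σ v, σ 0 = σ₁ 0 ∧ DiniChart G σ v c d := by
  refine ⟨fun s => if s ≤ 0 then σ₁ s else σ₂ s, fun s => if s ≤ 0 then v₁ s else v₂ s,
    if_pos le_rfl, (h₁.congr ?_ ?_).union (h₂.congr ?_ ?_)⟩ <;> intro s hs
  · exact if_pos hs.2
  · exact (if_pos hs.2).symm
  all_goals
    rcases hs.1.eq_or_lt with rfl | h0
    · simp [hσ, hv]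
    · simp [h0.not_ge]

end DiniChart

namespace IsDiniSmoothArc

variable {G γ γ' : ℝ → ℂ} {σ : ℝ → ℝ} {a b s₀ s₁ : ℝ}

theorem diniChart (h : IsDiniSmoothArc γ γ' a b) (hσ : ContinuousOn σ (Icc a b))
    (hG : ∀ s ∈ Icc a b, G (σ s) = γ s) {c d k : ℝ} (h0 : 0 ∈ Icc c d)
    (hmaps : MapsTo (fun x => s₀ + k * x) (Icc c d) (Icc a b))
    (hle : σ (s₀ + k * c) ≤ σ (s₀ + k * d)) (hk : |k| * ‖γ' s₀‖ = 1) :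
    DiniChart G (fun x => σ (s₀ + k * x)) (fun x => k • γ' (s₀ + k * x)) c d := by
  have hk0 : k ≠ 0 := by
    rintro rfl
    simp at hk
  have hσk : ContinuousOn (fun x => σ (s₀ + k * x)) (Icc c d) := hσ.comp (by fun_prop) hmaps
  have hinj : InjOn (fun x => σ (s₀ + k * x)) (Icc c d) := by
    intro x hx y hy hxy
    have hγ := h.inj (hmaps hx) (hmaps hy) <| by
      rw [← hG _ (hmaps hx), ← hG _ (hmaps hy)]
      exact congrArg G hxy
    simpa [hk0] using hγ
  exact
  { mem := h0
    cont := hσk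
    mono := hσk.strictMonoOn_of_injOn_Icc (h0.1.trans h0.2) hle hinj
    deriv := fun x hx =>
      have hlin : HasDerivAt (fun x => s₀ + k * x) k x := by
        simpa using ((hasDerivAt_id x).const_mul k).const_add s₀
      ((h.deriv _ (hmaps hx)).scomp x hlin.hasDerivWithinAt hmaps).congr_of_mem
        (fun y hy => hG _ (hmaps hy)) hx
    dini := h.diniContinuousOn.smul_comp_affine hk0 hmaps
    norm_zero := by simpa [norm_smul] using hk }

theorem exists_slope (h : IsDiniSmoothArc γ γ' a b) (hs₀ : s₀ ∈ Icc a b) (hs₁ : s₁ ∈ Icc a b)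
    (hne : s₀ ≠ s₁) : ∃ d > 0, ∃ k, |k| * ‖γ' s₀‖ = 1 ∧ s₀ + k * d = s₁ ∧
      MapsTo (fun x => s₀ + k * x) (Icc 0 d) (Icc a b) := by
  have hγ' : 0 < ‖γ' s₀‖ := norm_pos_iff.2 (h.nonzero s₀ hs₀)
  have hs : 0 < |s₁ - s₀| := abs_pos.2 (sub_ne_zero.2 hne.symm)
  have hd : 0 < |s₁ - s₀| * ‖γ' s₀‖ := mul_pos hs hγ'
  refine ⟨_, hd, (s₁ - s₀) / (|s₁ - s₀| * ‖γ' s₀‖), ?_, ?_, fun x hx => ?_⟩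
  · rw [abs_div, abs_of_pos hd]
    field_simp
  · rw [div_mul_cancel₀ _ hd.ne', add_sub_cancel]
  · have := (convex_Icc a b).add_smul_sub_mem hs₀ hs₁
      ⟨div_nonneg hx.1 hd.le, (div_le_one hd).2 hx.2⟩
    rwa [smul_eq_mul, div_mul_comm] at this

theorem exists_diniChart_right (h : IsDiniSmoothArc γ γ' a b) (hσ : ContinuousOn σ (Icc a b))
    (hG : ∀ s ∈ Icc a b, G (σ s) = γ s) (hs₀ : s₀ ∈ Icc a b) (hs₁ : s₁ ∈ Icc a b)
    (hlt : σ s₀ < σ s₁) : ∃ τ v d, 0 < d ∧ τ 0 = σ s₀ ∧ DiniChart G τ v 0 d := by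
  obtain ⟨d, hd, k, hk, hs, hmaps⟩ := h.exists_slope hs₀ hs₁ fun hs => hlt.ne (by rw [hs])
  refine ⟨_, _, d, hd, by simp, h.diniChart hσ hG (left_mem_Icc.2 hd.le) hmaps ?_ hk⟩
  simpa [hs] using hlt.le

theorem exists_diniChart_left (h : IsDiniSmoothArc γ γ' a b) (hσ : ContinuousOn σ (Icc a b))
    (hG : ∀ s ∈ Icc a b, G (σ s) = γ s) (hs₀ : s₀ ∈ Icc a b) (hs₁ : s₁ ∈ Icc a b)
    (hlt : σ s₁ < σ s₀) : ∃ τ v c, c < 0 ∧ τ 0 = σ s₀ ∧ DiniChart G τ v c 0 := by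
  obtain ⟨d, hd, k, hk, hs, hmaps⟩ := h.exists_slope hs₀ hs₁ fun hs => hlt.ne (by rw [hs])
  refine ⟨fun x => σ (s₀ + -k * x), _, -d, neg_neg_of_pos hd, by simp,
    h.diniChart hσ hG (right_mem_Icc.2 (neg_nonpos.2 hd.le)) (fun x hx => ?_) ?_ (by rwa [abs_neg])⟩
  · simpa only [neg_mul, mul_neg] using hmaps (x := -x) ⟨neg_nonneg.2 hx.2, neg_le.1 hx.1⟩
  · simpa [hs] using hlt.le

end IsDiniSmoothArc

/-! ### Lifting arcs through the boundary parametrization -/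

/-- The boundary parametrization `t ↦ ψ (e^{it})`. -/
def boundaryMap (ψ : ℂ → ℂ) (t : ℝ) : ℂ := ψ (Complex.exp (Complex.I * t))

theorem boundaryMap_eq_circleExp (ψ : ℂ → ℂ) (t : ℝ) : boundaryMap ψ t = ψ (Circle.exp t) := by
  rw [boundaryMap, Circle.coe_exp, mul_comm]

theorem boundaryMap_periodic (ψ : ℂ → ℂ) : Function.Periodic (boundaryMap ψ) (2 * Real.pi) :=
  fun t => by simp only [boundaryMap_eq_circleExp, Circle.periodic_exp t]

section Lift

variable {ψ : ℂ → ℂ} {γ γ' : ℝ → ℂ} {a b s₀ t₀ : ℝ}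

theorem continuous_boundaryMap (hψ : IsEmbedding fun z : Circle => ψ z) :
    Continuous (boundaryMap ψ) := by
  simpa only [Function.comp_def, ← boundaryMap_eq_circleExp] using
    hψ.continuous.comp Circle.exp.continuous

theorem eq_of_boundaryMap_eq (hψ : IsEmbedding fun z : Circle => ψ z) {s t : ℝ}
    (hst : boundaryMap ψ s = boundaryMap ψ t) (hlt : |s - t| < 2 * Real.pi) : s = t := by
  rw [boundaryMap_eq_circleExp, boundaryMap_eq_circleExp] at hst
  obtain ⟨n, hn⟩ := Circle.exp_eq_exp.1 (hψ.injective hst)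
  have hn' : |(n : ℝ)| < 1 := by
    rw [hn, add_sub_cancel_left, abs_mul, abs_of_pos Real.two_pi_pos] at hlt
    exact lt_of_mul_lt_mul_right (by rwa [one_mul]) Real.two_pi_pos.le
  have hn0 : n = 0 := Int.abs_lt_one_iff.1 (by exact_mod_cast hn')
  simpa [hn0] using hn

theorem exists_lift_boundaryMap (hψ : IsEmbedding fun z : Circle => ψ z)
    (hγ : ContinuousOn γ (Icc a b)) (hΓ : γ '' Icc a b ⊆ range fun z : Circle => ψ z)
    (hs₀ : s₀ ∈ Icc a b) (ht₀ : boundaryMap ψ t₀ = γ s₀) :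
    ∃ σ : ℝ → ℝ, Continuous σ ∧ σ s₀ = t₀ ∧ ∀ s ∈ Icc a b, boundaryMap ψ (σ s) = γ s := by
  have hab : a ≤ b := hs₀.1.trans hs₀.2
  choose ρ hρ using fun x => hΓ (mem_image_of_mem γ (projIcc a b hab x).2)
  have hρc : Continuous ρ := by
    rw [hψ.continuous_iff, Function.comp_def]
    simp only [hρ]
    exact hγ.comp_continuous (by fun_prop) fun x => (projIcc a b hab x).2
  have ht₀ρ : Circle.exp t₀ = ρ s₀ := hψ.injective <| by
    simp only [← boundaryMap_eq_circleExp, hρ, ht₀, projIcc_of_mem hab hs₀]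
  obtain ⟨σ, ⟨hσ₀, hσ⟩, -⟩ := Circle.isCoveringMap_exp.existsUnique_continuousMap_lifts
    (⟨ρ, hρc⟩ : C(ℝ, Circle)) s₀ t₀ ht₀ρ
  refine ⟨σ, σ.continuous, hσ₀, fun s hs => ?_⟩
  have : Circle.exp (σ s) = ρ s := congrFun hσ s
  rw [boundaryMap_eq_circleExp, this]
  exact (hρ s).trans (by rw [projIcc_of_mem hab hs])

theorem eventually_mem_image_of_lift (hψ : IsEmbedding fun z : Circle => ψ z)
    (hγ : ContinuousOn γ (Icc a b)) (hinj : InjOn γ (Icc a b)) {σ : ℝ → ℝ} (hσ : Continuous σ)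
    (hσγ : ∀ s ∈ Icc a b, boundaryMap ψ (σ s) = γ s) (hs₀ : s₀ ∈ Icc a b) :
    ∀ᶠ t in 𝓝 (σ s₀), boundaryMap ψ t ∈ γ '' Icc a b → t ∈ σ '' Icc a b := by
  set K := Icc a b ∩ {s | Real.pi ≤ |σ s - σ s₀|} with hK
  have hKc : IsClosed (γ '' K) := by
    have hclosed : IsClosed {s | Real.pi ≤ |σ s - σ s₀|} :=
      isClosed_le continuous_const (by fun_prop)
    exact ((isCompact_Icc.inter_right hclosed).image_of_continuousOn
      (hγ.mono inter_subset_left)).isClosed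
  have hmem : boundaryMap ψ (σ s₀) ∉ γ '' K := by
    rintro ⟨s, ⟨hs, hsπ⟩, hss⟩
    rw [hσγ s₀ hs₀] at hss
    obtain rfl := hinj hs hs₀ hss
    simp [Real.pi_pos.not_ge] at hsπ
  filter_upwards [(continuous_boundaryMap hψ).continuousAt (hKc.isOpen_compl.mem_nhds hmem),
    Metric.ball_mem_nhds (σ s₀) Real.pi_pos] with t htK htπ
  rintro ⟨s, hs, hst⟩
  refine ⟨s, hs, eq_of_boundaryMap_eq hψ ((hσγ s hs).trans hst) ?_⟩
  have hsπ : |σ s - σ s₀| < Real.pi := not_le.1 fun hle => htK ⟨s, ⟨hs, hle⟩, hst⟩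
  rw [Metric.mem_ball, Real.dist_eq, abs_sub_comm] at htπ
  linarith [abs_sub_le (σ s) (σ s₀) t]

end Lift

theorem IsDiniSmoothArc.exists_lift_of_frequently {ψ : ℂ → ℂ} {γ γ' : ℝ → ℂ} {a b t₀ : ℝ}
    (h : IsDiniSmoothArc γ γ' a b) (hψ : IsEmbedding fun z : Circle => ψ z)
    (hΓ : γ '' Icc a b ⊆ range fun z : Circle => ψ z) {F : Filter ℝ} (hF : F ≤ 𝓝 t₀)
    (hfreq : ∃ᶠ t in F, boundaryMap ψ t ∈ γ '' Icc a b) :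
    ∃ σ, ContinuousOn σ (Icc a b) ∧ (∀ s ∈ Icc a b, boundaryMap ψ (σ s) = γ s) ∧
      (∃ s₀ ∈ Icc a b, σ s₀ = t₀) ∧ ∃ᶠ t in F, ∃ s ∈ Icc a b, σ s = t := by
  have hγ : ContinuousOn γ (Icc a b) := HasDerivWithinAt.continuousOn h.deriv
  have hclosed : IsClosed (γ '' Icc a b) := (isCompact_Icc.image_of_continuousOn hγ).isClosed
  obtain ⟨s₀, hs₀, hst⟩ : boundaryMap ψ t₀ ∈ γ '' Icc a b :=
    hclosed.mem_of_frequently_of_tendsto hfreq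
      (((continuous_boundaryMap hψ).tendsto t₀).mono_left hF)
  obtain ⟨σ, hσ, rfl, hσγ⟩ := exists_lift_boundaryMap hψ hγ hΓ hs₀ hst.symm
  refine ⟨σ, hσ.continuousOn, hσγ, ⟨s₀, hs₀, rfl⟩, ?_⟩
  exact (hfreq.and_eventually
    (hF (eventually_mem_image_of_lift hψ hγ h.inj hσ hσγ hs₀))).mono fun t ht => ht.2 ht.1

section Charts

variable {ψ : ℂ → ℂ}

theorem IsPiecewiseDiniSmoothJordanCurve.exists_lift (hψ : IsEmbedding fun z : Circle => ψ z)
    (hΓ : IsPiecewiseDiniSmoothJordanCurve (range fun z : Circle => ψ z)) {t₀ : ℝ} {F : Filter ℝ}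
    [F.NeBot] (hF : F ≤ 𝓝 t₀) :
    ∃ (γ γ' : ℝ → ℂ) (a b : ℝ) (σ : ℝ → ℝ), IsDiniSmoothArc γ γ' a b ∧
      ContinuousOn σ (Icc a b) ∧ (∀ s ∈ Icc a b, boundaryMap ψ (σ s) = γ s) ∧
      (∃ s₀ ∈ Icc a b, σ s₀ = t₀) ∧ ∃ᶠ t in F, ∃ s ∈ Icc a b, σ s = t := by
  obtain ⟨-, N, γ, γ', a, b, harc, hcover⟩ := hΓ
  have hex : ∃ i, ∃ᶠ t in F, boundaryMap ψ t ∈ γ i '' Icc (a i) (b i) := by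
    by_contra! hcon
    simp only [← eventually_all] at hcon
    obtain ⟨t, ht⟩ := hcon.exists
    have hmem : boundaryMap ψ t ∈ ⋃ i, γ i '' Icc (a i) (b i) :=
      hcover ▸ ⟨Circle.exp t, (boundaryMap_eq_circleExp ψ t).symm⟩
    obtain ⟨i, hi⟩ := mem_iUnion.1 hmem
    exact ht i hi
  obtain ⟨i, hi⟩ := hex
  obtain ⟨σ, hσ⟩ := (harc i).exists_lift_of_frequently hψ
    (hcover ▸ subset_iUnion (fun i => γ i '' Icc (a i) (b i)) i) hF hi
  exact ⟨γ i, γ' i, a i, b i, σ, harc i, hσ⟩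

theorem IsPiecewiseDiniSmoothJordanCurve.exists_diniChart_right
    (hψ : IsEmbedding fun z : Circle => ψ z)
    (hΓ : IsPiecewiseDiniSmoothJordanCurve (range fun z : Circle => ψ z)) (t₀ : ℝ) :
    ∃ τ v d, 0 < d ∧ τ 0 = t₀ ∧ DiniChart (boundaryMap ψ) τ v 0 d := by
  obtain ⟨γ, γ', a, b, σ, harc, hσ, hσγ, ⟨s₀, hs₀, rfl⟩, hfreq⟩ :=
    hΓ.exists_lift hψ (nhdsWithin_le_nhds : 𝓝[>] t₀ ≤ 𝓝 t₀)
  obtain ⟨_, ⟨s₁, hs₁, rfl⟩, hlt⟩ := (hfreq.and_eventually self_mem_nhdsWithin).exists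
  exact harc.exists_diniChart_right hσ hσγ hs₀ hs₁ hlt

theorem IsPiecewiseDiniSmoothJordanCurve.exists_diniChart_left
    (hψ : IsEmbedding fun z : Circle => ψ z)
    (hΓ : IsPiecewiseDiniSmoothJordanCurve (range fun z : Circle => ψ z)) (t₀ : ℝ) :
    ∃ τ v c, c < 0 ∧ τ 0 = t₀ ∧ DiniChart (boundaryMap ψ) τ v c 0 := by
  obtain ⟨γ, γ', a, b, σ, harc, hσ, hσγ, ⟨s₀, hs₀, rfl⟩, hfreq⟩ :=
    hΓ.exists_lift hψ (nhdsWithin_le_nhds : 𝓝[<] t₀ ≤ 𝓝 t₀)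
  obtain ⟨_, ⟨s₁, hs₁, rfl⟩, hlt⟩ := (hfreq.and_eventually self_mem_nhdsWithin).exists
  exact harc.exists_diniChart_left hσ hσγ hs₀ hs₁ hlt

end Charts

/-! ### One-sided tangents -/

/-- The unit vector pointing from `G t₀` to `G t`. -/
def secantDirection (G : ℝ → ℂ) (t₀ t : ℝ) : ℂ := (G t - G t₀) / ‖G t - G t₀‖

section Tangent

variable {γ : ℝ → ℂ} {e : ℂ} {s : Set ℝ} {x t : ℝ}

theorem tendsto_slope_div_norm (h : HasDerivWithinAt γ e s x) (he : ‖e‖ = 1) :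
    Tendsto (fun t => slope γ x t / ‖slope γ x t‖) (𝓝[s \ {x}] x) (𝓝 e) := by
  have hslope := hasDerivWithinAt_iff_tendsto_slope.1 h
  have hnorm : Tendsto (fun t => (‖slope γ x t‖ : ℂ)) (𝓝[s \ {x}] x) (𝓝 1) := by
    have := (Complex.continuous_ofReal.tendsto _).comp hslope.norm
    rwa [he, Complex.ofReal_one] at this
  have := hslope.div hnorm one_ne_zero
  rwa [div_one] at this

theorem secantDirection_of_gt (ht : x < t) :
    secantDirection γ x t = slope γ x t / ‖slope γ x t‖ := by
  have ht' : ((t - x : ℝ) : ℂ)⁻¹ ≠ 0 := inv_ne_zero (Complex.ofReal_ne_zero.2 (sub_pos.2 ht).ne')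
  rw [slope_def_module, norm_smul, norm_inv, Real.norm_eq_abs, abs_of_pos (sub_pos.2 ht),
    Complex.real_smul, Complex.ofReal_mul, Complex.ofReal_inv, mul_div_mul_left _ _ ht']
  rfl

theorem secantDirection_of_lt (ht : t < x) :
    secantDirection γ x t = -(slope γ x t / ‖slope γ x t‖) := by
  have ht' : ((t - x : ℝ) : ℂ)⁻¹ ≠ 0 := inv_ne_zero (Complex.ofReal_ne_zero.2 (sub_neg.2 ht).ne)
  rw [slope_def_module, norm_smul, norm_inv, Real.norm_eq_abs, abs_of_neg (sub_neg.2 ht),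
    Complex.real_smul, Complex.ofReal_mul, inv_neg, Complex.ofReal_neg, Complex.ofReal_inv, neg_mul,
    div_neg, neg_neg, mul_div_mul_left _ _ ht']
  rfl

end Tangent

namespace DiniChart

variable {G : ℝ → ℂ} {σ : ℝ → ℝ} {v : ℝ → ℂ} {c d : ℝ} {l : ℂ}

theorem eq_of_tendsto_secantDirection_right (h : DiniChart G σ v c d) (hd : 0 < d)
    (hl : Tendsto (secantDirection G (σ 0)) (𝓝[>] σ 0) (𝓝 l)) : v 0 = l := by
  have hIoc : Ioc 0 d ⊆ Icc c d \ {0} := fun s hs => ⟨⟨h.mem.1.trans hs.1.le, hs.2⟩, hs.1.ne'⟩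
  have hnhds : 𝓝[>] 0 ≤ 𝓝[Icc c d \ {0}] (0 : ℝ) :=
    nhdsWithin_le_of_mem (mem_of_superset (Ioc_mem_nhdsGT hd) hIoc)
  have hσ : Tendsto σ (𝓝[>] 0) (𝓝[>] σ 0) := by
    refine tendsto_nhdsWithin_iff.2
      ⟨((h.cont 0 h.mem).mono sdiff_subset).mono_left hnhds, ?_⟩
    filter_upwards [Ioc_mem_nhdsGT hd] with s hs using h.mono h.mem (hIoc hs).1 hs.1
  refine tendsto_nhds_unique
    ((tendsto_slope_div_norm (h.deriv 0 h.mem) h.norm_zero).mono_left hnhds)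
    ((hl.comp hσ).congr' ?_)
  filter_upwards [self_mem_nhdsWithin] with s hs using secantDirection_of_gt (γ := G ∘ σ) hs

theorem eq_neg_of_tendsto_secantDirection_left (h : DiniChart G σ v c d) (hc : c < 0)
    (hl : Tendsto (secantDirection G (σ 0)) (𝓝[<] σ 0) (𝓝 l)) : v 0 = -l := by
  have hIco : Ico c 0 ⊆ Icc c d \ {0} := fun s hs => ⟨⟨hs.1, hs.2.le.trans h.mem.2⟩, hs.2.ne⟩
  have hnhds : 𝓝[<] 0 ≤ 𝓝[Icc c d \ {0}] (0 : ℝ) :=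
    nhdsWithin_le_of_mem (mem_of_superset (Ico_mem_nhdsLT hc) hIco)
  have hσ : Tendsto σ (𝓝[<] 0) (𝓝[<] σ 0) := by
    refine tendsto_nhdsWithin_iff.2
      ⟨((h.cont 0 h.mem).mono sdiff_subset).mono_left hnhds, ?_⟩
    filter_upwards [Ico_mem_nhdsLT hc] with s hs using h.mono (hIco hs).1 h.mem hs.2
  refine tendsto_nhds_unique
    ((tendsto_slope_div_norm (h.deriv 0 h.mem) h.norm_zero).mono_left hnhds)
    ((hl.comp hσ).neg.congr' ?_)
  filter_upwards [self_mem_nhdsWithin] with s hs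
    using neg_eq_iff_eq_neg.2 (secantDirection_of_lt (γ := G ∘ σ) hs)

end DiniChart

section NearlyStraight

variable {ψ : ℂ → ℂ} {ε : ENNReal}

theorem IsPiecewiseDiniSmoothJordanCurve.exists_nearlyStraightOn_right
    (hψ : IsEmbedding fun z : Circle => ψ z)
    (hΓ : IsPiecewiseDiniSmoothJordanCurve (range fun z : Circle => ψ z)) (t₀ : ℝ) (hε : ε ≠ 0) :
    ∃ S ∈ 𝓝[≥] t₀, NearlyStraightOn (boundaryMap ψ) S ε := by
  obtain ⟨τ, v, d, hd, rfl, h⟩ := hΓ.exists_diniChart_right hψ t₀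
  obtain ⟨X, hX, hS⟩ := h.exists_nearlyStraightOn_image hε
  exact ⟨_, h.image_inter_Icc_mem_nhdsGE hd hX, hS⟩

theorem IsPiecewiseDiniSmoothJordanCurve.exists_nearlyStraightOn_left
    (hψ : IsEmbedding fun z : Circle => ψ z)
    (hΓ : IsPiecewiseDiniSmoothJordanCurve (range fun z : Circle => ψ z)) (t₀ : ℝ) (hε : ε ≠ 0) :
    ∃ S ∈ 𝓝[≤] t₀, NearlyStraightOn (boundaryMap ψ) S ε := by
  obtain ⟨τ, v, c, hc, rfl, h⟩ := hΓ.exists_diniChart_left hψ t₀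
  obtain ⟨X, hX, hS⟩ := h.exists_nearlyStraightOn_image hε
  exact ⟨_, h.image_inter_Icc_mem_nhdsLE hc hX, hS⟩

theorem IsPiecewiseDiniSmoothJordanCurve.exists_nearlyStraightOn_of_tendsto
    (hψ : IsEmbedding fun z : Circle => ψ z)
    (hΓ : IsPiecewiseDiniSmoothJordanCurve (range fun z : Circle => ψ z)) {t₀ : ℝ} {l : ℂ}
    (hr : Tendsto (secantDirection (boundaryMap ψ) t₀) (𝓝[>] t₀) (𝓝 l))
    (hl : Tendsto (secantDirection (boundaryMap ψ) t₀) (𝓝[<] t₀) (𝓝 (-l))) (hε : ε ≠ 0) :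
    ∃ S ∈ 𝓝 t₀, NearlyStraightOn (boundaryMap ψ) S ε := by
  obtain ⟨τ₁, v₁, c, hc, rfl, h₁⟩ := hΓ.exists_diniChart_left hψ t₀
  obtain ⟨τ₂, v₂, d, hd, hτ, h₂⟩ := hΓ.exists_diniChart_right hψ (τ₁ 0)
  have hv : v₁ 0 = v₂ 0 := by
    rw [h₁.eq_neg_of_tendsto_secantDirection_left hc hl, neg_neg,
      h₂.eq_of_tendsto_secantDirection_right hd (by rwa [hτ])]
  obtain ⟨σ, v, hσ, h⟩ := h₁.exists_union h₂ hτ.symm hv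
  obtain ⟨X, hX, hS⟩ := h.exists_nearlyStraightOn_image hε
  refine ⟨_, ?_, hS⟩
  rw [← hσ, ← nhdsLE_sup_nhdsGE]
  exact ⟨h.image_inter_Icc_mem_nhdsLE hc hX, h.image_inter_Icc_mem_nhdsGE hd hX⟩

end NearlyStraight

/-! ### Secant arguments -/

namespace IsSecantArg

variable {ψ : ℂ → ℂ} {θ α x z J : ℝ} {v : ℝ → ℝ}

theorem tendsto_secantDirection {F : Filter ℝ} {L : ℝ} (h : IsSecantArg ψ θ α v) (hF : F ≤ 𝓝[≠] θ)
    (hL : Tendsto v F (𝓝 L)) :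
    Tendsto (secantDirection (boundaryMap ψ) θ) F (𝓝 (Complex.exp (Complex.I * L))) := by
  have hexp : Continuous fun x : ℝ => Complex.exp (Complex.I * x) := by fun_prop
  refine ((hexp.tendsto L).comp hL).congr' ?_
  filter_upwards [hF self_mem_nhdsWithin,
    hF (mem_nhdsWithin_of_mem_nhds (Icc_mem_nhds h.hα h.hθ))] with t hne ht
  exact h.branch t ht hne

theorem tendsto_secantDirection_right (h : IsSecantArg ψ θ α v) :
    Tendsto (secantDirection (boundaryMap ψ) θ) (𝓝[>] θ) (𝓝 (Complex.exp (Complex.I * v θ))) :=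
  h.tendsto_secantDirection (nhdsGT_le_nhdsNE θ)
    (h.rightCont.mono_left (nhdsWithin_mono _ Ioi_subset_Ici_self))

theorem isArgOn_Ioo_left (h : IsSecantArg ψ θ α v) (hx : α ≤ x) :
    IsArgOn (fun t => boundaryMap ψ t - boundaryMap ψ θ) v (Ioo x θ) :=
  ⟨h.contBefore.mono fun _ ht => ⟨hx.trans ht.1.le, ht.2⟩,
    fun t ht => h.branch t ⟨hx.trans ht.1.le, (ht.2.trans h.hθ).le⟩ ht.2.ne⟩

theorem isArgOn_Ioo_right (h : IsSecantArg ψ θ α v) (hz : z ≤ α + 2 * Real.pi) :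
    IsArgOn (fun t => boundaryMap ψ t - boundaryMap ψ θ) v (Ioo θ z) :=
  ⟨h.contAfter.mono fun _ ht => ⟨ht.1, ht.2.le.trans hz⟩,
    fun t ht => h.branch t ⟨(h.hα.trans ht.1).le, ht.2.le.trans hz⟩ ht.1.ne'⟩

theorem eVariationOn_Icc_le_of_jump_le (h : IsSecantArg ψ θ α v)
    (hJ : ∀ L, Tendsto v (𝓝[<] θ) (𝓝 L) → v θ - L ∈ Icc 0 (2 * Real.pi) → v θ - L ≤ J)
    (hx : x ∈ Ico α θ) (hz : z ∈ Ioc θ (α + 2 * Real.pi)) :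
    eVariationOn v (Icc x z) ≤
      eVariationOn v (Ioo x θ) + ENNReal.ofReal J + eVariationOn v (Ioo θ z) := by
  obtain ⟨L, hL, hjump⟩ := h.jump_mem
  have hxcont : ContinuousWithinAt v (Ici x) x := by
    refine (h.contBefore x hx).mono_of_mem_nhdsWithin ?_
    exact mem_of_superset (Ico_mem_nhdsGE hx.2) (Ico_subset_Ico_left hx.1)
  have hzcont : ContinuousWithinAt v (Iic z) z := by
    refine (h.contAfter z hz).mono_of_mem_nhdsWithin ?_
    exact mem_of_superset (Ioc_mem_nhdsLE hz.1) (Ioc_subset_Ioc_right hz.2)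
  have hsplit : eVariationOn v (Icc x z) = eVariationOn v (Icc x θ) + eVariationOn v (Icc θ z) := by
    simpa only [univ_inter] using
      (eVariationOn.Icc_add_Icc v (s := univ) hx.2.le hz.1.le (mem_univ θ)).symm
  rw [hsplit, eVariationOn_Icc_eq_Ioo_add_edist hx.2 hxcont hL,
    eVariationOn_Icc_eq_Ioo hz.1 h.rightCont hzcont, edist_dist, Real.dist_eq,
    abs_of_nonneg hjump.1]
  gcongr
  exact hJ L hL hjump

theorem eVariationOn_Icc_le (h : IsSecantArg ψ θ α v) (hx : x ∈ Ico α θ)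
    (hz : z ∈ Ioc θ (α + 2 * Real.pi)) :
    eVariationOn v (Icc x z) ≤
      eVariationOn v (Ioo x θ) + ENNReal.ofReal (2 * Real.pi) + eVariationOn v (Ioo θ z) :=
  h.eVariationOn_Icc_le_of_jump_le (fun _ _ hjump => hjump.2) hx hz

end IsSecantArg

theorem HasExteriorAngleAt.exists_tendsto_secantDirection {ψ : ℂ → ℂ} {θ : ℝ}
    (h : HasExteriorAngleAt ψ θ 1) :
    ∃ l, Tendsto (secantDirection (boundaryMap ψ) θ) (𝓝[>] θ) (𝓝 l) ∧
      Tendsto (secantDirection (boundaryMap ψ) θ) (𝓝[<] θ) (𝓝 (-l)) := by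
  obtain ⟨α, w, hw, hL⟩ := h
  refine ⟨_, hw.tendsto_secantDirection_right, ?_⟩
  have := hw.tendsto_secantDirection (nhdsLT_le_nhdsNE θ) hL
  rwa [one_mul, Complex.ofReal_sub, mul_sub, mul_comm _ (Real.pi : ℂ), Complex.exp_sub,
    Complex.exp_pi_mul_I, div_neg, div_one] at this

theorem eq_pi_of_exp_mul_I_eq_neg_one {x : ℝ} (hx : x ∈ Icc 0 (2 * Real.pi))
    (h : Complex.exp (x * Complex.I) = -1) : x = Real.pi := by
  have hcos : Real.cos (x - Real.pi) = 1 := by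
    rw [Real.cos_sub_pi, ← Complex.exp_ofReal_mul_I_re, h]
    norm_num
  exact sub_eq_zero.1 <| (Real.cos_eq_one_iff_of_lt_of_lt (by linarith [hx.1, Real.pi_pos])
    (by linarith [hx.2, Real.pi_pos])).1 hcos

namespace IsSecantArg

variable {ψ : ℂ → ℂ} {θ α x z : ℝ} {v : ℝ → ℝ}

theorem jump_eq_pi (h : IsSecantArg ψ θ α v) (hθ : HasExteriorAngleAt ψ θ 1) {L : ℝ}
    (hL : Tendsto v (𝓝[<] θ) (𝓝 L)) (hjump : v θ - L ∈ Icc 0 (2 * Real.pi)) :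
    v θ - L = Real.pi := by
  obtain ⟨l, hr, hl⟩ := hθ.exists_tendsto_secantDirection
  have hr' := tendsto_nhds_unique h.tendsto_secantDirection_right hr
  have hl' := tendsto_nhds_unique (h.tendsto_secantDirection (nhdsLT_le_nhdsNE θ) hL) hl
  refine eq_pi_of_exp_mul_I_eq_neg_one hjump ?_
  rw [mul_comm, Complex.ofReal_sub, mul_sub, Complex.exp_sub, hr', hl', div_neg, div_self]
  exact hr' ▸ Complex.exp_ne_zero _

theorem eVariationOn_Icc_le_of_hasExteriorAngleAt (h : IsSecantArg ψ θ α v)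
    (hθ : HasExteriorAngleAt ψ θ 1) (hx : x ∈ Ico α θ) (hz : z ∈ Ioc θ (α + 2 * Real.pi)) :
    eVariationOn v (Icc x z) ≤
      eVariationOn v (Ioo x θ) + ENNReal.ofReal Real.pi + eVariationOn v (Ioo θ z) :=
  h.eVariationOn_Icc_le_of_jump_le (fun _ hL hjump => (h.jump_eq_pi hθ hL hjump).le) hx hz

theorem comp_add_const (h : IsSecantArg ψ θ α v) {T : ℝ}
    (hT : Function.Periodic (boundaryMap ψ) T) :
    IsSecantArg ψ (θ - T) (α - T) (fun t => v (t + T)) where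
  hα := by linarith [h.hα]
  hθ := by linarith [h.hθ]
  bv := ne_top_of_le_ne_top h.bv <| eVariationOn.comp_le_of_monotoneOn v (· + T)
    ((add_left_mono (a := T)).monotoneOn _) fun t ht => ⟨by linarith [ht.1], by linarith [ht.2]⟩
  contBefore := h.contBefore.comp (by fun_prop) fun t ht =>
    ⟨by linarith [ht.1], by linarith [ht.2]⟩
  contAfter := h.contAfter.comp (by fun_prop) fun t ht => ⟨by linarith [ht.1], by linarith [ht.2]⟩
  rightCont := by
    refine ContinuousWithinAt.comp (t := Ici θ) ?_ (by fun_prop) fun t ht => ?_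
    · simpa only [sub_add_cancel] using h.rightCont
    · exact sub_le_iff_le_add.1 (mem_Ici.1 ht)
  jump_mem := by
    obtain ⟨L, hL, hjump⟩ := h.jump_mem
    refine ⟨L, hL.comp (tendsto_nhdsWithin_iff.2 ⟨?_, ?_⟩), by rwa [sub_add_cancel]⟩
    · have hcont : Continuous fun t : ℝ => t + T := by fun_prop
      simpa only [sub_add_cancel] using (hcont.tendsto (θ - T)).mono_left nhdsWithin_le_nhds
    · filter_upwards [self_mem_nhdsWithin] with t ht using lt_sub_iff_add_lt.1 (mem_Iio.1 ht)
  branch t ht hne := by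
    have hbranch := h.branch (t + T) ⟨by linarith [ht.1], by linarith [ht.2]⟩
      fun heq => hne (eq_sub_of_add_eq heq)
    have hψt := hT t
    have hψθ := hT.sub_eq θ
    simp only [boundaryMap] at hψt hψθ
    rw [hbranch, hψt, hψθ]

end IsSecantArg

/-! ### Variation near a given boundary point -/

namespace NearlyStraightOn

variable {G : ℝ → ℂ} {ε : ENNReal} {a b τ x y : ℝ} {p : ℂ} {v : ℝ → ℝ}

theorem eVariationOn_Ioo_le_of_notMem (hL : NearlyStraightOn G (Icc a τ) ε)
    (hR : NearlyStraightOn G (Icc τ b) ε) (hax : a ≤ x) (hxy : x ≤ y) (hyb : y ≤ b)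
    (hp : p ∈ G '' {x, y}) (hv : IsArgOn (fun t => G t - p) v (Ioo x y)) (hτ : τ ∉ Ioo x y) :
    eVariationOn v (Ioo x y) ≤ ε := by
  have hp' : p ∈ G '' Icc x y :=
    image_mono (pair_subset (left_mem_Icc.2 hxy) (right_mem_Icc.2 hxy)) hp
  rcases le_or_gt τ x with hτx | hτx
  · exact (hR x ⟨hτx, hxy.trans hyb⟩ y ⟨hτx.trans hxy, hyb⟩ p v hv).2 hp'
  · have hτy : y ≤ τ := not_lt.1 fun hτy => hτ ⟨hτx, hτy⟩
    exact (hL x ⟨hax, hxy.trans hτy⟩ y ⟨hax.trans hxy, hτy⟩ p v hv).2 hp'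

theorem eVariationOn_Ioo_le (hL : NearlyStraightOn G (Icc a τ) ε)
    (hR : NearlyStraightOn G (Icc τ b) ε) (hax : a ≤ x) (hxy : x ≤ y) (hyb : y ≤ b)
    (hp : p ∈ G '' {x, y}) (hv : IsArgOn (fun t => G t - p) v (Ioo x y)) :
    eVariationOn v (Ioo x y) ≤ ENNReal.ofReal Real.pi + 2 * ε := by
  by_cases hτ : τ ∈ Ioo x y
  · have hleft := hL x ⟨hax, hτ.1.le⟩ τ ⟨hax.trans hτ.1.le, le_rfl⟩ p v
      (hv.mono (Ioo_subset_Ioo_right hτ.2.le))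
    have hright := hR τ ⟨le_rfl, hτ.2.le.trans hyb⟩ y ⟨hτ.2.le, hyb⟩ p v
      (hv.mono (Ioo_subset_Ioo_left hτ.1.le))
    rw [eVariationOn_Ioo_eq_add hτ (hv.1.continuousAt (Ioo_mem_nhds hτ.1 hτ.2))]
    obtain ⟨_, rfl | rfl, rfl⟩ := hp
    · calc _ ≤ ε + (ENNReal.ofReal Real.pi + ε) :=
            add_le_add (hleft.2 (mem_image_of_mem G (left_mem_Icc.2 hτ.1.le))) hright.1
        _ = ENNReal.ofReal Real.pi + 2 * ε := by ring
    · calc _ ≤ ENNReal.ofReal Real.pi + ε + ε :=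
            add_le_add hleft.1 (hright.2 (mem_image_of_mem G (right_mem_Icc.2 hτ.2.le)))
        _ = ENNReal.ofReal Real.pi + 2 * ε := by ring
  · refine (hL.eVariationOn_Ioo_le_of_notMem hR hax hxy hyb hp hv hτ).trans ?_
    rw [two_mul, ← add_assoc]
    exact le_add_self

end NearlyStraightOn

namespace IsSecantArg

variable {ψ : ℂ → ℂ} {ε : ENNReal} {θ α a b τ x z : ℝ} {v : ℝ → ℝ}

theorem eVariationOn_Icc_le_of_notMem (h : IsSecantArg ψ θ α v) (hθ : HasExteriorAngleAt ψ θ 1)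
    (hL : NearlyStraightOn (boundaryMap ψ) (Icc a τ) ε)
    (hR : NearlyStraightOn (boundaryMap ψ) (Icc τ b) ε) (hx : x ∈ Ico α θ) (hax : a ≤ x)
    (hz : z ∈ Ioc θ (α + 2 * Real.pi)) (hzb : z ≤ b) (hτ : τ ∉ Ioo x z) :
    eVariationOn v (Icc x z) ≤ ENNReal.ofReal Real.pi + 2 * ε := by
  have hleft := hL.eVariationOn_Ioo_le_of_notMem hR hax hx.2.le (hz.1.le.trans hzb)
    (mem_image_of_mem _ (.inr rfl)) (h.isArgOn_Ioo_left hx.1)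
    fun hm => hτ ⟨hm.1, hm.2.trans hz.1⟩
  have hright := hL.eVariationOn_Ioo_le_of_notMem hR (hax.trans hx.2.le) hz.1.le hzb
    (mem_image_of_mem _ (.inl rfl)) (h.isArgOn_Ioo_right hz.2)
    fun hm => hτ ⟨hx.2.trans hm.1, hm.2⟩
  calc eVariationOn v (Icc x z)
      ≤ eVariationOn v (Ioo x θ) + ENNReal.ofReal Real.pi + eVariationOn v (Ioo θ z) :=
        h.eVariationOn_Icc_le_of_hasExteriorAngleAt hθ hx hz
    _ ≤ ε + ENNReal.ofReal Real.pi + ε := by gcongr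
    _ = ENNReal.ofReal Real.pi + 2 * ε := by ring

theorem eVariationOn_Ioo_add_le_of_ne (h : IsSecantArg ψ θ α v) (hne : θ ≠ τ)
    (hL : NearlyStraightOn (boundaryMap ψ) (Icc a τ) ε)
    (hR : NearlyStraightOn (boundaryMap ψ) (Icc τ b) ε) (hx : x ∈ Ico α θ) (hax : a ≤ x)
    (hz : z ∈ Ioc θ (α + 2 * Real.pi)) (hzb : z ≤ b) :
    eVariationOn v (Ioo x θ) + eVariationOn v (Ioo θ z) ≤ ENNReal.ofReal Real.pi + 3 * ε := by
  have hargL := h.isArgOn_Ioo_left hx.1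
  have hargR := h.isArgOn_Ioo_right hz.2
  have hpL : boundaryMap ψ θ ∈ boundaryMap ψ '' {x, θ} := mem_image_of_mem _ (.inr rfl)
  have hpR : boundaryMap ψ θ ∈ boundaryMap ψ '' {θ, z} := mem_image_of_mem _ (.inl rfl)
  have haθ : a ≤ θ := hax.trans hx.2.le
  have hθb : θ ≤ b := hz.1.le.trans hzb
  rcases hne.lt_or_gt with hlt | hgt
  · refine (add_le_add
      (hL.eVariationOn_Ioo_le_of_notMem hR hax hx.2.le hθb hpL hargL fun hm => hm.2.not_gt hlt)
      (hL.eVariationOn_Ioo_le hR haθ hz.1.le hzb hpR hargR)).trans_eq ?_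
    ring
  · refine (add_le_add (hL.eVariationOn_Ioo_le hR hax hx.2.le hθb hpL hargL)
      (hL.eVariationOn_Ioo_le_of_notMem hR haθ hz.1.le hzb hpR hargR
        fun hm => hm.1.not_gt hgt)).trans_eq ?_
    ring

theorem eVariationOn_Icc_le_of_nearlyStraightOn (h : IsSecantArg ψ θ α v)
    (hθ : θ ≠ τ → HasExteriorAngleAt ψ θ 1)
    (hL : NearlyStraightOn (boundaryMap ψ) (Icc a τ) ε)
    (hR : NearlyStraightOn (boundaryMap ψ) (Icc τ b) ε) (hx : x ∈ Ico α θ) (hax : a ≤ x)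
    (hz : z ∈ Ioc θ (α + 2 * Real.pi)) (hzb : z ≤ b) :
    eVariationOn v (Icc x z) ≤ ENNReal.ofReal (2 * Real.pi) + 3 * ε := by
  have hpi : ENNReal.ofReal (2 * Real.pi) = 2 * ENNReal.ofReal Real.pi := by
    rw [ENNReal.ofReal_mul zero_le_two, ENNReal.ofReal_ofNat]
  rcases eq_or_ne θ τ with rfl | hne
  · calc eVariationOn v (Icc x z)
        ≤ eVariationOn v (Ioo x θ) + ENNReal.ofReal (2 * Real.pi) + eVariationOn v (Ioo θ z) :=
          h.eVariationOn_Icc_le hx hz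
      _ ≤ ε + ENNReal.ofReal (2 * Real.pi) + ε := by
          gcongr
          · exact hL.eVariationOn_Ioo_le_of_notMem hR hax hx.2.le (hz.1.le.trans hzb)
              (mem_image_of_mem _ (.inr rfl)) (h.isArgOn_Ioo_left hx.1) fun hm => lt_irrefl _ hm.2
          · exact hL.eVariationOn_Ioo_le_of_notMem hR (hax.trans hx.2.le) hz.1.le hzb
              (mem_image_of_mem _ (.inl rfl)) (h.isArgOn_Ioo_right hz.2) fun hm => lt_irrefl _ hm.1
      _ ≤ ENNReal.ofReal (2 * Real.pi) + 3 * ε := by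
          rw [add_right_comm, ← two_mul, add_comm]
          gcongr
          norm_num
  calc eVariationOn v (Icc x z)
      ≤ eVariationOn v (Ioo x θ) + ENNReal.ofReal Real.pi + eVariationOn v (Ioo θ z) :=
        h.eVariationOn_Icc_le_of_hasExteriorAngleAt (hθ hne) hx hz
    _ ≤ ENNReal.ofReal Real.pi + (ENNReal.ofReal Real.pi + 3 * ε) := by
        rw [add_right_comm, add_comm]
        exact add_le_add_right (h.eVariationOn_Ioo_add_le_of_ne hne hL hR hx hax hz hzb) _
    _ = ENNReal.ofReal (2 * Real.pi) + 3 * ε := by rw [hpi]; ring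

end IsSecantArg

/-! ### Corner parameters -/

section CornerSet

variable {l : ℕ} {θk : Fin l → ℝ}

theorem mem_cornerSet_iff {t : ℝ} :
    t ∈ cornerSet θk ↔ ∃ k, Circle.exp t = Circle.exp (θk k) := by
  simp only [Circle.exp_eq_exp, cornerSet, mem_ofPred_eq]

theorem periodic_mem_cornerSet : Function.Periodic (· ∈ cornerSet θk) (2 * Real.pi) := fun t => by
  simp only [mem_cornerSet_iff, Circle.periodic_exp t]

theorem eventually_eq_of_mem_cornerSet (t : ℝ) : ∀ᶠ c in 𝓝 t, c ∈ cornerSet θk → c = t := by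
  have hlocal : ∀ k, ∀ᶠ c in 𝓝 t, Circle.exp c = Circle.exp (θk k) → c = t := by
    intro k
    by_cases ht : Circle.exp t = Circle.exp (θk k)
    · filter_upwards [Icc_mem_nhds (sub_one_lt t) (lt_add_one t)] with c hc heq
      exact Circle.exp_injOn_Icc (by linarith [Real.pi_gt_three]) hc
        ⟨(sub_one_lt t).le, (lt_add_one t).le⟩ (heq.trans ht.symm)
    · filter_upwards [Circle.exp.continuous.continuousAt.eventually_ne ht] with c hc heq
      exact absurd heq hc
  filter_upwards [eventually_all.2 hlocal] with c hc hmem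
  obtain ⟨k, hk⟩ := mem_cornerSet_iff.1 hmem
  exact hc k hk

end CornerSet

/-! ### Local variation bounds and compactness -/

/-- The local estimate at `θ` on the scale `δ`, for a set `C` of corner parameters: the window
`(θ - δ, θ + δ)` contains at most one corner, and every secant argument at `θ` has variation at
most `π (1 + ε)` on the closed window if there is no corner, and at most `π (2 + ε)` if there is
one. -/
def HasSecantVariationBounds (ψ : ℂ → ℂ) (C : Set ℝ) (ε δ θ : ℝ) : Prop :=
  (Ioo (θ - δ) (θ + δ) ∩ C).Subsingleton ∧
    ∀ (α : ℝ) (v : ℝ → ℝ), IsSecantArg ψ θ α v → α ≤ θ - δ → θ + δ ≤ α + 2 * Real.pi →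
      (Ioo (θ - δ) (θ + δ) ∩ C = ∅ →
        eVariationOn v (Icc (θ - δ) (θ + δ)) ≤ ENNReal.ofReal (Real.pi * (1 + ε))) ∧
      ((Ioo (θ - δ) (θ + δ) ∩ C).Nonempty →
        eVariationOn v (Icc (θ - δ) (θ + δ)) ≤ ENNReal.ofReal (Real.pi * (2 + ε)))

namespace HasSecantVariationBounds

variable {ψ : ℂ → ℂ} {C : Set ℝ} {ε δ θ a b t : ℝ}

theorem of_flat (hε : 0 ≤ ε) (hδ : 0 < δ) (hwin : Icc (θ - δ) (θ + δ) ⊆ Icc a b)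
    (hC : ∀ c ∈ Ioo (θ - δ) (θ + δ), c ∉ C) (hθ : HasExteriorAngleAt ψ θ 1)
    (hG : NearlyStraightOn (boundaryMap ψ) (Icc a b) (ENNReal.ofReal (Real.pi * ε / 3))) :
    HasSecantVariationBounds ψ C ε δ θ := by
  have hempty : Ioo (θ - δ) (θ + δ) ∩ C = ∅ := disjoint_iff_inter_eq_empty.1 (disjoint_left.2 hC)
  refine ⟨hempty ▸ subsingleton_empty, fun α v h hα hα' =>
    ⟨fun _ => ?_, fun hne => absurd hempty hne.ne_empty⟩⟩
  have ⟨hax, hzb⟩ := (Icc_subset_Icc_iff (by linarith)).1 hwin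
  refine (h.eVariationOn_Icc_le_of_notMem hθ
    (hG.mono (Icc_subset_Icc_right (show a ≤ b by linarith))) hG
    ⟨hα, by linarith⟩ hax ⟨by linarith, hα'⟩ hzb fun hm => hm.1.not_ge hax).trans ?_
  rw [← ENNReal.ofReal_ofNat, ← ENNReal.ofReal_mul zero_le_two,
    ← ENNReal.ofReal_add (by positivity) (by positivity)]
  exact ENNReal.ofReal_le_ofReal (by nlinarith [Real.pi_pos])

theorem of_corner (hε : 0 ≤ ε) (hδ : 0 < δ) (hwin : Icc (θ - δ) (θ + δ) ⊆ Icc a b)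
    (hC : ∀ c ∈ Ioo (θ - δ) (θ + δ), c ∈ C → c = t) (ht : t ∈ C)
    (hflat : ∀ s ∉ C, HasExteriorAngleAt ψ s 1)
    (hL : NearlyStraightOn (boundaryMap ψ) (Icc a t) (ENNReal.ofReal (Real.pi * ε / 3)))
    (hR : NearlyStraightOn (boundaryMap ψ) (Icc t b) (ENNReal.ofReal (Real.pi * ε / 3))) :
    HasSecantVariationBounds ψ C ε δ θ := by
  have hθ : θ ∈ Ioo (θ - δ) (θ + δ) := ⟨by linarith, by linarith⟩
  have ⟨hax, hzb⟩ := (Icc_subset_Icc_iff (hθ.1.trans hθ.2).le).1 hwin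
  refine ⟨fun c hc c' hc' => (hC c hc.1 hc.2).trans (hC c' hc'.1 hc'.2).symm,
    fun α v h hα hα' => ⟨fun hempty => ?_, fun _ => ?_⟩⟩
  · have hout : ∀ c ∈ Ioo (θ - δ) (θ + δ), c ∉ C :=
      fun c hc hcC => eq_empty_iff_forall_notMem.1 hempty c ⟨hc, hcC⟩
    refine (h.eVariationOn_Icc_le_of_notMem (hflat θ (hout θ hθ)) hL hR ⟨hα, hθ.1⟩ hax
      ⟨hθ.2, hα'⟩ hzb fun htm => hout t htm ht).trans ?_
    rw [← ENNReal.ofReal_ofNat, ← ENNReal.ofReal_mul zero_le_two,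
      ← ENNReal.ofReal_add (by positivity) (by positivity)]
    exact ENNReal.ofReal_le_ofReal (by nlinarith [Real.pi_pos])
  · refine (h.eVariationOn_Icc_le_of_nearlyStraightOn
      (fun hne => hflat θ fun hθC => hne (hC θ hθ hθC)) hL hR ⟨hα, hθ.1⟩ hax
      ⟨hθ.2, hα'⟩ hzb).trans ?_
    rw [← ENNReal.ofReal_ofNat, ← ENNReal.ofReal_mul zero_le_three,
      ← ENNReal.ofReal_add (by positivity) (by positivity)]
    exact ENNReal.ofReal_le_ofReal (by nlinarith [Real.pi_pos])

theorem of_add_period {T : ℝ} (hψ : Function.Periodic (boundaryMap ψ) T)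
    (hC : Function.Periodic (· ∈ C) T) (h : HasSecantVariationBounds ψ C ε δ (θ + T)) :
    HasSecantVariationBounds ψ C ε δ θ := by
  have hshift : (· + T) '' (Ioo (θ - δ) (θ + δ) ∩ C) = Ioo (θ + T - δ) (θ + T + δ) ∩ C := by
    rw [image_inter (add_left_injective T), image_add_const_Ioo, sub_add_eq_add_sub,
      add_right_comm, image_add_right]
    exact congrArg _ (ext fun t => Eq.to_iff (hC.neg t))
  refine ⟨subsingleton_of_image (add_left_injective T) _ (hshift ▸ h.1),
    fun α v hv hα hα' => ?_⟩
  have hv' : IsSecantArg ψ (θ + T) (α + T) fun t => v (t - T) := by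
    simpa only [sub_neg_eq_add, ← sub_eq_add_neg] using hv.comp_add_const hψ.neg
  have hvar : eVariationOn (fun t => v (t - T)) (Icc (θ + T - δ) (θ + T + δ)) =
      eVariationOn v (Icc (θ - δ) (θ + δ)) := by
    rw [← add_sub_cancel_right (θ - δ) T, ← add_sub_cancel_right (θ + δ) T, ← image_sub_const_Icc,
      ← eVariationOn.comp_eq_of_monotoneOn v _ fun _ _ _ _ hxy => sub_le_sub_right hxy T,
      sub_add_eq_add_sub, add_right_comm]
    rfl
  simpa only [hvar, ← hshift, image_eq_empty, image_nonempty] using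
    h.2 (α + T) _ hv' (by linarith) (by linarith)

theorem periodic {T : ℝ} (hψ : Function.Periodic (boundaryMap ψ) T)
    (hC : Function.Periodic (· ∈ C) T) :
    Function.Periodic (HasSecantVariationBounds ψ C ε δ) T := fun θ =>
  propext ⟨of_add_period hψ hC,
    fun h => of_add_period hψ.neg hC.neg ((add_neg_cancel_right θ T).symm ▸ h)⟩

end HasSecantVariationBounds

theorem eventually_Icc_sub_add_subset {U : Set ℝ} {t : ℝ} (hU : U ∈ 𝓝 t) :
    ∀ᶠ q : ℝ × ℝ in 𝓝[>] 0 ×ˢ 𝓝 t, Icc (q.2 - q.1) (q.2 + q.1) ⊆ U := by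
  have hδ : Tendsto (Prod.fst : ℝ × ℝ → ℝ) (𝓝[>] 0 ×ˢ 𝓝 t) (𝓝 0) :=
    tendsto_fst.mono_right nhdsWithin_le_nhds
  have hsub := tendsto_snd.sub hδ
  have hadd := tendsto_snd.add hδ
  rw [sub_zero] at hsub
  rw [add_zero] at hadd
  exact tendsto_smallSets_iff.1 (hsub.Icc hadd) U hU

theorem exists_pos_forall_of_periodic {P : ℝ → ℝ → Prop} {T : ℝ} (hT : 0 < T)
    (hper : ∀ δ, Function.Periodic (P δ) T)
    (hP : ∀ t, ∀ᶠ q : ℝ × ℝ in 𝓝[>] 0 ×ˢ 𝓝 t, P q.1 q.2) : ∃ δ > 0, ∀ θ, P δ θ := by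
  have hcompact : ∀ᶠ δ in 𝓝[>] (0 : ℝ), ∀ θ ∈ Icc 0 T, P δ θ :=
    (Eventually.curry (isCompact_Icc.mem_prod_nhdsSet_of_forall fun t _ => hP t)).mono
      fun _ h => h.self_of_nhdsSet
  obtain ⟨δ, hδP, hδ⟩ := (hcompact.and self_mem_nhdsWithin).exists
  refine ⟨δ, hδ, fun θ => ?_⟩
  obtain ⟨s, hs, heq⟩ := (hper δ).exists_mem_Ico₀ hT θ
  exact heq ▸ hδP s (Ico_subset_Icc_self hs)

theorem IsPiecewiseDiniSmoothJordanCurve.eventually_hasSecantVariationBounds {ψ : ℂ → ℂ}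
    {C : Set ℝ} {ε t : ℝ} (hψ : IsEmbedding fun z : Circle => ψ z)
    (hΓ : IsPiecewiseDiniSmoothJordanCurve (range fun z : Circle => ψ z))
    (hC : ∀ᶠ c in 𝓝 t, c ∈ C → c = t) (hflat : ∀ θ ∉ C, HasExteriorAngleAt ψ θ 1) (hε : 0 < ε) :
    ∀ᶠ q : ℝ × ℝ in 𝓝[>] 0 ×ˢ 𝓝 t, HasSecantVariationBounds ψ C ε q.1 q.2 := by
  have hε' : ENNReal.ofReal (Real.pi * ε / 3) ≠ 0 := (ENNReal.ofReal_pos.2 (by positivity)).ne'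
  have hδ : ∀ᶠ q : ℝ × ℝ in 𝓝[>] 0 ×ˢ 𝓝 t, 0 < q.1 := tendsto_fst.eventually self_mem_nhdsWithin
  by_cases ht : t ∈ C
  · obtain ⟨S, hS, hSG⟩ := hΓ.exists_nearlyStraightOn_left hψ t hε'
    obtain ⟨S', hS', hSG'⟩ := hΓ.exists_nearlyStraightOn_right hψ t hε'
    obtain ⟨a, hat, ha⟩ := mem_nhdsLE_iff_exists_Icc_subset.1 hS
    obtain ⟨b, htb, hb⟩ := mem_nhdsGE_iff_exists_Icc_subset.1 hS'
    filter_upwards [hδ, eventually_Icc_sub_add_subset (Icc_mem_nhds hat htb),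
      eventually_Icc_sub_add_subset hC] with q hq hwin hCwin
    exact .of_corner hε.le hq hwin (fun c hc => hCwin (Ioo_subset_Icc_self hc)) ht hflat
      (hSG.mono ha) (hSG'.mono hb)
  · obtain ⟨l, hr, hl⟩ := (hflat t ht).exists_tendsto_secantDirection
    obtain ⟨S, hS, hSG⟩ := hΓ.exists_nearlyStraightOn_of_tendsto hψ hr hl hε'
    obtain ⟨a, b, -, hab, habS⟩ := exists_Icc_mem_subset_of_mem_nhds hS
    have hCt : ∀ᶠ c in 𝓝 t, c ∉ C := hC.mono fun c hc hcC => ht (hc hcC ▸ hcC)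
    filter_upwards [hδ, eventually_Icc_sub_add_subset hab,
      eventually_Icc_sub_add_subset hCt] with q hq hwin hCwin
    exact .of_flat hε.le hq hwin (fun c hc => hCwin (Ioo_subset_Icc_self hc))
      (hflat q.2 <| hCwin ⟨by linarith, by linarith⟩) (hSG.mono habS)

theorem IsExteriorParam.isEmbedding {Γ : Set ℂ} {φ ψ : ℂ → ℂ} (h : IsExteriorParam Γ φ ψ) :
    IsEmbedding fun z : Circle => ψ z := by
  have hcont : Continuous fun z : Circle => ψ z :=
    h.cont.comp_continuous (by fun_prop) fun z => z.norm_coe.ge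
  refine (hcont.isClosedEmbedding fun z w hzw => ?_).isEmbedding
  exact Subtype.ext (h.inj z.norm_coe.ge w.norm_coe.ge hzw)

theorem IsExteriorParam.range_eq {Γ : Set ℂ} {φ ψ : ℂ → ℂ} (h : IsExteriorParam Γ φ ψ) :
    range (fun z : Circle => ψ z) = Γ := by
  refine Subset.antisymm (range_subset_iff.2 fun z => h.boundary z z.norm_coe) fun z hz => ?_
  obtain ⟨w, hw, rfl⟩ := h.boundary_surj z hz
  exact ⟨⟨w, mem_sphere_zero_iff_norm.2 hw⟩, rfl⟩

theorem local_secant_variation_bounds_general (ψ : ℂ → ℂ) {l : ℕ} (θk : Fin l → ℝ)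
    (hψ : IsEmbedding fun z : Circle => ψ z)
    (hΓ : IsPiecewiseDiniSmoothJordanCurve (range fun z : Circle => ψ z))
    (hflat : ∀ θ : ℝ, θ ∉ cornerSet θk → HasExteriorAngleAt ψ θ 1) :
    ∀ ε : ℝ, 0 < ε → ∃ δ : ℝ, 0 < δ ∧
      (∀ θ : ℝ, Set.Subsingleton (Set.Ioo (θ - δ) (θ + δ) ∩ cornerSet θk)) ∧
      (∀ θ α : ℝ, ∀ v : ℝ → ℝ, IsSecantArg ψ θ α v →
        α ≤ θ - δ → θ + δ ≤ α + 2 * Real.pi →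
        ((Set.Ioo (θ - δ) (θ + δ) ∩ cornerSet θk = ∅ →
            eVariationOn v (Set.Icc (θ - δ) (θ + δ)) ≤ ENNReal.ofReal (Real.pi * (1 + ε))) ∧
         ((Set.Ioo (θ - δ) (θ + δ) ∩ cornerSet θk).Nonempty →
            eVariationOn v (Set.Icc (θ - δ) (θ + δ)) ≤ ENNReal.ofReal (Real.pi * (2 + ε))))) := by
  intro ε hε
  obtain ⟨δ, hδ, hbounds⟩ := exists_pos_forall_of_periodic Real.two_pi_pos
    (P := HasSecantVariationBounds ψ (cornerSet θk) ε)
    (fun _ => HasSecantVariationBounds.periodic (boundaryMap_periodic ψ) periodic_mem_cornerSet)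
    fun t => hΓ.eventually_hasSecantVariationBounds hψ (eventually_eq_of_mem_cornerSet t) hflat hε
  exact ⟨δ, hδ, fun θ => (hbounds θ).1, fun θ => (hbounds θ).2⟩

/-- Let `Γ` be a piecewise Dini-smooth Jordan curve with corners
`z_k = ψ(e^{iθ_k})`, `k = 1, …, l`, and `Θ_Γ = {θ_k + 2πj}`. For every `ε > 0` there is
`δ > 0`, small enough that every interval `(θ−δ, θ+δ)` contains at most one point of `Θ_Γ`,
such that for every `θ` and every secant-argument function `v_θ` defined on an interval
containing `[θ−δ, θ+δ]`: if `(θ−δ, θ+δ) ∩ Θ_Γ = ∅` then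
`(1/π)∫_{θ−δ}^{θ+δ} |dv_θ| ≤ 1 + ε` and otherwise `(1/π)∫_{θ−δ}^{θ+δ} |dv_θ| ≤ 2 + ε`
(the integral `∫ |dv_θ|` being the total variation of `v_θ` over `[θ−δ, θ+δ]`). -/
theorem local_secant_variation_bounds
    (Γ : Set ℂ) (φ ψ : ℂ → ℂ) (c : ℝ) (l : ℕ)
    (θk : Fin l → ℝ) (zk : Fin l → ℂ) (lam : Fin l → ℝ)
    (hΓ : IsPiecewiseDiniSmoothJordanCurve Γ)
    (hφ : IsExteriorMap Γ φ c)
    (hψ : IsExteriorParam Γ φ ψ)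
    (hθ : ∀ k, θk k ∈ Set.Ico (0 : ℝ) (2 * Real.pi))
    (hθinj : Function.Injective θk)
    (hzk : ∀ k, zk k = ψ (Complex.exp (Complex.I * (θk k : ℂ))))
    (hlam : ∀ k, lam k ∈ Set.Icc (0 : ℝ) 2)
    (hangle : ∀ k, HasExteriorAngleAt ψ (θk k) (lam k))
    (hflat : ∀ θ : ℝ, θ ∉ cornerSet θk → HasExteriorAngleAt ψ θ 1) :
    ∀ ε : ℝ, 0 < ε → ∃ δ : ℝ, 0 < δ ∧
      (∀ θ : ℝ, Set.Subsingleton (Set.Ioo (θ - δ) (θ + δ) ∩ cornerSet θk)) ∧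
      (∀ θ α : ℝ, ∀ v : ℝ → ℝ, IsSecantArg ψ θ α v →
        α ≤ θ - δ → θ + δ ≤ α + 2 * Real.pi →
        ((Set.Ioo (θ - δ) (θ + δ) ∩ cornerSet θk = ∅ →
            eVariationOn v (Set.Icc (θ - δ) (θ + δ)) ≤ ENNReal.ofReal (Real.pi * (1 + ε))) ∧
         ((Set.Ioo (θ - δ) (θ + δ) ∩ cornerSet θk).Nonempty →
            eVariationOn v (Set.Icc (θ - δ) (θ + δ)) ≤ ENNReal.ofReal (Real.pi * (2 + ε))))) := by
  simpa only [hψ.range_eq] using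
    local_secant_variation_bounds_general ψ θk hψ.isEmbedding (hψ.range_eq.symm ▸ hΓ) hflat

end
end
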